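/- Let L = L_{−1} ⊕ L_0 ⊕ ... ⊕ L_k be a graded Lie subalgebra of Vect_pol(E) (a finite direct sum, hence finite-dimensional). Then L is a maximal subalgebra of Vect_pol(E) if and only if: (1) L_{−1} = Vect_{−1}(E), i.e. L contains all constant vector fields; (2) L is irreducible; (3) L_1 ≠ 0; and (4) in the case 𝕂 = ℝ, the representation (L_{−1}, ad|_{L_0}) admits no complex structure. -/

import Mathlib

/-!
*Necessity.* If one of the conditions fails, `L` lies in a proper subalgebra that is
infinite-dimensional, or visibly different from `L`. If the constant fields of `L` form a proper
subspace `F`, take the fields preserving the ideal of `F`; if a proper nonzero subspace `F` is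
invariant under `L₀`, the fields preserving the foliation parallel to `F`; if `L₁ = 0`, the
projective algebra; if `J` is a nonscalar operator commuting with `L₀`, the fields whose derivative
commutes with `J` at every point.

*Sufficiency over an algebraically closed field.* Let `M ⊇ L`. A nonzero abelian ideal of `L` would
contain all constant fields, which is incompatible with a nonzero quadratic field; hence
`L + K·ℰ` is semisimple, so perfect, so equal to `L`, and `ℰ ∈ L`. Thus `M` is graded.

If `M` is finite-dimensional it is semisimple too. Its Killing form pairs `M₋₁` with `M₁`, so
`dim M₁ = n = dim L₁`, and then the orthogonal of `L` in `M` vanishes degree by degree: `M = L`.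

If `M` is infinite-dimensional, its annihilator under the pairing `⟨f, g⟩ = f(∂) g (0)` is a
submodule of a free module over the polynomial ring, of infinite codimension, and the
Nullstellensatz yields a nonzero point where its values do not span; equivalently, `M` contains
`ξ ^ k ∂_w` for all `k`, for some `ξ, w ≠ 0`. In particular `M₀` is an irreducible linear Lie
algebra containing the identity and an element `w ⊗ ξ` of rank one. Since the trace cannot vanish
on `⁅∂_w, L₁⁆`, `M₀ = gl n`: if `ξ w ≠ 0` this is elementary, and if `ξ w = 0` one completes `w ⊗ ξ`
to an `sl₂`-triple; the alternative to `gl n` is that the weight one part carries an invariant skew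
form, for which elements of the first prolongation are traceless. With `gl n` and all `ξ ^ k ∂_w`,
`M` contains all divergence-free fields by the Koszul formula, and the quadratic field of nonzero
divergence then gives everything.

*Sufficiency in general.* If only the scalars commute with the irreducible `L₀`, then by Jacobson's
density theorem `L₀` generates all of `End E` as an associative algebra, so it stays irreducible
over the algebraic closure. The extension of `L` to the algebraic closure is then maximal, and hence
so is `L`.

*The commutant.* An operator commuting with `L₀` generates a field, finite over `𝕜`. If `𝕜 = ℂ` it
is `ℂ`; if `𝕜 = ℝ` it is `ℝ` or contains a square root of `-1`, that is, a complex structure.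
-/

open MvPolynomial

/-- The Lie algebra of polynomial vector fields on `E = 𝕜^n`, realized as the
derivations of the polynomial algebra `𝕜[x_1, …, x_n]`. -/
abbrev Vect (𝕜 : Type*) [Field 𝕜] (n : ℕ) : Type _ :=
  Derivation 𝕜 (MvPolynomial (Fin n) 𝕜) (MvPolynomial (Fin n) 𝕜)

variable (𝕜 : Type*) [Field 𝕜] (n : ℕ)

/-- The Euler vector field `ℰ = Σ x^j ∂_j`. -/
noncomputable def euler : Vect 𝕜 n :=
  MvPolynomial.mkDerivation 𝕜 fun i => MvPolynomial.X i

/-- `Vect_p(E)`: the eigenspace of `ad(ℰ)` for the eigenvalue `p`, i.e. the vector fields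
with homogeneous coefficients of degree `p+1`. -/
noncomputable def VectP (p : ℤ) : Submodule 𝕜 (Vect 𝕜 n) :=
  Module.End.eigenspace (LieAlgebra.ad 𝕜 (Vect 𝕜 n) (euler 𝕜 n)) ((p : 𝕜))

/-- A Lie subalgebra `L` of `Vect_pol(E)` is graded if `L = ⊕_{p ≥ -1} (L ∩ Vect_p(E))`. -/
def IsGradedSubalg (L : LieSubalgebra 𝕜 (Vect 𝕜 n)) : Prop :=
  L.toSubmodule = ⨆ p ≥ (-1 : ℤ), (L.toSubmodule ⊓ VectP 𝕜 n p)

/-- A Lie subalgebra `L` of `Vect_pol(E)` is maximal if the only subalgebras containing it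
are `L` itself and `Vect_pol(E)`. -/
def IsMaxSubalg (L : LieSubalgebra 𝕜 (Vect 𝕜 n)) : Prop :=
  ∀ L' : LieSubalgebra 𝕜 (Vect 𝕜 n), L ≤ L' → L' = L ∨ L' = ⊤

/-- A graded subalgebra `L` is irreducible if the representation of `L₀ = L ∩ Vect_0(E)` on
`L₋₁ = L ∩ Vect_{-1}(E)` given by the adjoint action is irreducible. -/
def IsIrreducibleRep (L : LieSubalgebra 𝕜 (Vect 𝕜 n)) : Prop :=
  L.toSubmodule ⊓ VectP 𝕜 n (-1) ≠ ⊥ ∧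
    ∀ F : Submodule 𝕜 (Vect 𝕜 n), F ≤ L.toSubmodule ⊓ VectP 𝕜 n (-1) →
      (∀ x ∈ L.toSubmodule ⊓ VectP 𝕜 n 0, ∀ y ∈ F, ⁅x, y⁆ ∈ F) →
      F = ⊥ ∨ F = L.toSubmodule ⊓ VectP 𝕜 n (-1)

/-- The representation `(L₋₁, ad|_{L₀})` admits a complex structure: a linear map `J` with
`J ∘ J = -id` on `L₋₁`, preserving `L₋₁` and commuting with the adjoint action of `L₀`. -/
def HasComplexStructureRep (L : LieSubalgebra 𝕜 (Vect 𝕜 n)) : Prop :=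
  ∃ J : Vect 𝕜 n →ₗ[𝕜] Vect 𝕜 n,
    (∀ y ∈ L.toSubmodule ⊓ VectP 𝕜 n (-1), J y ∈ L.toSubmodule ⊓ VectP 𝕜 n (-1)) ∧
    (∀ y ∈ L.toSubmodule ⊓ VectP 𝕜 n (-1), J (J y) = -y) ∧
    (∀ x ∈ L.toSubmodule ⊓ VectP 𝕜 n 0, ∀ y ∈ L.toSubmodule ⊓ VectP 𝕜 n (-1),
      J ⁅x, y⁆ = ⁅x, J y⁆)

namespace PolyVect

/-! ### Constant and linear vector fields -/

section ConstantLinear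

variable {K : Type*} [Field K] {n : ℕ}

/-- A linear form `ξ` on `Kⁿ`, viewed as a polynomial. -/
noncomputable def linForm : Module.Dual K (Fin n → K) →ₗ[K] MvPolynomial (Fin n) K where
  toFun ξ := ∑ j, C (ξ (Pi.single j 1)) * X j
  map_add' ξ η := by simp [add_mul, Finset.sum_add_distrib]
  map_smul' a ξ := by simp [Finset.smul_sum, smul_eq_C_mul, mul_assoc]

/-- The constant vector field with value `v`. -/
noncomputable def constField : (Fin n → K) →ₗ[K] Vect K n where
  toFun v := mkDerivation K fun i => C (v i)
  map_add' v w := derivation_ext fun i => by simp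
  map_smul' a v := derivation_ext fun i => by simp [smul_eq_C_mul]

/-- The linear vector field `x ↦ A x`. -/
noncomputable def linField : Module.End K (Fin n → K) →ₗ[K] Vect K n where
  toFun A := mkDerivation K fun i => linForm (LinearMap.proj i ∘ₗ A)
  map_add' A B := derivation_ext fun i => by simp [LinearMap.comp_add]
  map_smul' a A := derivation_ext fun i => by simp [LinearMap.comp_smul]

theorem linForm_apply (ξ : Module.Dual K (Fin n → K)) :
    linForm ξ = ∑ j, C (ξ (Pi.single j 1)) * X j := rfl

theorem linForm_proj (i : Fin n) :
    linForm (LinearMap.proj i : (Fin n → K) →ₗ[K] K) = X i := by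
  simp [linForm_apply, Pi.single_apply]

@[simp] theorem constField_X (v : Fin n → K) (i : Fin n) : constField v (X i) = C (v i) := by
  simp [constField]

@[simp] theorem linField_X (A : Module.End K (Fin n → K)) (i : Fin n) :
    linField A (X i) = linForm (LinearMap.proj i ∘ₗ A) := by
  simp [linField]

@[simp] theorem euler_X (i : Fin n) : euler K n (X i) = X i := by
  simp [euler]

theorem dual_apply_eq_sum (ξ : Module.Dual K (Fin n → K)) (v : Fin n → K) :
    ξ v = ∑ j, v j * ξ (Pi.single j 1) := by
  conv_lhs => rw [← Finset.univ_sum_single v]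
  refine (map_sum ξ _ _).trans (Finset.sum_congr rfl fun j _ => ?_)
  rw [← smul_eq_mul, ← map_smul, ← Pi.single_smul, smul_eq_mul, mul_one]

@[simp] theorem constField_linForm (v : Fin n → K) (ξ : Module.Dual K (Fin n → K)) :
    constField v (linForm ξ) = C (ξ v) := by
  rw [linForm_apply, dual_apply_eq_sum ξ v]
  simp [Derivation.leibniz, mul_comm]

@[simp] theorem linField_linForm (A : Module.End K (Fin n → K))
    (ξ : Module.Dual K (Fin n → K)) : linField A (linForm ξ) = linForm (ξ ∘ₗ A) := by
  have hcomp : ξ ∘ₗ A = ∑ j, ξ (Pi.single j 1) • (LinearMap.proj j ∘ₗ A) := by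
    refine LinearMap.ext fun v => ?_
    rw [LinearMap.comp_apply, dual_apply_eq_sum ξ (A v)]
    simp [mul_comm]
  rw [hcomp, map_sum, linForm_apply]
  simp [Derivation.leibniz, smul_eq_C_mul]

theorem constField_single (i : Fin n) : constField (Pi.single i 1) = (pderiv i : Vect K n) :=
  derivation_ext fun j => by simp [Pi.single_apply, pderiv_X]

theorem linField_one : linField (1 : Module.End K (Fin n → K)) = euler K n :=
  derivation_ext fun i => by
    rw [linField_X, euler_X, ← linForm_proj (K := K) i]
    rfl

theorem linField_smulRight (ξ : Module.Dual K (Fin n → K)) (w : Fin n → K) :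
    linField (ξ.smulRight w) = linForm ξ • constField w :=
  derivation_ext fun i => by
    have hproj : LinearMap.proj i ∘ₗ ξ.smulRight w = w i • ξ := by
      ext v
      simp [mul_comm]
    rw [linField_X, hproj]
    simp [smul_eq_C_mul, mul_comm]

theorem sum_apply {ι : Type*} (s : Finset ι) (D : ι → Vect K n)
    (f : MvPolynomial (Fin n) K) : (∑ k ∈ s, D k) f = ∑ k ∈ s, D k f := by
  induction s using Finset.cons_induction with
  | empty => simp
  | cons a s ha ih => rw [Finset.sum_cons, Finset.sum_cons, Derivation.add_apply, ih]

theorem eq_sum_smul_constField (D : Vect K n) :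
    D = ∑ i, D (X i) • constField (Pi.single i 1) :=
  derivation_ext fun j => by simp [sum_apply, Pi.single_apply]

theorem apply_eq_sum (D : Vect K n) (f : MvPolynomial (Fin n) K) :
    D f = ∑ i, D (X i) * pderiv i f := by
  conv_lhs => rw [eq_sum_smul_constField D]
  simp [sum_apply, constField_single]

theorem C_smul (a : K) (D : Vect K n) : (C a : MvPolynomial (Fin n) K) • D = a • D :=
  algebraMap_smul _ a D

theorem constField_injective :
    Function.Injective (constField : (Fin n → K) →ₗ[K] Vect K n) := by
  intro v w h
  ext i
  simpa using congrArg (fun D : Vect K n => D (X i)) h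

theorem linForm_injective : Function.Injective
    (linForm : Module.Dual K (Fin n → K) →ₗ[K] MvPolynomial (Fin n) K) := by
  intro ξ η h
  refine LinearMap.ext fun v => ?_
  simpa using congrArg (constField v) h

end ConstantLinear

/-! ### The Lie bracket of vector fields -/

section Bracket

variable {K : Type*} [Field K] {n : ℕ}

/- The general lemmas on Lie modules, specialized to vector fields: `rw` and `simp` do not
recognize the bracket of derivations as that of a Lie module unless told the algebra. -/

theorem vect_add_lie (a b c : Vect K n) : ⁅a + b, c⁆ = ⁅a, c⁆ + ⁅b, c⁆ := add_lie a b c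

theorem vect_lie_add (a b c : Vect K n) : ⁅a, b + c⁆ = ⁅a, b⁆ + ⁅a, c⁆ := lie_add a b c

theorem vect_lie_sub (a b c : Vect K n) : ⁅a, b - c⁆ = ⁅a, b⁆ - ⁅a, c⁆ := lie_sub a b c

theorem vect_zero_lie (a : Vect K n) : ⁅(0 : Vect K n), a⁆ = 0 := zero_lie a

theorem vect_lie_zero (a : Vect K n) : ⁅a, (0 : Vect K n)⁆ = 0 := lie_zero a

theorem vect_smul_lie (t : K) (a b : Vect K n) : ⁅t • a, b⁆ = t • ⁅a, b⁆ := smul_lie t a b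

theorem vect_lie_smul (t : K) (a b : Vect K n) : ⁅a, t • b⁆ = t • ⁅a, b⁆ := lie_smul t a b

theorem vect_lie_lie (a b c : Vect K n) : ⁅⁅a, b⁆, c⁆ = ⁅a, ⁅b, c⁆⁆ - ⁅b, ⁅a, c⁆⁆ :=
  lie_lie a b c

theorem vect_leibniz_lie (a b c : Vect K n) : ⁅a, ⁅b, c⁆⁆ = ⁅⁅a, b⁆, c⁆ + ⁅b, ⁅a, c⁆⁆ :=
  eq_add_of_sub_eq (lie_lie a b c).symm

theorem lie_X (D D' : Vect K n) (i : Fin n) :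
    ⁅D, D'⁆ (X i) = D (D' (X i)) - D' (D (X i)) := rfl

theorem lie_smul_right (D D' : Vect K n) (f : MvPolynomial (Fin n) K) :
    ⁅D, f • D'⁆ = D f • D' + f • ⁅D, D'⁆ :=
  derivation_ext fun i => by
    simp only [lie_X, Derivation.smul_apply, Derivation.add_apply, smul_eq_mul,
      Derivation.leibniz]
    ring

theorem lie_smul_left (D D' : Vect K n) (f : MvPolynomial (Fin n) K) :
    ⁅f • D, D'⁆ = f • ⁅D, D'⁆ - D' f • D :=
  derivation_ext fun i => by
    simp only [lie_X, Derivation.smul_apply, Derivation.sub_apply, smul_eq_mul,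
      Derivation.leibniz]
    ring

@[simp] theorem lie_constField_X (v : Fin n → K) (D : Vect K n) (i : Fin n) :
    ⁅constField v, D⁆ (X i) = constField v (D (X i)) := by
  simp [Derivation.commutator_apply]

@[simp] theorem lie_constField_constField (v w : Fin n → K) :
    ⁅constField v, constField w⁆ = 0 :=
  derivation_ext fun i => by simp

@[simp] theorem lie_constField_linField (v : Fin n → K) (A : Module.End K (Fin n → K)) :
    ⁅constField v, linField A⁆ = constField (A v) :=
  derivation_ext fun i => by simp

@[simp] theorem lie_linField_constField (v : Fin n → K) (A : Module.End K (Fin n → K)) :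
    ⁅linField A, constField v⁆ = -constField (A v) := by
  rw [← lie_skew, lie_constField_linField]

theorem lie_linField_linField (A B : Module.End K (Fin n → K)) :
    ⁅linField A, linField B⁆ = linField ⁅B, A⁆ :=
  derivation_ext fun i => by
    rw [lie_X, linField_X, linField_X, linField_X, linField_linForm, linField_linForm,
      Ring.lie_def, LinearMap.comp_sub, map_sub]
    rfl

end Bracket

/-! ### The grading -/

section Grading

variable {K : Type*} [Field K] {n : ℕ}

/-- The vector fields with homogeneous coefficients of degree `k`, i.e. `Vect_{k-1}`. The index
is shifted by one with respect to the usual grading so that it is a natural number. -/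
noncomputable def homogFields (K : Type*) [Field K] (n k : ℕ) : Submodule K (Vect K n) where
  carrier := {D | ∀ i, (D (X i)).IsHomogeneous k}
  add_mem' h1 h2 i := (h1 i).add (h2 i)
  zero_mem' _ := isHomogeneous_zero _ _ _
  smul_mem' a _ h i := (homogeneousSubmodule (Fin n) K k).smul_mem a (h i)

/-- The component of a vector field in `homogFields K n k`. -/
noncomputable def homogComp (k : ℕ) : Vect K n →ₗ[K] Vect K n where
  toFun D := mkDerivation K fun i => homogeneousComponent k (D (X i))
  map_add' D D' := derivation_ext fun i => by simp
  map_smul' a D := derivation_ext fun i => by simp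

@[simp] theorem homogComp_X (k : ℕ) (D : Vect K n) (i : Fin n) :
    homogComp k D (X i) = homogeneousComponent k (D (X i)) := by
  simp [homogComp]

theorem homogComp_mem (k : ℕ) (D : Vect K n) : homogComp k D ∈ homogFields K n k := fun i => by
  rw [homogComp_X]
  exact homogeneousComponent_isHomogeneous _ _

theorem homogComp_of_mem {k : ℕ} {D : Vect K n} (h : D ∈ homogFields K n k) :
    homogComp k D = D :=
  derivation_ext fun i => by rw [homogComp_X, homogeneousComponent_of_mem (h i), if_pos rfl]

theorem homogComp_of_mem_ne {k l : ℕ} {D : Vect K n} (h : D ∈ homogFields K n l)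
    (hkl : k ≠ l) : homogComp k D = 0 :=
  derivation_ext fun i => by
    rw [homogComp_X, homogeneousComponent_of_mem (h i), if_neg hkl, Derivation.zero_apply]

theorem eq_zero_of_mem_homogFields_of_ne {D : Vect K n} {k l : ℕ} (hk : D ∈ homogFields K n k)
    (hl : D ∈ homogFields K n l) (h : k ≠ l) : D = 0 := by
  rw [← homogComp_of_mem hk, homogComp_of_mem_ne hl h]

theorem exists_eq_sum_homogComp (D : Vect K n) :
    ∃ N, D = ∑ k ∈ Finset.range N, homogComp k D ∧ ∀ k, N ≤ k → homogComp k D = 0 := by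
  have hdeg (i : Fin n) := Finset.le_sup (f := fun i => (D (X i)).totalDegree)
    (Finset.mem_univ i)
  refine ⟨(Finset.univ.sup fun i => (D (X i)).totalDegree) + 1, derivation_ext fun i => ?_,
    fun k hk => derivation_ext fun i => ?_⟩
  · simp only [sum_apply, homogComp_X]
    conv_lhs => rw [← sum_homogeneousComponent (D (X i))]
    refine Finset.sum_subset (Finset.range_subset_range.2 (by grind)) fun k _ hk => ?_
    exact homogeneousComponent_eq_zero _ _ (by grind)
  · rw [homogComp_X, homogeneousComponent_eq_zero _ _ (by grind), Derivation.zero_apply]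

theorem mem_of_homogComp_mem {M : Submodule K (Vect K n)} {D : Vect K n}
    (h : ∀ k, homogComp k D ∈ M) : D ∈ M := by
  obtain ⟨N, hN, -⟩ := exists_eq_sum_homogComp D
  rw [hN]
  exact M.sum_mem fun k _ => h k

theorem eq_zero_of_homogComp_eq_zero {D : Vect K n} (h : ∀ k, homogComp k D = 0) : D = 0 :=
  (Submodule.mem_bot K).1 (mem_of_homogComp_mem fun k => (Submodule.mem_bot K).2 (h k))

theorem smul_mem_homogFields {D : Vect K n} {k d : ℕ} {f : MvPolynomial (Fin n) K}
    (hf : f.IsHomogeneous d) (hD : D ∈ homogFields K n k) : f • D ∈ homogFields K n (d + k) :=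
  fun i => hf.mul (hD i)

theorem mem_homogFields_zero {D : Vect K n} : D ∈ homogFields K n 0 ↔ ∃ v, D = constField v := by
  constructor
  · refine fun h => ⟨fun i => coeff 0 (D (X i)), derivation_ext fun i => ?_⟩
    rw [constField_X, ← totalDegree_eq_zero_iff_eq_C, totalDegree_zero_iff_isHomogeneous]
    exact h i
  · rintro ⟨v, rfl⟩ i
    rw [constField_X]
    exact isHomogeneous_C _ _

theorem constField_mem (v : Fin n → K) : constField v ∈ homogFields K n 0 :=
  mem_homogFields_zero.2 ⟨v, rfl⟩

theorem linForm_isHomogeneous (ξ : Module.Dual K (Fin n → K)) : (linForm ξ).IsHomogeneous 1 :=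
  IsHomogeneous.sum _ _ _ fun j _ => (isHomogeneous_X K j).C_mul _

theorem mem_homogFields_one {D : Vect K n} : D ∈ homogFields K n 1 ↔ ∃ A, D = linField A := by
  constructor
  · intro h
    have hlin (i : Fin n) : ∃ ξ, linForm ξ = D (X i) := by
      have hspan : D (X i) ∈ homogeneousSubmodule (Fin n) K 1 := h i
      rw [homogeneousSubmodule_one_eq_span_X] at hspan
      exact Submodule.span_le (p := LinearMap.range linForm).2
        (Set.range_subset_iff.2 fun j => ⟨_, linForm_proj j⟩) hspan
    choose ξ hξ using hlin
    refine ⟨LinearMap.pi ξ, derivation_ext fun i => ?_⟩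
    rw [linField_X, LinearMap.proj_pi, hξ]
  · rintro ⟨A, rfl⟩ i
    rw [linField_X]
    exact linForm_isHomogeneous _

theorem linField_mem (A : Module.End K (Fin n → K)) : linField A ∈ homogFields K n 1 :=
  mem_homogFields_one.2 ⟨A, rfl⟩

theorem euler_mem_homogFields : euler K n ∈ homogFields K n 1 :=
  linField_one (K := K) (n := n) ▸ linField_mem _

theorem apply_eq_zero_of_isHomogeneous_zero {f : MvPolynomial (Fin n) K}
    (hf : f.IsHomogeneous 0) (D : Vect K n) : D f = 0 := by
  rw [← totalDegree_zero_iff_isHomogeneous, totalDegree_eq_zero_iff_eq_C] at hf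
  rw [hf, derivation_C]

theorem isHomogeneous_apply {D : Vect K n} {k : ℕ} (hD : D ∈ homogFields K n k)
    {f : MvPolynomial (Fin n) K} {d : ℕ} (hf : f.IsHomogeneous (d + 1)) :
    (D f).IsHomogeneous (k + d) := by
  rw [apply_eq_sum]
  exact IsHomogeneous.sum _ _ _ fun i _ => (hD i).mul hf.pderiv

theorem lie_mem_homogFields {D D' : Vect K n} {a b c : ℕ} (h : D ∈ homogFields K n a)
    (h' : D' ∈ homogFields K n b) (hc : a + b = c + 1) : ⁅D, D'⁆ ∈ homogFields K n c := by
  have key : ∀ {D D' : Vect K n} {a b : ℕ}, D ∈ homogFields K n a → D' ∈ homogFields K n b →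
      a + b = c + 1 → ∀ i, (D (D' (X i))).IsHomogeneous c := by
    intro D D' a b h h' hc i
    rcases b with _ | b
    · rw [apply_eq_zero_of_isHomogeneous_zero (h' i)]
      exact isHomogeneous_zero _ _ _
    · obtain rfl : a + b = c := by omega
      exact isHomogeneous_apply h (h' i)
  exact fun i => (key h h' hc i).sub (key h' h (by omega) i)

end Grading

/-! ### The Euler field and the grading -/

section Euler

variable {K : Type*} [Field K] {n : ℕ}

theorem euler_apply_of_isHomogeneous {f : MvPolynomial (Fin n) K} {d : ℕ}
    (hf : f.IsHomogeneous d) : euler K n f = (d : K) • f := by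
  rw [apply_eq_sum, Nat.cast_smul_eq_nsmul]
  simpa only [euler_X] using hf.sum_X_mul_pderiv

theorem coeff_euler (f : MvPolynomial (Fin n) K) (m : Fin n →₀ ℕ) :
    coeff m (euler K n f) = (m.degree : K) * coeff m f := by
  induction f using MvPolynomial.induction_on' with
  | monomial a b =>
    rw [euler_apply_of_isHomogeneous (isHomogeneous_monomial b rfl), coeff_smul, coeff_monomial]
    split_ifs with h
    · rw [h, smul_eq_mul]
    · simp
  | add p q hp hq => rw [map_add, coeff_add, coeff_add, hp, hq, mul_add]

theorem euler_lie {D : Vect K n} {k : ℕ} (h : D ∈ homogFields K n k) :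
    ⁅euler K n, D⁆ = ((k : K) - 1) • D :=
  derivation_ext fun i => by
    rw [lie_X, euler_X, Derivation.smul_apply, euler_apply_of_isHomogeneous (h i), sub_smul,
      one_smul]

theorem vectP_eq_homogFields [CharZero K] (k : ℕ) (p : ℤ) (hp : p = (k : ℤ) - 1) :
    VectP K n p = homogFields K n k := by
  subst hp
  ext D
  rw [VectP, Module.End.mem_eigenspace_iff, LieAlgebra.ad_apply]
  refine ⟨fun h i m hm => ?_, fun h => by rw [euler_lie h]; simp⟩
  have hcoeff := congrArg (fun D' : Vect K n => coeff m (D' (X i))) h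
  simp only [lie_X, euler_X, Derivation.smul_apply, coeff_sub, coeff_euler, coeff_smul,
    smul_eq_mul, Int.cast_sub, Int.cast_natCast, Int.cast_one] at hcoeff
  have hmul : ((m.degree : K) - k) * coeff m (D (X i)) = 0 := by linear_combination hcoeff
  have hdeg : m.degree = k := by
    exact_mod_cast sub_eq_zero.1 ((mul_eq_zero.1 hmul).resolve_right hm)
  rw [← hdeg, Finsupp.degree_eq_weight_one]
  rfl

theorem mem_of_sum_eigenvectors_mem {V ι : Type*} [AddCommGroup V] [Module K V]
    (f : Module.End K V) (M : Submodule K V) (hf : ∀ x ∈ M, f x ∈ M) (s : Finset ι) (μ : ι → K)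
    (hμ : Set.InjOn μ s) : ∀ d : ι → V, (∀ k ∈ s, f (d k) = μ k • d k) →
      ∑ k ∈ s, d k ∈ M → ∀ k ∈ s, d k ∈ M := by
  classical
  induction s using Finset.induction_on with
  | empty => simp
  | insert a s ha ih =>
    intro d hd hs
    have hdiff : f (∑ k ∈ insert a s, d k) - μ a • ∑ k ∈ insert a s, d k =
        ∑ k ∈ s, (μ k - μ a) • d k := by
      rw [map_sum, Finset.smul_sum, ← Finset.sum_sub_distrib, Finset.sum_insert ha,
        hd a (Finset.mem_insert_self _ _), sub_self, zero_add]
      exact Finset.sum_congr rfl fun k hk => by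
        rw [hd k (Finset.mem_insert_of_mem hk), sub_smul]
    have hsmul : ∀ k ∈ s, (μ k - μ a) • d k ∈ M := by
      refine ih (hμ.mono (by simp)) (fun k => (μ k - μ a) • d k) (fun k hk => ?_) ?_
      · rw [map_smul, hd k (Finset.mem_insert_of_mem hk), smul_comm]
      · exact hdiff ▸ M.sub_mem (hf _ hs) (M.smul_mem _ hs)
    have hmem : ∀ k ∈ s, d k ∈ M := fun k hk => by
      have hne : μ k - μ a ≠ 0 := fun h0 =>
        ha (hμ (by simp [hk]) (by simp) (sub_eq_zero.1 h0) ▸ hk)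
      exact (M.smul_mem_iff hne).1 (hsmul k hk)
    intro k hk
    rcases Finset.mem_insert.1 hk with rfl | hk
    · rw [Finset.sum_insert ha] at hs
      exact (Submodule.add_mem_iff_left M (M.sum_mem hmem)).1 hs
    · exact hmem k hk

/-- A space of vector fields is graded if it contains the homogeneous components of its
elements. -/
def IsGraded (M : Submodule K (Vect K n)) : Prop :=
  ∀ ⦃D⦄, D ∈ M → ∀ k, homogComp k D ∈ M

theorem isGraded_of_euler_lie_mem [CharZero K] {M : Submodule K (Vect K n)}
    (hM : ∀ D ∈ M, ⁅euler K n, D⁆ ∈ M) : IsGraded M := by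
  intro D hD k
  obtain ⟨N, hN, hN'⟩ := exists_eq_sum_homogComp D
  by_cases hk : k < N
  · refine mem_of_sum_eigenvectors_mem (LieAlgebra.ad K (Vect K n) (euler K n)) M hM
      (Finset.range N) (fun k => (k : K) - 1) (fun a _ b _ h => ?_) (fun k => homogComp k D)
      (fun k _ => euler_lie (homogComp_mem k D)) (hN ▸ hD) k (Finset.mem_range.2 hk)
    have hab : (a : K) = b := by simpa using h
    exact_mod_cast hab
  · rw [hN' k (not_lt.1 hk)]
    exact M.zero_mem

theorem IsGradedSubalg.isGraded [CharZero K] {L : LieSubalgebra K (Vect K n)}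
    (hL : IsGradedSubalg K n L) : IsGraded L.toSubmodule := by
  intro D hD k
  suffices h : L.toSubmodule ≤ L.toSubmodule.comap (homogComp k) from h hD
  conv_lhs => rw [show L.toSubmodule = _ from hL]
  refine iSup₂_le fun p hp => ?_
  obtain ⟨l, rfl⟩ : ∃ l : ℕ, p = (l : ℤ) - 1 := ⟨(p + 1).toNat, by omega⟩
  rw [vectP_eq_homogFields l _ rfl]
  rintro x ⟨hx, hx'⟩
  rw [Submodule.mem_comap]
  by_cases hkl : k = l
  · subst hkl
    rwa [homogComp_of_mem hx']
  · rw [homogComp_of_mem_ne hx' hkl]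
    exact Submodule.zero_mem _

theorem eq_C_of_constField_apply_eq_zero [CharZero K] {f : MvPolynomial (Fin n) K}
    (h : ∀ v : Fin n → K, constField v f = 0) : f = C (coeff 0 f) := by
  have heuler : euler K n f = 0 := by
    rw [apply_eq_sum]
    exact Finset.sum_eq_zero fun i _ => by rw [← constField_single, h, mul_zero]
  ext m
  rw [coeff_C]
  split_ifs with hm
  · rw [hm]
  · have hcoeff := coeff_euler f m
    rw [heuler, coeff_zero, zero_eq_mul, Nat.cast_eq_zero, Finsupp.degree_eq_zero_iff] at hcoeff
    exact hcoeff.resolve_left (Ne.symm hm)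

theorem mem_homogFields_zero_of_lie_constField [CharZero K] {D : Vect K n}
    (h : ∀ v : Fin n → K, ⁅constField v, D⁆ = 0) : D ∈ homogFields K n 0 := by
  intro i
  rw [eq_C_of_constField_apply_eq_zero (f := D (X i)) fun v => by
    rw [← lie_constField_X, h, Derivation.zero_apply]]
  exact isHomogeneous_C _ _

theorem eq_zero_of_lie_constField [CharZero K] {D : Vect K n} {k : ℕ}
    (hD : D ∈ homogFields K n (k + 1)) (h : ∀ v : Fin n → K, ⁅constField v, D⁆ = 0) : D = 0 :=
  eq_zero_of_mem_homogFields_of_ne hD (mem_homogFields_zero_of_lie_constField h) (by omega)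

theorem sum_X_smul_lie_constField {D : Vect K n} {k : ℕ} (hD : D ∈ homogFields K n k) :
    ∑ i, (X i : MvPolynomial (Fin n) K) • ⁅constField (Pi.single i (1 : K)), D⁆ = (k : K) • D :=
  derivation_ext fun j => by
    rw [sum_apply, Derivation.smul_apply, ← euler_apply_of_isHomogeneous (hD j),
      apply_eq_sum (euler K n)]
    refine Finset.sum_congr rfl fun i _ => ?_
    rw [Derivation.smul_apply, lie_constField_X, euler_X, constField_single, smul_eq_mul]

end Euler

section BoundedDegree

variable {K : Type*} [Field K] {n : ℕ}

/-- The vector fields whose coefficients have degree less than `N`. -/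
noncomputable def fieldsDegreeLT (K : Type*) [Field K] (n N : ℕ) : Submodule K (Vect K n) :=
  ⨅ k ≥ N, LinearMap.ker (homogComp k)

theorem mem_fieldsDegreeLT {N : ℕ} {D : Vect K n} :
    D ∈ fieldsDegreeLT K n N ↔ ∀ k, N ≤ k → homogComp k D = 0 := by
  simp [fieldsDegreeLT]

theorem totalDegree_le_of_mem_fieldsDegreeLT {N : ℕ} {D : Vect K n}
    (hD : D ∈ fieldsDegreeLT K n N) (i : Fin n) : (D (X i)).totalDegree ≤ N := by
  refine Finset.sup_le fun m hm => ?_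
  by_contra! hlt
  have hcomp := congrArg (fun D' : Vect K n => coeff m (D' (X i)))
    (mem_fieldsDegreeLT.1 hD m.degree hlt.le)
  simp only [homogComp_X, coeff_homogeneousComponent, if_true] at hcomp
  exact mem_support_iff.1 hm hcomp

theorem finiteDimensional_fieldsDegreeLT (N : ℕ) :
    FiniteDimensional K (fieldsDegreeLT K n N) := by
  let coeffs : fieldsDegreeLT K n N →ₗ[K] (Fin n → restrictTotalDegree (Fin n) K N) :=
    { toFun := fun D i => ⟨D.1 (X i), (mem_restrictTotalDegree _ _ _).2
        (totalDegree_le_of_mem_fieldsDegreeLT D.2 i)⟩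
      map_add' := fun _ _ => rfl
      map_smul' := fun _ _ => rfl }
  exact FiniteDimensional.of_injective coeffs fun D D' h =>
    Subtype.ext (derivation_ext fun i => congrArg Subtype.val (congrFun h i))

theorem exists_le_fieldsDegreeLT (M : Submodule K (Vect K n)) [FiniteDimensional K M] :
    ∃ N, M ≤ fieldsDegreeLT K n N := by
  obtain ⟨s, hs⟩ := Module.Finite.iff_fg.1 (inferInstance : Module.Finite K M)
  choose N _ hN using fun D : Vect K n => exists_eq_sum_homogComp D
  refine ⟨s.sup N, ?_⟩
  rw [← hs, Submodule.span_le]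
  exact fun D hD => mem_fieldsDegreeLT.2 fun k hk => hN D k ((Finset.le_sup hD).trans hk)

theorem exists_forall_homogFields_eq_zero (M : Submodule K (Vect K n)) [FiniteDimensional K M] :
    ∃ N, ∀ k, N ≤ k → ∀ D ∈ M, D ∈ homogFields K n k → D = 0 := by
  obtain ⟨N, hN⟩ := exists_le_fieldsDegreeLT M
  refine ⟨N, fun k hk D hD hDk => ?_⟩
  rw [← homogComp_of_mem hDk, mem_fieldsDegreeLT.1 (hN hD) k hk]

end BoundedDegree

/-! ### Maximal subalgebras contain the constant fields -/

section ConstantsNecessary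

variable {K : Type*} [Field K] {n : ℕ}

theorem smul_constField_ne_zero {f : MvPolynomial (Fin n) K} {v : Fin n → K} (hf : f ≠ 0)
    (hv : v ≠ 0) : f • constField v ≠ 0 := by
  intro h
  obtain ⟨i, hi⟩ := Function.ne_iff.1 hv
  have hX := congrArg (fun D : Vect K n => D (X i)) h
  exact mul_ne_zero hf ((map_ne_zero_iff _ (C_injective _ _)).2 hi) (by simpa using hX)

theorem linForm_pow_smul_constField_mem (ξ : Module.Dual K (Fin n → K)) (v : Fin n → K) (k : ℕ) :
    linForm ξ ^ k • constField v ∈ homogFields K n k := by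
  simpa using smul_mem_homogFields ((linForm_isHomogeneous ξ).pow k) (constField_mem v)

/-- A finite-dimensional `L` differs from any subalgebra `M` containing the fields `ξ ^ k ∂_v`. -/
theorem eq_top_of_isMaxSubalg_of_le {L M : LieSubalgebra K (Vect K n)} [FiniteDimensional K L]
    (hmax : IsMaxSubalg K n L) (hle : L ≤ M) {ξ : Module.Dual K (Fin n → K)} (hξ : ξ ≠ 0)
    {v : Fin n → K} (hv : v ≠ 0) (hM : ∀ k, linForm ξ ^ (k + 1) • constField v ∈ M) : M = ⊤ := by
  refine (hmax M hle).resolve_left fun hML => ?_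
  have : FiniteDimensional K L.toSubmodule := ‹_›
  obtain ⟨N, hN⟩ := exists_forall_homogFields_eq_zero L.toSubmodule
  exact smul_constField_ne_zero
    (pow_ne_zero (N + 1) ((map_ne_zero_iff _ linForm_injective).2 hξ)) hv
    (hN (N + 1) N.le_succ _ (hML ▸ hM N) (linForm_pow_smul_constField_mem ξ v (N + 1)))

/-- The values of the constant fields belonging to `L`. -/
noncomputable def constPart (L : LieSubalgebra K (Vect K n)) : Submodule K (Fin n → K) :=
  L.toSubmodule.comap constField

/-- The spaces of polynomials vanishing at the origin and stable under the derivatives along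
`F`. -/
structure IsStableVanishing (F : Submodule K (Fin n → K))
    (W : Submodule K (MvPolynomial (Fin n) K)) : Prop where
  coeff_zero : ∀ f ∈ W, coeff 0 f = 0
  deriv_mem : ∀ u ∈ F, ∀ f ∈ W, constField u f ∈ W

/-- The largest space of polynomials vanishing at the origin and stable under the derivatives
along `F`; it is the ideal of the polynomials vanishing on `F`. -/
noncomputable def vanishingOn (F : Submodule K (Fin n → K)) :
    Submodule K (MvPolynomial (Fin n) K) :=
  sSup {W | IsStableVanishing F W}

theorem isStableVanishing_vanishingOn (F : Submodule K (Fin n → K)) :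
    IsStableVanishing F (vanishingOn F) where
  coeff_zero := by
    suffices h : vanishingOn F ≤ LinearMap.ker (lcoeff K (0 : Fin n →₀ ℕ)) from fun f hf => h hf
    exact sSup_le fun W hW f hf => hW.coeff_zero f hf
  deriv_mem u hu := by
    suffices h : vanishingOn F ≤ (vanishingOn F).comap (constField u : Vect K n).toLinearMap from
      fun f hf => h hf
    exact sSup_le fun W hW f hf => (le_sSup hW : W ≤ vanishingOn F) (hW.deriv_mem u hu f hf)

theorem IsStableVanishing.span {F : Submodule K (Fin n → K)} {S : Set (MvPolynomial (Fin n) K)}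
    (h0 : ∀ f ∈ S, coeff 0 f = 0)
    (hS : ∀ u ∈ F, ∀ f ∈ S, constField u f ∈ Submodule.span K S) :
    IsStableVanishing F (Submodule.span K S) where
  coeff_zero := by
    suffices h : Submodule.span K S ≤ LinearMap.ker (lcoeff K (0 : Fin n →₀ ℕ)) from
      fun f hf => h hf
    exact Submodule.span_le.2 fun f hf => h0 f hf
  deriv_mem u hu := by
    suffices h : Submodule.span K S ≤
      (Submodule.span K S).comap (constField u : Vect K n).toLinearMap from fun f hf => h hf
    exact Submodule.span_le.2 fun f hf => hS u hu f hf

theorem mem_vanishingOn_of_span {F : Submodule K (Fin n → K)}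
    {S : Set (MvPolynomial (Fin n) K)} (h0 : ∀ f ∈ S, coeff 0 f = 0)
    (hS : ∀ u ∈ F, ∀ f ∈ S, constField u f ∈ Submodule.span K S) {f : MvPolynomial (Fin n) K}
    (hf : f ∈ S) : f ∈ vanishingOn F :=
  (le_sSup (IsStableVanishing.span h0 hS) : _ ≤ vanishingOn F) (Submodule.subset_span hf)

theorem mul_mem_vanishingOn {F : Submodule K (Fin n → K)} {f : MvPolynomial (Fin n) K}
    (hf : f ∈ vanishingOn F) (g : MvPolynomial (Fin n) K) : g * f ∈ vanishingOn F := by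
  have hF := isStableVanishing_vanishingOn F
  refine mem_vanishingOn_of_span (S := {x | ∃ g, ∃ f ∈ vanishingOn F, x = g * f}) ?_ ?_
    ⟨g, f, hf, rfl⟩
  · rintro _ ⟨g, f, hf, rfl⟩
    have hzero := hF.coeff_zero f hf
    rw [← constantCoeff_eq] at hzero ⊢
    rw [map_mul, hzero, mul_zero]
  · rintro u hu _ ⟨g, f, hf, rfl⟩
    rw [Derivation.leibniz, smul_eq_mul, smul_eq_mul, mul_comm f]
    exact Submodule.add_mem _ (Submodule.subset_span ⟨_, _, hF.deriv_mem u hu f hf, rfl⟩)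
      (Submodule.subset_span ⟨_, _, hf, rfl⟩)

theorem linForm_mem_vanishingOn {F : Submodule K (Fin n → K)} {ξ : Module.Dual K (Fin n → K)}
    (h : ∀ u ∈ F, ξ u = 0) : linForm ξ ∈ vanishingOn F := by
  refine mem_vanishingOn_of_span (S := {linForm ξ}) ?_ ?_ rfl
  · rintro _ rfl
    exact (linForm_isHomogeneous ξ).coeff_eq_zero (by simp)
  · rintro u hu _ rfl
    rw [constField_linForm, h u hu, C_0]
    exact Submodule.zero_mem _

theorem coeff_zero_apply (D : Vect K n) (f : MvPolynomial (Fin n) K) :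
    coeff 0 (D f) = coeff 0 (homogComp 0 D f) := by
  rw [apply_eq_sum D, apply_eq_sum (homogComp 0 D)]
  simp only [← constantCoeff_eq, map_sum, map_mul, homogComp_X]
  simp [constantCoeff_eq, homogeneousComponent_zero]

theorem apply_mem_vanishingOn {L : LieSubalgebra K (Vect K n)} (hgr : IsGraded L.toSubmodule)
    {D : Vect K n} (hD : D ∈ L) {f : MvPolynomial (Fin n) K}
    (hf : f ∈ vanishingOn (constPart L)) : D f ∈ vanishingOn (constPart L) := by
  have hV := isStableVanishing_vanishingOn (constPart L)
  refine mem_vanishingOn_of_span (S := (vanishingOn (constPart L) : Set _) ∪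
    {x | ∃ D ∈ L, ∃ f ∈ vanishingOn (constPart L), x = D f}) ?_ ?_ (Or.inr ⟨D, hD, f, hf, rfl⟩)
  · rintro _ (hf | ⟨D, hD, f, hf, rfl⟩)
    · exact hV.coeff_zero _ hf
    · rw [coeff_zero_apply]
      obtain ⟨v, hv⟩ := mem_homogFields_zero.1 (homogComp_mem 0 D)
      have hvL := hgr hD 0
      rw [hv] at hvL ⊢
      exact hV.coeff_zero _ (hV.deriv_mem v hvL _ hf)
  · rintro u hu _ (hf | ⟨D, hD, f, hf, rfl⟩)
    · exact Submodule.subset_span (Or.inl (hV.deriv_mem u hu _ hf))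
    · have hcomm : constField u (D f) = ⁅constField u, D⁆ f + D (constField u f) := by
        rw [Derivation.commutator_apply, sub_add_cancel]
      rw [hcomm]
      exact Submodule.add_mem _
        (Submodule.subset_span (Or.inr ⟨_, L.lie_mem hu hD, _, hf, rfl⟩))
        (Submodule.subset_span (Or.inr ⟨_, hD, _, hV.deriv_mem u hu _ hf, rfl⟩))

/-- The vector fields preserving a space of polynomials. -/
noncomputable def stabilizer (S : Submodule K (MvPolynomial (Fin n) K)) :
    LieSubalgebra K (Vect K n) where
  carrier := {D | ∀ f ∈ S, D f ∈ S}
  add_mem' h1 h2 f hf := S.add_mem (h1 f hf) (h2 f hf)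
  zero_mem' _ _ := S.zero_mem
  smul_mem' a _ h f hf := S.smul_mem a (h f hf)
  lie_mem' h1 h2 f hf := by
    rw [Derivation.commutator_apply]
    exact S.sub_mem (h1 _ (h2 f hf)) (h2 _ (h1 f hf))

theorem constField_mem_of_isMaxSubalg {L : LieSubalgebra K (Vect K n)} [FiniteDimensional K L]
    (hgr : IsGraded L.toSubmodule) (hmax : IsMaxSubalg K n L) (v : Fin n → K) :
    constField v ∈ L := by
  by_contra hv
  have hv0 : v ≠ 0 := by
    rintro rfl
    exact hv (by simp)
  obtain ⟨ξ, hξv, hξ⟩ := Submodule.exists_le_ker_of_notMem (p := constPart L) hv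
  have hξV : linForm ξ ∈ vanishingOn (constPart L) := linForm_mem_vanishingOn fun u hu => hξ hu
  have htop : stabilizer (vanishingOn (constPart L)) = ⊤ := by
    refine eq_top_of_isMaxSubalg_of_le hmax
      (fun D hD f hf => apply_mem_vanishingOn hgr hD hf)
      (fun h0 : ξ = 0 => hξv (by rw [h0, LinearMap.zero_apply])) hv0 fun k f _ => ?_
    rw [Derivation.smul_apply, smul_eq_mul, pow_succ, mul_comm, ← mul_assoc]
    exact mul_mem_vanishingOn hξV _
  have hvV : constField v ∈ stabilizer (vanishingOn (constPart L)) :=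
    htop ▸ LieSubalgebra.mem_top _
  have hzero := (isStableVanishing_vanishingOn _).coeff_zero _ (hvV _ hξV)
  rw [constField_linForm, coeff_zero_C] at hzero
  exact hξv hzero

end ConstantsNecessary

/-! ### Maximal subalgebras are irreducible -/

section IrreducibleNecessary

attribute [local instance] LieRing.ofAssociativeRing LieAlgebra.ofAssociativeAlgebra

variable {K : Type*} [Field K] {n : ℕ}

/-- A set of operators acts irreducibly if it has no invariant subspaces but the trivial ones.
(The zero space is not excluded.) -/
def ActsIrreducibly {V : Type*} [AddCommGroup V] [Module K V] (S : Set (Module.End K V)) : Prop :=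
  ∀ W : Submodule K V, (∀ A ∈ S, ∀ u ∈ W, A u ∈ W) → W = ⊥ ∨ W = ⊤

/-- The linear part of `L`: the Lie algebra of the `A` such that `x ↦ A x` belongs to `L`. -/
noncomputable def linearPart (L : LieSubalgebra K (Vect K n)) :
    LieSubalgebra K (Module.End K (Fin n → K)) where
  __ := L.toSubmodule.comap linField
  lie_mem' {A B} hA hB := by
    change linField ⁅A, B⁆ ∈ L
    rw [← lie_linField_linField]
    exact L.lie_mem hB hA

/-- A set of operators has scalar commutant if only the scalars commute with all its elements. -/
def HasScalarCommutant {V : Type*} [AddCommGroup V] [Module K V] (S : Set (Module.End K V)) :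
    Prop :=
  ∀ T : Module.End K V, (∀ A ∈ S, Commute T A) → ∃ c : K, T = c • 1

theorem mem_linearPart {L : LieSubalgebra K (Vect K n)} {A : Module.End K (Fin n → K)} :
    A ∈ linearPart L ↔ linField A ∈ L := Iff.rfl

/-- The vector fields tangent to the linear foliation with direction `F`. -/
noncomputable def tangentFields (F : Submodule K (Fin n → K)) :
    Submodule (MvPolynomial (Fin n) K) (Vect K n) :=
  Submodule.span _ (constField '' F)

theorem constField_mem_tangentFields {F : Submodule K (Fin n → K)} {u : Fin n → K} (hu : u ∈ F) :
    constField u ∈ tangentFields F :=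
  Submodule.subset_span ⟨u, hu, rfl⟩

/-- The normalizer of a polynomial submodule of the space of vector fields. -/
noncomputable def normalizer (S : Submodule (MvPolynomial (Fin n) K) (Vect K n)) :
    LieSubalgebra K (Vect K n) where
  carrier := {D | ∀ Z ∈ S, ⁅D, Z⁆ ∈ S}
  add_mem' h1 h2 Z hZ := by
    rw [vect_add_lie]
    exact S.add_mem (h1 Z hZ) (h2 Z hZ)
  zero_mem' Z _ := by
    rw [vect_zero_lie]
    exact S.zero_mem
  smul_mem' a D h Z hZ := by
    rw [vect_smul_lie]
    exact S.smul_of_tower_mem a (h Z hZ)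
  lie_mem' h1 h2 Z hZ := by
    rw [vect_lie_lie]
    exact S.sub_mem (h1 _ (h2 Z hZ)) (h2 _ (h1 Z hZ))

theorem mem_normalizer_tangentFields {F : Submodule K (Fin n → K)} {D : Vect K n}
    (h : ∀ u ∈ F, ⁅D, constField u⁆ ∈ tangentFields F) : D ∈ normalizer (tangentFields F) := by
  intro Z hZ
  induction hZ using Submodule.span_induction with
  | mem x hx =>
    obtain ⟨u, hu, rfl⟩ := hx
    exact h u hu
  | zero =>
    rw [vect_lie_zero]
    exact Submodule.zero_mem _
  | add x y _ _ h1 h2 =>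
    rw [vect_lie_add]
    exact Submodule.add_mem _ h1 h2
  | smul f x hx h1 =>
    rw [lie_smul_right]
    exact Submodule.add_mem _ (Submodule.smul_mem _ _ hx) (Submodule.smul_mem _ _ h1)

theorem apply_linForm_eq_zero_of_mem_tangentFields {F : Submodule K (Fin n → K)}
    {ξ : Module.Dual K (Fin n → K)} (hξ : ∀ u ∈ F, ξ u = 0) {Z : Vect K n}
    (hZ : Z ∈ tangentFields F) : Z (linForm ξ) = 0 := by
  induction hZ using Submodule.span_induction with
  | mem x hx =>
    obtain ⟨v, hv, rfl⟩ := hx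
    rw [constField_linForm, hξ v hv, C_0]
  | zero => rfl
  | add x y _ _ h1 h2 => rw [Derivation.add_apply, h1, h2, add_zero]
  | smul f x _ h1 => rw [Derivation.smul_apply, h1, smul_zero]

/-- Euler's identity allows an induction on the degree of a field from its derivatives. -/
theorem mem_of_X_smul_lie_constField_mem [CharZero K]
    (S : Submodule (MvPolynomial (Fin n) K) (Vect K n)) {D : Vect K n} {k : ℕ}
    (hD : D ∈ homogFields K n (k + 1))
    (h : ∀ v : Fin n → K, ⁅constField v, D⁆ ∈ S) : D ∈ S := by
  have hk : ((k + 1 : ℕ) : K) ≠ 0 := by exact_mod_cast Nat.succ_ne_zero k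
  have hsum := S.sum_mem fun i (_ : i ∈ Finset.univ) => S.smul_mem (X i) (h (Pi.single i 1))
  rw [sum_X_smul_lie_constField hD] at hsum
  simpa only [inv_smul_smul₀ hk] using S.smul_of_tower_mem ((k + 1 : ℕ) : K)⁻¹ hsum

theorem lie_constField_mem_tangentFields [CharZero K] {L : LieSubalgebra K (Vect K n)}
    (hc : ∀ v, constField v ∈ L) {F : Submodule K (Fin n → K)}
    (hF : ∀ A ∈ linearPart L, ∀ u ∈ F, A u ∈ F) (k : ℕ) :
    ∀ D ∈ L, D ∈ homogFields K n k → ∀ u ∈ F, ⁅D, constField u⁆ ∈ tangentFields F := by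
  induction k with
  | zero =>
    intro D _ hD u _
    obtain ⟨v, rfl⟩ := mem_homogFields_zero.1 hD
    rw [lie_constField_constField]
    exact Submodule.zero_mem _
  | succ k ih =>
    intro D hDL hD u hu
    rcases k with _ | k
    · obtain ⟨A, rfl⟩ := mem_homogFields_one.1 hD
      rw [lie_linField_constField]
      exact Submodule.neg_mem _ (constField_mem_tangentFields (hF A hDL u hu))
    · have hDu : ⁅D, constField u⁆ ∈ homogFields K n (k + 1) :=
        lie_mem_homogFields hD (constField_mem u) (by omega)
      refine mem_of_X_smul_lie_constField_mem _ hDu fun v => ?_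
      rw [vect_leibniz_lie, lie_constField_constField, vect_lie_zero, add_zero]
      exact ih _ (L.lie_mem (hc v) hDL)
        (lie_mem_homogFields (constField_mem v) hD (by omega)) u hu

theorem actsIrreducibly_of_isMaxSubalg [CharZero K] {L : LieSubalgebra K (Vect K n)}
    [FiniteDimensional K L] (hgr : IsGraded L.toSubmodule) (hmax : IsMaxSubalg K n L)
    (hc : ∀ v, constField v ∈ L) :
    ActsIrreducibly (linearPart L : Set (Module.End K (Fin n → K))) := by
  intro F hF
  by_contra! hne
  obtain ⟨u, hu, hu0⟩ := Submodule.exists_mem_ne_zero_of_ne_bot hne.1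
  obtain ⟨w, hw⟩ := SetLike.exists_not_mem_of_ne_top F hne.2 rfl
  obtain ⟨η, hη⟩ := Module.Projective.exists_dual_eq_one K hu0
  obtain ⟨ξ, hξw, hξ⟩ := Submodule.exists_le_ker_of_notMem hw
  have hle : L ≤ normalizer (tangentFields F) := fun D hD =>
    mem_of_homogComp_mem (M := (normalizer (tangentFields F)).toSubmodule) fun k =>
      mem_normalizer_tangentFields
        (lie_constField_mem_tangentFields hc hF k _ (hgr hD k) (homogComp_mem k D))
  have htop : normalizer (tangentFields F) = ⊤ := by
    refine eq_top_of_isMaxSubalg_of_le hmax hle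
      (fun h0 : η = 0 => by simp [h0] at hη) hu0 fun k => ?_
    refine mem_normalizer_tangentFields fun v _ => ?_
    rw [lie_smul_left, lie_constField_constField, smul_zero, zero_sub]
    exact Submodule.neg_mem _ (Submodule.smul_mem _ _ (constField_mem_tangentFields hu))
  have hlin : linForm η • constField w ∈ normalizer (tangentFields F) :=
    htop ▸ LieSubalgebra.mem_top _
  have hwF : constField w ∈ tangentFields F := by
    simpa [lie_smul_left, hη] using hlin _ (constField_mem_tangentFields hu)
  have hzero := apply_linForm_eq_zero_of_mem_tangentFields (fun v hv => hξ hv) hwF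
  rw [constField_linForm, map_eq_zero_iff _ (C_injective _ _)] at hzero
  exact hξw hzero

end IrreducibleNecessary

/-! ### Maximal subalgebras contain a quadratic field -/

section QuadraticNecessary

variable {K : Type*} [Field K] {n : ℕ}

theorem eq_zero_of_quadratic_eq_zero [CharZero K] {L : LieSubalgebra K (Vect K n)}
    (hc : ∀ v, constField v ∈ L) (h : ∀ D ∈ L, D ∈ homogFields K n 2 → D = 0) (k : ℕ) :
    ∀ D ∈ L, D ∈ homogFields K n (k + 2) → D = 0 := by
  induction k with
  | zero => exact h
  | succ k ih =>
    exact fun D hD hDk => eq_zero_of_lie_constField hDk fun v =>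
      ih _ (L.lie_mem (hc v) hD) (lie_mem_homogFields (constField_mem v) hDk (by omega))

theorem lie_constField_linForm_smul_euler (v : Fin n → K) (η : Module.Dual K (Fin n → K)) :
    ⁅constField v, linForm η • euler K n⁆ = linField (η v • 1 + η.smulRight v) := by
  rw [lie_smul_right, constField_linForm, map_add, linField_smulRight, map_smul,
    ← linField_one, lie_constField_linField, C_smul, Module.End.one_apply]

theorem lie_linField_linForm_smul_euler (A : Module.End K (Fin n → K))
    (η : Module.Dual K (Fin n → K)) :
    ⁅linField A, linForm η • euler K n⁆ = linForm (η ∘ₗ A) • euler K n := by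
  rw [lie_smul_right, linField_linForm, ← linField_one, lie_linField_linField, Ring.lie_def,
    one_mul, mul_one, sub_self, map_zero, smul_zero, add_zero]

theorem lie_linForm_smul_euler_linForm_smul_euler (ξ η : Module.Dual K (Fin n → K)) :
    ⁅linForm ξ • euler K n, linForm η • euler K n⁆ = 0 := by
  have heuler (ξ : Module.Dual K (Fin n → K)) : euler K n (linForm ξ) = linForm ξ := by
    rw [euler_apply_of_isHomogeneous (linForm_isHomogeneous ξ), Nat.cast_one, one_smul]
  rw [lie_smul_right, lie_smul_left, lie_self, Derivation.smul_apply, heuler, heuler, smul_zero,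
    zero_sub, smul_neg, smul_smul, smul_eq_mul, mul_comm, add_neg_cancel]

/-- The projective subalgebra, spanned by the constant fields, the linear fields and the products
of linear forms with the Euler field. -/
noncomputable def projectiveSubalgebra (K : Type*) [Field K] (n : ℕ) :
    LieSubalgebra K (Vect K n) where
  carrier := {D | ∃ (v : Fin n → K) (A : Module.End K (Fin n → K))
    (ξ : Module.Dual K (Fin n → K)), D = constField v + linField A + linForm ξ • euler K n}
  add_mem' := by
    rintro _ _ ⟨v, A, ξ, rfl⟩ ⟨w, B, η, rfl⟩
    exact ⟨v + w, A + B, ξ + η, by simp only [map_add, add_smul]; abel⟩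
  zero_mem' := ⟨0, 0, 0, by simp⟩
  smul_mem' := by
    rintro a _ ⟨v, A, ξ, rfl⟩
    exact ⟨a • v, a • A, a • ξ, by simp only [map_smul, smul_add, smul_assoc]⟩
  lie_mem' := by
    rintro _ _ ⟨v, A, ξ, rfl⟩ ⟨w, B, η, rfl⟩
    refine ⟨B v - A w, ⁅B, A⁆ + (η v • 1 + η.smulRight v) - (ξ w • 1 + ξ.smulRight w),
      η ∘ₗ A - ξ ∘ₗ B, ?_⟩
    have hξw := lie_constField_linForm_smul_euler w ξ
    have hξB := lie_linField_linForm_smul_euler B ξ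
    rw [← lie_skew, neg_eq_iff_eq_neg] at hξw hξB
    rw [map_sub linForm, sub_smul (linForm _) _ (euler K n), map_sub linField,
      map_add linField, map_sub constField, vect_add_lie, vect_add_lie, vect_lie_add,
      vect_lie_add, vect_lie_add, vect_lie_add, vect_lie_add, vect_lie_add,
      lie_constField_constField, lie_constField_linField, lie_linField_constField,
      lie_linField_linField, lie_constField_linForm_smul_euler, lie_linField_linForm_smul_euler,
      lie_linForm_smul_euler_linForm_smul_euler, hξw, hξB]
    abel

theorem le_projectiveSubalgebra [CharZero K] {L : LieSubalgebra K (Vect K n)}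
    (hgr : IsGraded L.toSubmodule) (hc : ∀ v, constField v ∈ L)
    (h : ∀ D ∈ L, D ∈ homogFields K n 2 → D = 0) : L ≤ projectiveSubalgebra K n := by
  refine fun D hD => mem_of_homogComp_mem (M := (projectiveSubalgebra K n).toSubmodule) fun k => ?_
  match k with
  | 0 =>
    obtain ⟨v, hv⟩ := mem_homogFields_zero.1 (homogComp_mem 0 D)
    exact ⟨v, 0, 0, by simp [hv]⟩
  | 1 =>
    obtain ⟨A, hA⟩ := mem_homogFields_one.1 (homogComp_mem 1 D)
    exact ⟨0, A, 0, by simp [hA]⟩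
  | k + 2 =>
    rw [eq_zero_of_quadratic_eq_zero hc h k _ (hgr hD _) (homogComp_mem _ _)]
    exact Submodule.zero_mem _

theorem X_pow_smul_euler_mem (i : Fin n) (k : ℕ) :
    (X i ^ k : MvPolynomial (Fin n) K) • euler K n ∈ homogFields K n (k + 1) := by
  simpa using smul_mem_homogFields ((isHomogeneous_X K i).pow k) euler_mem_homogFields

theorem X_pow_smul_euler_ne_zero (i : Fin n) (k : ℕ) :
    (X i ^ k : MvPolynomial (Fin n) K) • euler K n ≠ 0 := by
  intro h
  simpa [X_ne_zero] using congrArg (fun D : Vect K n => D (X i)) h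

theorem X_sq_smul_euler_notMem_projectiveSubalgebra (i : Fin n) :
    (X i ^ 2 : MvPolynomial (Fin n) K) • euler K n ∉ projectiveSubalgebra K n := by
  rintro ⟨v, A, ξ, h⟩
  apply X_pow_smul_euler_ne_zero (K := K) i 2
  rw [← homogComp_of_mem (X_pow_smul_euler_mem i 2), h, map_add, map_add,
    homogComp_of_mem_ne (constField_mem v) (by norm_num),
    homogComp_of_mem_ne (linField_mem A) (by norm_num),
    homogComp_of_mem_ne (smul_mem_homogFields (linForm_isHomogeneous ξ) euler_mem_homogFields)
      (by norm_num), add_zero, add_zero]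

theorem exists_quadratic_of_isMaxSubalg [CharZero K] (hn : 0 < n)
    {L : LieSubalgebra K (Vect K n)} (hgr : IsGraded L.toSubmodule) (hmax : IsMaxSubalg K n L)
    (hc : ∀ v, constField v ∈ L) : ∃ D ∈ L, D ∈ homogFields K n 2 ∧ D ≠ 0 := by
  by_contra! h
  let i : Fin n := ⟨0, hn⟩
  rcases hmax _ (le_projectiveSubalgebra hgr hc h) with heq | htop
  · refine X_pow_smul_euler_ne_zero i 1 (h _ (heq ▸ ?_) (X_pow_smul_euler_mem i 1))
    exact ⟨0, 0, LinearMap.proj i, by simp [linForm_proj]⟩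
  · exact X_sq_smul_euler_notMem_projectiveSubalgebra i (htop ▸ LieSubalgebra.mem_top _)

end QuadraticNecessary

/-! ### Maximal subalgebras have scalar commutant -/

section CommutantNecessary

variable {K : Type*} [Field K] {n : ℕ}

/-- The value of a vector field at a point. -/
noncomputable def valueAt (x : Fin n → K) : Vect K n →ₗ[K] (Fin n → K) where
  toFun D i := eval x (D (X i))
  map_add' _ _ := funext fun _ => map_add (eval x) _ _
  map_smul' _ _ := funext fun _ => smul_eval _ _ _

@[simp] theorem valueAt_constField (x v : Fin n → K) : valueAt x (constField v) = v := by
  ext i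
  simp [valueAt]

theorem valueAt_smul (x : Fin n → K) (f : MvPolynomial (Fin n) K) (D : Vect K n) :
    valueAt x (f • D) = eval x f • valueAt x D := by
  ext i
  simp [valueAt]

/-- The extension of an endomorphism `J` of `Kⁿ` to vector fields, linear over the polynomials. -/
noncomputable def mapCoeffs (J : Module.End K (Fin n → K)) :
    Vect K n →ₗ[MvPolynomial (Fin n) K] Vect K n where
  toFun D := ∑ j, D (X j) • constField (J (Pi.single j 1))
  map_add' D D' := by simp only [Derivation.add_apply, add_smul, Finset.sum_add_distrib]
  map_smul' f D := by
    simp only [Derivation.smul_apply, smul_assoc, Finset.smul_sum, RingHom.id_apply]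

theorem mapCoeffs_apply (J : Module.End K (Fin n → K)) (D : Vect K n) :
    mapCoeffs J D = ∑ j, D (X j) • constField (J (Pi.single j 1)) := rfl

@[simp] theorem mapCoeffs_constField (J : Module.End K (Fin n → K)) (v : Fin n → K) :
    mapCoeffs J (constField v) = constField (J v) := by
  conv_rhs => rw [pi_eq_sum_univ' v]
  simp only [mapCoeffs_apply, constField_X, C_smul, map_sum, map_smul]

theorem mapCoeffs_mapCoeffs (A B : Module.End K (Fin n → K)) (D : Vect K n) :
    mapCoeffs A (mapCoeffs B D) = mapCoeffs (A * B) D := by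
  rw [mapCoeffs_apply B D, mapCoeffs_apply (A * B) D]
  simp only [map_sum, map_smul, mapCoeffs_constField, Module.End.mul_apply]

theorem mapCoeffs_sum_smul (A : Fin n → Module.End K (Fin n → K)) (v : Fin n → K) (D : Vect K n) :
    mapCoeffs (∑ i, v i • A i) D = ∑ i, v i • mapCoeffs (A i) D := by
  simp only [mapCoeffs_apply, LinearMap.sum_apply, LinearMap.smul_apply, map_sum, map_smul,
    Finset.smul_sum]
  rw [Finset.sum_comm]
  exact Finset.sum_congr rfl fun j _ => Finset.sum_congr rfl fun i _ => smul_comm _ _ _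

theorem mapCoeffs_const_smul (J : Module.End K (Fin n → K)) (a : K) (D : Vect K n) :
    mapCoeffs J (a • D) = a • mapCoeffs J D := by
  rw [← C_smul, map_smul, C_smul]

theorem mapCoeffs_mem_homogFields (J : Module.End K (Fin n → K)) {D : Vect K n} {k : ℕ}
    (hD : D ∈ homogFields K n k) : mapCoeffs J D ∈ homogFields K n k :=
  Submodule.sum_mem _ fun i _ => by
    simpa using smul_mem_homogFields (hD i) (constField_mem (J (Pi.single i 1)))

theorem valueAt_mapCoeffs (x : Fin n → K) (J : Module.End K (Fin n → K)) (D : Vect K n) :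
    valueAt x (mapCoeffs J D) = J (valueAt x D) := by
  rw [mapCoeffs_apply, map_sum, pi_eq_sum_univ' (valueAt x D), map_sum]
  refine Finset.sum_congr rfl fun i _ => ?_
  rw [valueAt_smul, valueAt_constField, map_smul]
  rfl

/-- The vector fields whose adjoint action commutes with the extension of `J`. -/
noncomputable def commutingFields (J : Module.End K (Fin n → K)) :
    LieSubalgebra K (Vect K n) where
  carrier := {D | ∀ Y, ⁅D, mapCoeffs J Y⁆ = mapCoeffs J ⁅D, Y⁆}
  add_mem' h1 h2 Y := by rw [vect_add_lie, h1, h2, vect_add_lie, map_add]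
  zero_mem' Y := by rw [vect_zero_lie, vect_zero_lie, map_zero]
  smul_mem' a D h Y := by rw [vect_smul_lie, vect_smul_lie, h, mapCoeffs_const_smul]
  lie_mem' {D D'} h1 h2 Y := by rw [vect_lie_lie, h2, h1, h1, h2, vect_lie_lie, map_sub]

theorem mem_commutingFields {J : Module.End K (Fin n → K)} {D : Vect K n}
    (h : ∀ v, ⁅D, constField (J v)⁆ = mapCoeffs J ⁅D, constField v⁆) :
    D ∈ commutingFields J := by
  intro Y
  have hsum (F : Fin n → Vect K n) : ⁅D, ∑ i, F i⁆ = ∑ i, ⁅D, F i⁆ :=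
    lie_sum (L := Vect K n) (M := Vect K n) _ _ _
  rw [eq_sum_smul_constField Y]
  simp only [map_sum, map_smul, hsum, lie_smul_right, mapCoeffs_constField, map_add, h]

theorem constField_mem_commutingFields (J : Module.End K (Fin n → K)) (v : Fin n → K) :
    constField v ∈ commutingFields J :=
  mem_commutingFields fun w => by simp

theorem lie_mapCoeffs_constField (J : Module.End K (Fin n → K)) (D : Vect K n)
    (v : Fin n → K) : ⁅mapCoeffs J D, constField v⁆ = mapCoeffs J ⁅D, constField v⁆ := by
  rw [← lie_skew, constField_mem_commutingFields J v D, ← map_neg, lie_skew]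

theorem mem_commutingFields_of_mem [CharZero K] {L : LieSubalgebra K (Vect K n)}
    (hc : ∀ v, constField v ∈ L) {J : Module.End K (Fin n → K)}
    (hJ : ∀ A ∈ linearPart L, Commute J A) (k : ℕ) :
    ∀ D ∈ L, D ∈ homogFields K n k → D ∈ commutingFields J := by
  induction k with
  | zero =>
    intro D _ hD
    obtain ⟨v, rfl⟩ := mem_homogFields_zero.1 hD
    exact constField_mem_commutingFields J v
  | succ k ih =>
    refine fun D hDL hD => mem_commutingFields fun v => ?_
    rcases k with _ | k
    · obtain ⟨A, rfl⟩ := mem_homogFields_one.1 hD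
      rw [lie_linField_constField, lie_linField_constField, map_neg, mapCoeffs_constField,
        ← Module.End.mul_apply, ← (hJ A hDL).eq, Module.End.mul_apply]
    · have hDu (u : Fin n → K) : ⁅D, constField u⁆ ∈ homogFields K n (k + 1) :=
        lie_mem_homogFields hD (constField_mem u) (by omega)
      refine sub_eq_zero.1 (eq_zero_of_lie_constField
        (Submodule.sub_mem _ (hDu (J v)) (mapCoeffs_mem_homogFields J (hDu v))) fun w => ?_)
      have hcomm (u : Fin n → K) :
          ⁅constField w, ⁅D, constField u⁆⁆ = ⁅⁅constField w, D⁆, constField u⁆ := by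
        rw [vect_lie_lie, lie_constField_constField, vect_lie_zero, sub_zero]
      have hwD := ih _ (L.lie_mem (hc w) hDL) (lie_mem_homogFields (constField_mem w) hD (by omega))
        (constField v)
      rw [vect_lie_sub, constField_mem_commutingFields J w, hcomm, hcomm, ← hwD,
        mapCoeffs_constField, sub_self]

/-- The product `x ↦ M x (D x)` of a vector field with a linear family `M` of operators. -/
noncomputable def opMul (M : (Fin n → K) →ₗ[K] Module.End K (Fin n → K)) (D : Vect K n) :
    Vect K n :=
  ∑ i, (X i : MvPolynomial (Fin n) K) • mapCoeffs (M (Pi.single i 1)) D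

theorem valueAt_opMul (M : (Fin n → K) →ₗ[K] Module.End K (Fin n → K)) (D : Vect K n)
    (x : Fin n → K) : valueAt x (opMul M D) = M x (valueAt x D) := by
  have hM := congrArg M (pi_eq_sum_univ' x)
  rw [map_sum] at hM
  simp only [hM, opMul, map_sum, map_smul, valueAt_smul, eval_X, valueAt_mapCoeffs,
    LinearMap.sum_apply, LinearMap.smul_apply]

theorem opMul_mem_homogFields (M : (Fin n → K) →ₗ[K] Module.End K (Fin n → K)) {D : Vect K n}
    {k : ℕ} (hD : D ∈ homogFields K n k) : opMul M D ∈ homogFields K n (k + 1) := by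
  rw [add_comm]
  exact Submodule.sum_mem _ fun i _ =>
    smul_mem_homogFields (isHomogeneous_X K i) (mapCoeffs_mem_homogFields _ hD)

theorem lie_opMul_constField (M : (Fin n → K) →ₗ[K] Module.End K (Fin n → K)) (D : Vect K n)
    (v : Fin n → K) :
    ⁅opMul M D, constField v⁆ = opMul M ⁅D, constField v⁆ - mapCoeffs (M v) D := by
  have hsum (F : Fin n → Vect K n) : ⁅∑ i, F i, constField v⁆ = ∑ i, ⁅F i, constField v⁆ :=
    sum_lie (L := Vect K n) (M := Vect K n) _ _ _
  have hM := congrArg M (pi_eq_sum_univ' v)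
  simp only [map_sum, map_smul] at hM
  simp only [opMul, hsum, lie_smul_left, constField_X, C_smul, lie_mapCoeffs_constField,
    Finset.sum_sub_distrib, hM, mapCoeffs_sum_smul]

theorem opMul_mem_commutingFields {J : Module.End K (Fin n → K)}
    {M : (Fin n → K) →ₗ[K] Module.End K (Fin n → K)} (hJM : ∀ x, Commute J (M x))
    (hM : ∀ x, M (J x) = J * M x) {D : Vect K n} (hD : D ∈ commutingFields J) :
    opMul M D ∈ commutingFields J := by
  have hJ (Y : Vect K n) : opMul M (mapCoeffs J Y) = mapCoeffs J (opMul M Y) := by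
    simp only [opMul, map_sum, map_smul, mapCoeffs_mapCoeffs, (hJM _).eq]
  refine mem_commutingFields fun v => ?_
  rw [lie_opMul_constField, lie_opMul_constField, ← mapCoeffs_constField, hD, hJ, hM, map_sub,
    mapCoeffs_mapCoeffs]

/-- The fields `x ↦ (M x) ^ k v` have these properties. -/
theorem exists_mem_commutingFields {J : Module.End K (Fin n → K)}
    {M : (Fin n → K) →ₗ[K] Module.End K (Fin n → K)} (hJM : ∀ x, Commute J (M x))
    (hM : ∀ x, M (J x) = J * M x) {v : Fin n → K} (hv : M v v = v) (k : ℕ) :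
    ∃ D ∈ commutingFields J, D ∈ homogFields K n k ∧ valueAt v D = v := by
  induction k with
  | zero => exact ⟨constField v, constField_mem_commutingFields J v, constField_mem v, by simp⟩
  | succ k ih =>
    obtain ⟨D, hDJ, hDk, hDv⟩ := ih
    exact ⟨opMul M D, opMul_mem_commutingFields hJM hM hDJ, opMul_mem_homogFields M hDk,
      by rw [valueAt_opMul, hDv, hv]⟩

theorem exists_eq_smul_one_of_commutingFields_eq_top {J : Module.End K (Fin n → K)}
    (h : commutingFields J = ⊤) : ∃ c : K, J = c • 1 := by
  rcases subsingleton_or_nontrivial (Fin n → K) with _ | _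
  · exact ⟨0, LinearMap.ext fun v => Subsingleton.elim _ _⟩
  obtain ⟨w, hw⟩ := exists_ne (0 : Fin n → K)
  obtain ⟨η, hη⟩ := Module.Projective.exists_dual_eq_one K hw
  refine ⟨η (J w), LinearMap.ext fun v => constField_injective (K := K) ?_⟩
  have hv : linForm η • constField v ∈ commutingFields J := h ▸ LieSubalgebra.mem_top _
  simpa [lie_smul_left, hη, C_smul] using (hv (constField w)).symm

section Schur

variable {V : Type*} [AddCommGroup V] [Module K V]

theorem ActsIrreducibly.eq_zero_of_commute {S : Set (Module.End K V)} (hS : ActsIrreducibly S)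
    {T : Module.End K V} (hT : ∀ A ∈ S, Commute T A) {u : V} (hu : u ≠ 0) (hTu : T u = 0) :
    T = 0 := by
  have hker : LinearMap.ker T = ⊥ ∨ LinearMap.ker T = ⊤ := hS _ fun A hA w hw => by
    rw [LinearMap.mem_ker, ← Module.End.mul_apply, (hT A hA).eq, Module.End.mul_apply,
      LinearMap.mem_ker.1 hw, map_zero]
  rcases hker with h | h
  · exact absurd ((Submodule.eq_bot_iff _).1 h u hTu) hu
  · exact LinearMap.ker_eq_top.1 h

theorem commute_of_mem_adjoin {S : Set (Module.End K V)} {J T : Module.End K V}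
    (hJ : ∀ A ∈ S, Commute J A) (hT : T ∈ Algebra.adjoin K {J}) : ∀ A ∈ S, Commute T A := by
  have hle : Algebra.adjoin K {J} ≤ Subalgebra.centralizer K S :=
    Algebra.adjoin_le (Set.singleton_subset_iff.2 fun A hA => (hJ A hA).eq.symm)
  exact fun A hA => (hle hT A hA).symm

theorem ActsIrreducibly.isDomain_adjoin [Nontrivial V] {S : Set (Module.End K V)}
    (hS : ActsIrreducibly S) {J : Module.End K V} (hJ : ∀ A ∈ S, Commute J A) :
    IsDomain (Algebra.adjoin K {J}) := by
  have : NoZeroDivisors (Algebra.adjoin K {J}) := by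
    refine ⟨fun {T U} hTU => or_iff_not_imp_right.2 fun hU => ?_⟩
    obtain ⟨u, hu⟩ := DFunLike.ne_iff.1 (Subtype.coe_ne_coe.2 hU)
    exact Subtype.ext (hS.eq_zero_of_commute (commute_of_mem_adjoin hJ T.2) hu
      (LinearMap.congr_fun (congrArg Subtype.val hTU) u))
  exact NoZeroDivisors.to_isDomain _

/-- `M` is a linear form over the field `K[J]`. -/
theorem ActsIrreducibly.exists_commute_of_commute [FiniteDimensional K V] {S : Set (Module.End K V)}
    (hS : ActsIrreducibly S) {J : Module.End K V} (hJ : ∀ A ∈ S, Commute J A) {v : V}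
    (hv : v ≠ 0) : ∃ M : V →ₗ[K] Module.End K V,
      (∀ x, Commute J (M x)) ∧ (∀ x, M (J x) = J * M x) ∧ M v = 1 := by
  have : Nontrivial V := ⟨v, 0, hv⟩
  have := hS.isDomain_adjoin hJ
  let R := Algebra.adjoin K {J}
  have : IsMulCommutative R := Algebra.isMulCommutative_adjoin K (by simp)
  let : Field R := fieldOfFiniteDimensional K R
  obtain ⟨φ, hφ⟩ := Module.Projective.exists_dual_eq_one R hv
  let J' : R := ⟨J, Algebra.self_mem_adjoin_singleton K J⟩
  refine ⟨R.val.toLinearMap ∘ₗ φ.restrictScalars K, fun x => ?_, fun x => ?_, ?_⟩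
  · exact congrArg Subtype.val (mul_comm J' (φ x))
  · exact congrArg Subtype.val (map_smul φ J' x)
  · exact congrArg Subtype.val hφ

end Schur

theorem hasScalarCommutant_of_isMaxSubalg [CharZero K] {L : LieSubalgebra K (Vect K n)}
    [FiniteDimensional K L] (hgr : IsGraded L.toSubmodule) (hmax : IsMaxSubalg K n L)
    (hc : ∀ v, constField v ∈ L)
    (hirr : ActsIrreducibly (linearPart L : Set (Module.End K (Fin n → K)))) :
    HasScalarCommutant (linearPart L : Set (Module.End K (Fin n → K))) := by
  intro J hJ
  rcases subsingleton_or_nontrivial (Fin n → K) with _ | _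
  · exact ⟨0, LinearMap.ext fun v => Subsingleton.elim _ _⟩
  obtain ⟨v, hv⟩ := exists_ne (0 : Fin n → K)
  have hle : L ≤ commutingFields J := fun D hD =>
    mem_of_homogComp_mem (M := (commutingFields J).toSubmodule) fun k =>
      mem_commutingFields_of_mem hc hJ k _ (hgr hD k) (homogComp_mem k D)
  refine exists_eq_smul_one_of_commutingFields_eq_top ((hmax _ hle).resolve_left fun hJL => ?_)
  obtain ⟨M, hJM, hM, hMv⟩ := hirr.exists_commute_of_commute hJ hv
  have : FiniteDimensional K L.toSubmodule := ‹_›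
  obtain ⟨N, hN⟩ := exists_forall_homogFields_eq_zero L.toSubmodule
  obtain ⟨D, hDJ, hDN, hDv⟩ := exists_mem_commutingFields hJM hM (v := v) (by simp [hMv]) N
  rw [hN N le_rfl D (hJL ▸ hDJ) hDN, map_zero] at hDv
  exact hv hDv.symm

end CommutantNecessary

/-! ### Irreducible linear Lie algebras containing an operator of rank one -/

section RankOne

attribute [local instance] LieRing.ofAssociativeRing LieAlgebra.ofAssociativeAlgebra

variable {K V : Type*} [Field K] [AddCommGroup V] [Module K V]

theorem eq_top_of_forall_apply_eq_zero [FiniteDimensional K V] {C : Submodule K (Module.Dual K V)}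
    (h : ∀ v : V, (∀ η ∈ C, η v = 0) → v = 0) : C = ⊤ := by
  have hC : C.dualCoannihilator = ⊥ := (Submodule.eq_bot_iff _).2 fun v hv =>
    h v fun η hη => (Submodule.mem_dualCoannihilator v).1 hv η hη
  rw [← Subspace.dualCoannihilator_dualAnnihilator_eq (W := C), hC,
    Submodule.dualAnnihilator_bot]

variable {g : LieSubalgebra K (Module.End K V)} {w : V} {ξ : Module.Dual K V}

theorem eq_top_of_forall_smulRight_mem [FiniteDimensional K V]
    (hirr : ActsIrreducibly (g : Set (Module.End K V))) (hw : w ≠ 0)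
    (h : ∀ η : Module.Dual K V, η.smulRight w ∈ g) : g = ⊤ := by
  let W : Submodule K V := ⨅ η : Module.Dual K V, g.toSubmodule.comap (LinearMap.smulRightₗ η)
  have mem_W {u : V} : u ∈ W ↔ ∀ η : Module.Dual K V, η.smulRight u ∈ g := by
    simp [W, Submodule.mem_iInf]
  have hW : W = ⊤ := by
    refine (hirr W fun A hA u hu => mem_W.2 fun η => ?_).resolve_left
      ((Submodule.ne_bot_iff _).2 ⟨w, mem_W.2 h, hw⟩)
    have hlie : η.smulRight (A u) = ⁅A, η.smulRight u⁆ + (η ∘ₗ A).smulRight u := by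
      ext v; simp [LieRing.of_associative_ring_bracket]
    exact hlie ▸ g.add_mem (g.lie_mem hA (mem_W.1 hu η)) (mem_W.1 hu _)
  refine eq_top_iff.2 fun A _ => ?_
  let b := Module.finBasis K V
  have hA : A = ∑ i, (b.coord i).smulRight (A (b i)) := b.ext fun i => by
    simp [LinearMap.sum_apply, Finsupp.single_apply]
  rw [hA]
  exact sum_mem fun i _ => mem_W.1 (hW ▸ Submodule.mem_top) _

theorem comp_smulRight_mem [CharZero K] (h : ξ.smulRight w ∈ g) (hξw : ξ w = 1)
    {η : Module.Dual K V} (hη : η.smulRight w ∈ g) {A : Module.End K V} (hA : A ∈ g) :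
    (η ∘ₗ A).smulRight w ∈ g := by
  have of_ξ {A : Module.End K V} (hA : A ∈ g) : (ξ ∘ₗ A).smulRight w ∈ g := by
    have hB := g.lie_mem h hA
    have heq : (ξ ∘ₗ A).smulRight w = (2⁻¹ : K) • (⁅ξ.smulRight w, A⁆ +
        ⁅ξ.smulRight w, ⁅ξ.smulRight w, A⁆⁆) + ξ (A w) • ξ.smulRight w := by
      ext v
      simp [LieRing.of_associative_ring_bracket, hξw, mul_comm]
      module
    rw [heq]
    exact g.add_mem (g.smul_mem _ (g.add_mem hB (g.lie_mem h hB))) (g.smul_mem _ h)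
  have heq : (η ∘ₗ A).smulRight w =
      (ξ ∘ₗ ⁅η.smulRight w, A⁆).smulRight w + ξ (A w) • η.smulRight w := by
    ext v
    simp [LieRing.of_associative_ring_bracket, hξw]
    module
  rw [heq]
  exact g.add_mem (of_ξ (g.lie_mem hη hA)) (g.smul_mem _ hη)

theorem eq_top_of_idempotent_mem [FiniteDimensional K V] [CharZero K]
    (hirr : ActsIrreducibly (g : Set (Module.End K V))) (h : ξ.smulRight w ∈ g)
    (hξw : ξ w = 1) : g = ⊤ := by
  let C : Submodule K (Module.Dual K V) := g.toSubmodule.comap (LinearMap.smulRightₗ.flip w)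
  have hbot : C.dualCoannihilator = ⊥ := by
    refine (hirr _ fun A hA u hu => ?_).resolve_right fun htop => ?_
    · rw [Submodule.mem_dualCoannihilator] at hu ⊢
      exact fun η hη => hu (η ∘ₗ A) (comp_smulRight_mem h hξw hη hA)
    · have hw : w ∈ C.dualCoannihilator := htop ▸ Submodule.mem_top
      exact one_ne_zero (hξw.symm.trans ((Submodule.mem_dualCoannihilator w).1 hw ξ h))
  have hC : C = ⊤ := eq_top_of_forall_apply_eq_zero fun v hv => by
    simpa [hbot] using (Submodule.mem_dualCoannihilator (Φ := C) v).2 hv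
  exact eq_top_of_forall_smulRight_mem hirr (fun hw : w = 0 => by simp [hw] at hξw)
    fun η => (hC ▸ Submodule.mem_top : η ∈ C)

theorem sum_lie_smulRight_comp {ι : Type*} [Fintype ι] (b : Module.Basis ι K V)
    {q : Module.End K V} (hq : IsIdempotentElem q) (hξw : ξ w = 1) :
    ∑ i, ⁅(b.coord i ∘ₗ q).smulRight w, ξ.smulRight (q (b i))⁆ =
      LinearMap.trace K V q • ξ.smulRight w - q := by
  classical
  have hqq (v : V) : q (q v) = q v := LinearMap.congr_fun hq v
  have htr : LinearMap.trace K V q = ∑ i, b.coord i (q (b i)) := by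
    rw [LinearMap.trace_eq_matrix_trace K b]
    simp [Matrix.trace, LinearMap.toMatrix_apply]
  ext v
  have hrepr : ∑ i, b.coord i (q v) • q (b i) = q v := by
    have h := congrArg q (b.sum_repr (q v))
    rw [map_sum, hqq] at h
    exact (Finset.sum_congr rfl fun i _ => (map_smul q _ _).symm).trans h
  have hterm (i : ι) : ⁅(b.coord i ∘ₗ q).smulRight w, ξ.smulRight (q (b i))⁆ v =
      b.coord i (q (b i)) • ξ v • w - b.coord i (q v) • q (b i) := by
    simp [LieRing.of_associative_ring_bracket, hqq, hξw, smul_comm (ξ v)]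
  rw [LinearMap.sum_apply, Finset.sum_congr rfl fun i _ => hterm i, Finset.sum_sub_distrib,
    hrepr, ← Finset.sum_smul, ← htr]
  rfl

/-- The brackets of the two families of operators of rank one produce `w ⊗ ξ`. -/
theorem eq_top_of_forall_ker_smulRight_mem [FiniteDimensional K V] [CharZero K]
    (hirr : ActsIrreducibly (g : Set (Module.End K V))) (h1 : (1 : Module.End K V) ∈ g)
    (hξw : ξ w = 1) (hleft : ∀ η : Module.Dual K V, η w = 0 → η.smulRight w ∈ g)
    (hright : ∀ u, ξ u = 0 → ξ.smulRight u ∈ g) : g = ⊤ := by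
  let b := Module.finBasis K V
  let q : Module.End K V := 1 - ξ.smulRight w
  have hq (v : V) : q v = v - ξ v • w := by simp [q]
  have : Nontrivial V := ⟨w, 0, fun hw : w = 0 => by simp [hw] at hξw⟩
  have hn : (Module.finrank K V : K) ≠ 0 := by exact_mod_cast Module.finrank_pos.ne'
  have htr : LinearMap.trace K V q = Module.finrank K V - 1 := by
    simp [q, LinearMap.trace_smulRight, hξw]
  have hmem : LinearMap.trace K V q • ξ.smulRight w - q ∈ g := by
    rw [← sum_lie_smulRight_comp b (LinearMap.ext fun v => by simp [hq, hξw]) hξw]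
    exact sum_mem fun i _ => g.lie_mem (hleft _ (by simp [hq, hξw])) (hright _ (by simp [hq, hξw]))
  refine eq_top_of_idempotent_mem hirr (ξ := ξ) (w := w) ?_ hξw
  have heq : (Module.finrank K V : K) • ξ.smulRight w =
      LinearMap.trace K V q • ξ.smulRight w - q + 1 := by
    rw [htr]
    ext v
    simp [hq]
    module
  rw [← inv_smul_smul₀ hn (ξ.smulRight w), heq]
  exact g.smul_mem _ (g.add_mem hmem h1)

end RankOne

/-! ### Hyperbolic frames -/

section Frame

attribute [local instance] LieRing.ofAssociativeRing LieAlgebra.ofAssociativeAlgebra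

/-- A pair of vectors `w, w'` and a pair of forms `ξ, ξ'` spanning dual planes, indexed so that
`w ⊗ ξ` and `w' ⊗ ξ'` are nilpotent. They generate a Lie algebra isomorphic to `sl₂`. -/
structure Frame (K V : Type*) [Field K] [AddCommGroup V] [Module K V] where
  w : V
  w' : V
  ξ : Module.Dual K V
  ξ' : Module.Dual K V
  ξ_w : ξ w = 0
  ξ_w' : ξ w' = 1
  ξ'_w : ξ' w = 1
  ξ'_w' : ξ' w' = 0

namespace Frame

attribute [simp] ξ_w ξ_w' ξ'_w ξ'_w'

variable {K V : Type*} [Field K] [AddCommGroup V] [Module K V] (F : Frame K V)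

/-- The projection along the plane spanned by `w, w'` onto the common kernel of `ξ, ξ'`. -/
def proj : Module.End K V := 1 - F.ξ'.smulRight F.w - F.ξ.smulRight F.w'

theorem proj_apply (v : V) : F.proj v = v - F.ξ' v • F.w - F.ξ v • F.w' := by simp [proj]

theorem eq_add_proj (v : V) : v = F.ξ' v • F.w + F.ξ v • F.w' + F.proj v := by
  rw [proj_apply]; abel

/-- The semisimple element `w ⊗ ξ' - w' ⊗ ξ` of the `sl₂` of the frame. -/
def semisimple : Module.End K V := F.ξ'.smulRight F.w - F.ξ.smulRight F.w'

@[simp] theorem proj_w : F.proj F.w = 0 := by simp [proj_apply]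

@[simp] theorem proj_w' : F.proj F.w' = 0 := by simp [proj_apply]

@[simp] theorem ξ_proj (v : V) : F.ξ (F.proj v) = 0 := by simp [proj_apply]

@[simp] theorem ξ'_proj (v : V) : F.ξ' (F.proj v) = 0 := by simp [proj_apply]

theorem proj_eq_self {v : V} (h : F.ξ v = 0) (h' : F.ξ' v = 0) : F.proj v = v := by
  simp [proj_apply, h, h']

theorem comp_proj_eq_self {η : Module.Dual K V} (h : η F.w = 0) (h' : η F.w' = 0) :
    η ∘ₗ F.proj = η := by
  ext v; simp [proj_apply, h, h']

@[simp] theorem proj_proj (v : V) : F.proj (F.proj v) = F.proj v :=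
  F.proj_eq_self (F.ξ_proj v) (F.ξ'_proj v)

theorem trace_eq [FiniteDimensional K V] (A : Module.End K V) :
    LinearMap.trace K V A =
      F.ξ' (A F.w) + F.ξ (A F.w') + LinearMap.trace K V (F.proj * A * F.proj) := by
  have hA : A = F.ξ'.smulRight (A F.w) + F.ξ.smulRight (A F.w') + A * F.proj := by
    ext v; simp [proj_apply]
  have hproj : F.proj * F.proj = F.proj := LinearMap.ext F.proj_proj
  conv_lhs => rw [hA]
  rw [map_add, map_add, LinearMap.trace_smulRight, LinearMap.trace_smulRight, mul_assoc,
    LinearMap.trace_mul_comm K F.proj, mul_assoc, hproj]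

/-- The components of `A` of `ad F.semisimple`-weights `-2, 1, -1, 0, 2`. -/
def weightComponent (A : Module.End K V) : Fin 5 → Module.End K V :=
  ![F.ξ (A F.w) • F.ξ'.smulRight F.w',
    (F.ξ' ∘ₗ A ∘ₗ F.proj).smulRight F.w + F.ξ.smulRight (F.proj (A F.w')),
    (F.ξ ∘ₗ A ∘ₗ F.proj).smulRight F.w' + F.ξ'.smulRight (F.proj (A F.w)),
    F.ξ' (A F.w) • F.ξ'.smulRight F.w + F.ξ (A F.w') • F.ξ.smulRight F.w' + F.proj * A * F.proj,
    F.ξ' (A F.w') • F.ξ.smulRight F.w]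

theorem sum_weightComponent (A : Module.End K V) : ∑ k, F.weightComponent A k = A := by
  ext v
  conv_rhs => rw [F.eq_add_proj v, map_add, map_add, map_smul, map_smul]
  simp only [Fin.sum_univ_five, weightComponent, Matrix.cons_val, LinearMap.add_apply,
    LinearMap.smul_apply, LinearMap.smulRight_apply, Module.End.mul_apply, LinearMap.comp_apply,
    F.proj_apply (A _)]
  module

theorem lie_semisimple_weightComponent (A : Module.End K V) (k : Fin 5) :
    ⁅F.semisimple, F.weightComponent A k⁆ =
      ((![-2, 1, -1, 0, 2] : Fin 5 → ℤ) k : K) • F.weightComponent A k := by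
  ext v
  fin_cases k <;>
  simp [LieRing.of_associative_ring_bracket, weightComponent, semisimple] <;> module

variable {F} {g : LieSubalgebra K (Module.End K V)}

theorem weightComponent_mem [CharZero K] (hH : F.semisimple ∈ g) {A : Module.End K V}
    (hA : A ∈ g) (k : Fin 5) : F.weightComponent A k ∈ g := by
  have hweight : Function.Injective (![-2, 1, -1, 0, 2] : Fin 5 → ℤ) := by decide
  exact mem_of_sum_eigenvectors_mem (LieAlgebra.ad K (Module.End K V) F.semisimple) g.toSubmodule
    (fun B hB => g.lie_mem hH hB) Finset.univ _ ((Int.cast_injective.comp hweight).injOn) _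
    (fun k _ => F.lie_semisimple_weightComponent A k)
    (by rwa [F.sum_weightComponent]) k (Finset.mem_univ k)

variable (F g) in
/-- `g` contains the nilpotents `w ⊗ ξ` and `w' ⊗ ξ'` of the frame, hence its whole `sl₂`. -/
structure Sl2Mem : Prop where
  raising_mem : F.ξ.smulRight F.w ∈ g
  lowering_mem : F.ξ'.smulRight F.w' ∈ g

theorem Sl2Mem.semisimple_mem (hF : F.Sl2Mem g) : F.semisimple ∈ g := by
  convert g.lie_mem hF.raising_mem hF.lowering_mem using 1
  ext v; simp [LieRing.of_associative_ring_bracket, semisimple]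

variable (F g) in
/-- The part of `g` of weight one: the pairs `(η, u)` such that `w ⊗ η + u ⊗ ξ` belongs to `g`,
where `η` vanishes on `w, w'` and `u` is killed by `ξ, ξ'`. -/
def weightOnePairs : Submodule K (Module.Dual K V × V) :=
  (LinearMap.ker (Module.Dual.eval K V F.w) ⊓ LinearMap.ker (Module.Dual.eval K V F.w')).prod
      (LinearMap.ker F.ξ ⊓ LinearMap.ker F.ξ') ⊓
    g.toSubmodule.comap ((LinearMap.smulRightₗ.flip F.w).coprod (LinearMap.smulRightₗ F.ξ))

variable {η : Module.Dual K V} {u : V}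

theorem mem_weightOnePairs : (η, u) ∈ F.weightOnePairs g ↔
    ((η F.w = 0 ∧ η F.w' = 0) ∧ F.ξ u = 0 ∧ F.ξ' u = 0) ∧
      η.smulRight F.w + F.ξ.smulRight u ∈ g := Iff.rfl

namespace Sl2Mem

theorem lower_mem (hF : F.Sl2Mem g) (hT : (η, u) ∈ F.weightOnePairs g) :
    η.smulRight F.w' - F.ξ'.smulRight u ∈ g := by
  obtain ⟨⟨⟨-, hw'⟩, -, hξ'⟩, hg⟩ := mem_weightOnePairs.1 hT
  convert g.lie_mem hF.lowering_mem hg using 1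
  ext v; simp [LieRing.of_associative_ring_bracket, hw', hξ']

theorem mem_weightOnePairs_of_lower_mem (hF : F.Sl2Mem g) (hη : η F.w = 0 ∧ η F.w' = 0)
    (hu : F.ξ u = 0 ∧ F.ξ' u = 0) (hg : η.smulRight F.w' - F.ξ'.smulRight u ∈ g) :
    (η, u) ∈ F.weightOnePairs g := by
  refine mem_weightOnePairs.2 ⟨⟨hη, hu⟩, ?_⟩
  convert g.lie_mem hF.raising_mem hg using 1
  ext v; simp [LieRing.of_associative_ring_bracket, hη, hu]

/-- A double bracket of elements of weights `1, -1, 1`. -/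
theorem cubic_mem (hF : F.Sl2Mem g) {η₁ η₂ η₃ : Module.Dual K V} {u₁ u₂ u₃ : V}
    (h₁ : (η₁, u₁) ∈ F.weightOnePairs g) (h₂ : (η₂, u₂) ∈ F.weightOnePairs g)
    (h₃ : (η₃, u₃) ∈ F.weightOnePairs g) :
    ((0 : Module.Dual K V), (η₂ u₃ + η₃ u₂) • u₁ + (η₁ u₃ + η₃ u₁) • u₂ +
      (η₁ u₂ + η₂ u₁) • u₃) ∈ F.weightOnePairs g := by
  have hlower := hF.lower_mem h₂
  obtain ⟨⟨⟨hw₁, hw₁'⟩, hξ₁, hξ₁'⟩, hg₁⟩ := mem_weightOnePairs.1 h₁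
  obtain ⟨⟨⟨hw₂, -⟩, hξ₂, hξ₂'⟩, hg₂⟩ := mem_weightOnePairs.1 h₂
  obtain ⟨⟨⟨hw₃, hw₃'⟩, hξ₃, hξ₃'⟩, hg₃⟩ := mem_weightOnePairs.1 h₃
  refine mem_weightOnePairs.2
    ⟨⟨by simp, by simp [hξ₁, hξ₂, hξ₃], by simp [hξ₁', hξ₂', hξ₃']⟩, ?_⟩
  convert g.add_mem
    (g.add_mem (g.lie_mem (g.lie_mem hg₁ hlower) hg₃) (g.smul_mem (η₁ u₂) hg₃))
    (g.add_mem (g.smul_mem (η₃ u₁) hg₂) (g.smul_mem (η₃ u₂) hg₁)) using 1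
  ext v
  simp [LieRing.of_associative_ring_bracket, hw₁, hw₁', hξ₁, hξ₁', hw₂, hξ₂, hw₃, hw₃',
    hξ₃, hξ₃']
  module

variable [CharZero K] {A : Module.End K V}

theorem weightOne_mem (hF : F.Sl2Mem g) (hA : A ∈ g) :
    (F.ξ' ∘ₗ A ∘ₗ F.proj, F.proj (A F.w')) ∈ F.weightOnePairs g :=
  mem_weightOnePairs.2 ⟨⟨by simp, by simp⟩, weightComponent_mem hF.semisimple_mem hA 1⟩

theorem weightNegOne_mem (hF : F.Sl2Mem g) (hA : A ∈ g) :
    (F.ξ ∘ₗ A ∘ₗ F.proj, -F.proj (A F.w)) ∈ F.weightOnePairs g := by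
  refine hF.mem_weightOnePairs_of_lower_mem (by simp) (by simp) ?_
  convert weightComponent_mem hF.semisimple_mem hA 2 using 1
  ext v; simp [weightComponent]

theorem weightZero_mem (hF : F.Sl2Mem g) (hA : A ∈ g) (hT : (η, u) ∈ F.weightOnePairs g) :
    (F.ξ' (A F.w) • η - η ∘ₗ (F.proj * A * F.proj), F.proj (A u) - F.ξ (A F.w') • u) ∈
      F.weightOnePairs g := by
  obtain ⟨⟨⟨hw, hw'⟩, hξ, hξ'⟩, hg⟩ := mem_weightOnePairs.1 hT
  refine mem_weightOnePairs.2 ⟨⟨by simp [hw, hw'], by simp [hξ, hξ']⟩, ?_⟩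
  convert g.lie_mem (weightComponent_mem hF.semisimple_mem hA 3) hg using 1
  ext v
  simp [LieRing.of_associative_ring_bracket, weightComponent, hw, hw', hξ, hξ',
    F.proj_eq_self hξ hξ']
  module

theorem exists_form (hF : F.Sl2Mem g) (hirr : ActsIrreducibly (g : Set (Module.End K V)))
    (v : V) : ∃ η, (η, F.proj v) ∈ F.weightOnePairs g := by
  let W : Submodule K V := ((F.weightOnePairs g).map (LinearMap.snd K _ _)).comap F.proj
  have mem_W (v : V) : v ∈ W ↔ ∃ η, (η, F.proj v) ∈ F.weightOnePairs g := by simp [W]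
  have hW : W = ⊤ := by
    have hw : F.w ∈ W := (mem_W _).2 ⟨0, by rw [F.proj_w]; exact zero_mem _⟩
    refine (hirr W fun A hA u hu => ?_).resolve_left
      ((Submodule.ne_bot_iff _).2 ⟨F.w, hw, fun hw => ?_⟩)
    · obtain ⟨η, hη⟩ := (mem_W u).1 hu
      have hmem := add_mem (add_mem (hF.weightZero_mem hA hη)
        ((F.weightOnePairs g).smul_mem (F.ξ (A F.w')) hη))
        (add_mem ((F.weightOnePairs g).smul_mem (F.ξ u) (hF.weightOne_mem hA))
          ((F.weightOnePairs g).smul_mem (-F.ξ' u) (hF.weightNegOne_mem hA)))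
      refine (mem_W _).2 ⟨_, (congrArg (fun x => (_, x) ∈ F.weightOnePairs g) ?_).mpr hmem⟩
      simp only [Prod.snd_add, Prod.smul_snd]
      conv_lhs => rw [F.eq_add_proj u]
      simp only [map_add, map_smul]
      module
    · simpa [hw] using F.ξ'_w
  exact (mem_W v).1 (hW ▸ Submodule.mem_top)

theorem eq_zero_of_forall_form_eq_zero (hF : F.Sl2Mem g)
    (hirr : ActsIrreducibly (g : Set (Module.End K V))) {v : V} (hξ : F.ξ v = 0)
    (hξ' : F.ξ' v = 0) (hv : ∀ η u, (η, u) ∈ F.weightOnePairs g → η v = 0) : v = 0 := by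
  let W : Submodule K V := LinearMap.ker F.ξ ⊓ LinearMap.ker F.ξ' ⊓
    ((F.weightOnePairs g).map (LinearMap.fst K _ _)).dualCoannihilator
  have mem_W (v : V) : v ∈ W ↔ (F.ξ v = 0 ∧ F.ξ' v = 0) ∧
      ∀ η u, (η, u) ∈ F.weightOnePairs g → η v = 0 := by
    simp [W, Submodule.mem_dualCoannihilator]
  have hW : W = ⊥ := by
    refine (hirr W fun A hA u hu => ?_).resolve_right fun htop => ?_
    · obtain ⟨⟨hξ, hξ'⟩, hu⟩ := (mem_W u).1 hu
      have hproj : F.proj u = u := F.proj_eq_self hξ hξ'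
      have hξA : F.ξ (A u) = 0 := by simpa [hproj] using hu _ _ (hF.weightNegOne_mem hA)
      have hξ'A : F.ξ' (A u) = 0 := by simpa [hproj] using hu _ _ (hF.weightOne_mem hA)
      refine (mem_W _).2 ⟨⟨hξA, hξ'A⟩, fun η v hη => ?_⟩
      simpa [hproj, hu η v hη, F.proj_eq_self hξA hξ'A] using hu _ _ (hF.weightZero_mem hA hη)
    · simpa using ((mem_W F.w).1 (htop ▸ Submodule.mem_top)).1.2
  simpa [hW] using (mem_W v).2 ⟨⟨hξ, hξ'⟩, hv⟩

variable [FiniteDimensional K V]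

theorem eq_top_of_split (hF : F.Sl2Mem g) (hirr : ActsIrreducibly (g : Set (Module.End K V)))
    (h1 : (1 : Module.End K V) ∈ g)
    (hsplit : ∀ v, ((0 : Module.Dual K V), F.proj v) ∈ F.weightOnePairs g) : g = ⊤ := by
  let C : Submodule K (Module.Dual K V) :=
    (F.weightOnePairs g).comap (LinearMap.inl K _ V ∘ₗ Module.Dual.transpose F.proj)
  have mem_C (η : Module.Dual K V) : η ∈ C ↔ (η ∘ₗ F.proj, (0 : V)) ∈ F.weightOnePairs g :=
    Iff.rfl
  have hC : C = ⊤ := by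
    refine eq_top_of_forall_apply_eq_zero fun v hv => hF.eq_zero_of_forall_form_eq_zero hirr
      (hv F.ξ ((mem_C _).2 ?_)) (hv F.ξ' ((mem_C _).2 ?_)) fun η u hu => hv η ((mem_C _).2 ?_)
    · rw [show F.ξ ∘ₗ F.proj = 0 from LinearMap.ext F.ξ_proj]; exact zero_mem _
    · rw [show F.ξ' ∘ₗ F.proj = 0 from LinearMap.ext F.ξ'_proj]; exact zero_mem _
    · obtain ⟨⟨⟨hw, hw'⟩, hξ, hξ'⟩, -⟩ := mem_weightOnePairs.1 hu
      rw [F.comp_proj_eq_self hw hw']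
      simpa [F.proj_eq_self hξ hξ'] using sub_mem hu (hsplit u)
  refine eq_top_of_forall_ker_smulRight_mem hirr h1 F.ξ'_w (fun η hη => ?_) fun u hu => ?_
  · have hproj := (mem_weightOnePairs.1 ((mem_C η).1 (hC ▸ Submodule.mem_top))).2
    convert g.add_mem (g.smul_mem (η F.w') hF.raising_mem) hproj using 1
    ext v
    conv_lhs => rw [LinearMap.smulRight_apply, F.eq_add_proj v, map_add, map_add, map_smul,
      map_smul, hη]
    simp
    module
  · convert g.sub_mem (g.smul_mem (F.ξ u) hF.lowering_mem) (hF.lower_mem (hsplit u)) using 1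
    ext v
    conv_lhs => rw [LinearMap.smulRight_apply, F.eq_add_proj u, hu]
    simp
    module

/-- `η u ≠ 0` makes `(0, u)` a multiple of the cubic expression in `(η, u)`, and the cubic
expression with `(0, u)` then splits off every other pair. -/
theorem eq_top_of_apply_ne_zero (hF : F.Sl2Mem g)
    (hirr : ActsIrreducibly (g : Set (Module.End K V))) (h1 : (1 : Module.End K V) ∈ g)
    (hT : (η, u) ∈ F.weightOnePairs g) (hne : η u ≠ 0) : g = ⊤ := by
  have hu : ((0 : Module.Dual K V), u) ∈ F.weightOnePairs g := by
    have hmem := hF.cubic_mem hT hT hT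
    rw [← (F.weightOnePairs g).smul_mem_iff (mul_ne_zero (by norm_num) hne : 6 * η u ≠ 0)]
    convert hmem using 1
    refine Prod.ext (by simp) ?_
    simp only [Prod.smul_snd]
    module
  refine hF.eq_top_of_split hirr h1 fun v => ?_
  obtain ⟨θ, hθ⟩ := hF.exists_form hirr v
  rw [← (F.weightOnePairs g).smul_mem_iff hne]
  convert sub_mem (hF.cubic_mem hu hθ hT)
    ((F.weightOnePairs g).smul_mem (θ u + (η (F.proj v) + θ u)) hu) using 1
  refine Prod.ext (by simp) ?_
  simp only [Prod.smul_snd, Prod.snd_sub, LinearMap.zero_apply]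
  module

end Sl2Mem
end Frame

end Frame

section IsotropicFrame

attribute [local instance] LieRing.ofAssociativeRing LieAlgebra.ofAssociativeAlgebra

variable {K V : Type*} [Field K] [AddCommGroup V] [Module K V]

theorem exists_linearMap_mem_of_forall_exists_mem {M N : Type*} [AddCommGroup M] [Module K M]
    [AddCommGroup N] [Module K N] {T : Submodule K (M × N)} {p : V →ₗ[K] N}
    (h : ∀ v, ∃ x, (x, p v) ∈ T) : ∃ φ : V →ₗ[K] M, ∀ v, (φ v, p v) ∈ T := by
  choose f hf using h
  let b := Module.Basis.ofVectorSpace K V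
  let φ : V →ₗ[K] M := b.constr K (f ∘ b)
  have hle : ⊤ ≤ T.comap (φ.prod p) := by
    rw [← b.span_eq, Submodule.span_le]
    rintro _ ⟨i, rfl⟩
    change (φ (b i), p (b i)) ∈ T
    rw [b.constr_basis]
    exact hf _
  exact ⟨φ, fun v => hle Submodule.mem_top⟩

theorem trace_eq_zero_of_skew [FiniteDimensional K V] [CharZero K] {Ω : V →ₗ[K] Module.Dual K V}
    (hΩ : Function.Injective Ω) {Q : Module.End K V} (hQ : ∀ v, Ω (Q v) = -(Ω v ∘ₗ Q)) :
    LinearMap.trace K V Q = 0 := by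
  let e : V ≃ₗ[K] Module.Dual K V :=
    LinearMap.linearEquivOfInjective Ω hΩ Subspace.dual_finrank_eq.symm
  have hconj : e.conj Q = (-1 : K) • Module.Dual.transpose Q := by
    refine LinearMap.ext fun η => ?_
    obtain ⟨v, rfl⟩ := e.surjective η
    rw [LinearEquiv.conj_apply_apply, LinearEquiv.symm_apply_apply, LinearMap.smul_apply,
      neg_one_smul]
    exact hQ v
  have htrace : LinearMap.trace K V Q = -LinearMap.trace K V Q := by
    conv_lhs => rw [← LinearMap.trace_conj' Q e, hconj, map_smul,
      LinearMap.trace_transpose', neg_one_smul]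
  exact self_eq_neg.1 htrace

namespace Frame.Sl2Mem

variable [CharZero K] {F : Frame K V} {g : LieSubalgebra K (Module.End K V)}
  {η θ : Module.Dual K V} {u v : V}

omit [CharZero K] in
theorem apply_add_apply_eq_zero (hiso : ∀ η u, (η, u) ∈ F.weightOnePairs g → η u = 0)
    (h₁ : (η, u) ∈ F.weightOnePairs g) (h₂ : (θ, v) ∈ F.weightOnePairs g) : η v + θ u = 0 := by
  simpa [hiso _ _ h₁, hiso _ _ h₂, add_comm] using
    hiso (η + θ) (u + v) (add_mem h₁ h₂)

omit [CharZero K] in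
theorem apply_proj (h : (η, u) ∈ F.weightOnePairs g) (v : V) : η (F.proj v) = η v :=
  LinearMap.congr_fun (F.comp_proj_eq_self h.1.1.1 h.1.1.2) v

/-- Invariance of the skew form `((η, u), (θ, v)) ↦ η v` under the weight zero part of `A`. -/
theorem mul_apply_eq (hF : F.Sl2Mem g) (hiso : ∀ η u, (η, u) ∈ F.weightOnePairs g → η u = 0)
    {A : Module.End K V} (hA : A ∈ g) (h₁ : (η, u) ∈ F.weightOnePairs g)
    (h₂ : (θ, v) ∈ F.weightOnePairs g) :
    (F.ξ' (A F.w) + F.ξ (A F.w')) * η v = η (A v) - θ (A u) := by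
  have hinv := apply_add_apply_eq_zero hiso (hF.weightZero_mem hA h₁) h₂
  have hskew := apply_add_apply_eq_zero hiso h₁ h₂
  simp only [LinearMap.sub_apply, LinearMap.smul_apply, LinearMap.comp_apply, smul_eq_mul,
    map_sub, map_smul, Module.End.mul_apply, apply_proj h₁, apply_proj h₂,
    F.proj_eq_self h₂.1.2.1 h₂.1.2.2] at hinv
  linear_combination hinv + F.ξ (A F.w') * hskew

variable {X : V → Module.End K V}

theorem apply_eq_ξ_apply (hF : F.Sl2Mem g)
    (hiso : ∀ η u, (η, u) ∈ F.weightOnePairs g → η u = 0) (hX : ∀ v, X v ∈ g)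
    (hXsymm : ∀ u v, X u v = X v u) (h₁ : (η, u) ∈ F.weightOnePairs g) (v : V) :
    η (X F.w v) = F.ξ (X v u) := by
  have h := apply_add_apply_eq_zero hiso (hF.weightNegOne_mem (hX v)) h₁
  simp only [LinearMap.comp_apply, map_neg, F.proj_eq_self h₁.1.2.1 h₁.1.2.2, apply_proj h₁,
    hXsymm v F.w] at h
  linear_combination -h

theorem apply_comm (hF : F.Sl2Mem g) (hiso : ∀ η u, (η, u) ∈ F.weightOnePairs g → η u = 0)
    (hX : ∀ v, X v ∈ g) (hXsymm : ∀ u v, X u v = X v u) (h₁ : (η, u) ∈ F.weightOnePairs g)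
    (h₂ : (θ, v) ∈ F.weightOnePairs g) : η (X F.w v) = θ (X F.w u) := by
  rw [hF.apply_eq_ξ_apply hiso hX hXsymm h₁, hF.apply_eq_ξ_apply hiso hX hXsymm h₂, hXsymm]

theorem ξ'_apply_add_ξ_apply_eq_zero (hF : F.Sl2Mem g)
    (hirr : ActsIrreducibly (g : Set (Module.End K V)))
    (hiso : ∀ η u, (η, u) ∈ F.weightOnePairs g → η u = 0) (hproj : F.proj ≠ 0)
    (hX : ∀ v, X v ∈ g) (hXsymm : ∀ u v, X u v = X v u) :
    F.ξ' (X F.w F.w) + F.ξ (X F.w F.w') = 0 := by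
  obtain ⟨v, hv⟩ := DFunLike.ne_iff.1 hproj
  by_contra hne
  refine hv (hF.eq_zero_of_forall_form_eq_zero hirr (F.ξ_proj v) (F.ξ'_proj v) fun η u hu => ?_)
  obtain ⟨θ, hθ⟩ := hF.exists_form hirr v
  have h := hF.mul_apply_eq hiso (hX F.w) hu hθ
  rw [hF.apply_comm hiso hX hXsymm hu hθ, sub_self] at h
  exact (mul_eq_zero.1 h).resolve_left hne

/-- A linear choice `φ` of the pairs extends to a symplectic form on `V`, with respect to which
the middle block of `X w` is skew. -/
theorem trace_proj_mul_mul_proj_eq_zero [FiniteDimensional K V] (hF : F.Sl2Mem g)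
    (hirr : ActsIrreducibly (g : Set (Module.End K V)))
    (hiso : ∀ η u, (η, u) ∈ F.weightOnePairs g → η u = 0)
    (hX : ∀ v, X v ∈ g) (hXsymm : ∀ u v, X u v = X v u) :
    LinearMap.trace K V (F.proj * X F.w * F.proj) = 0 := by
  obtain ⟨φ, hφ⟩ := exists_linearMap_mem_of_forall_exists_mem fun v => hF.exists_form hirr v
  have hw (v : V) : φ v F.w = 0 := (hφ v).1.1.1
  have hw' (v : V) : φ v F.w' = 0 := (hφ v).1.1.2
  let Ω : V →ₗ[K] Module.Dual K V := φ + F.ξ'.smulRight F.ξ - F.ξ.smulRight F.ξ'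
  have hΩ (v u : V) : Ω v u = φ v u + F.ξ' v * F.ξ u - F.ξ v * F.ξ' u := rfl
  refine trace_eq_zero_of_skew (Ω := Ω) ?_ fun v => LinearMap.ext fun u => ?_
  · rw [← LinearMap.ker_eq_bot, LinearMap.ker_eq_bot']
    intro v hv
    have hξ' : F.ξ' v = 0 := by simpa [hΩ, hw'] using LinearMap.congr_fun hv F.w'
    have hξ : F.ξ v = 0 := by simpa [hΩ, hw] using LinearMap.congr_fun hv F.w
    have hφv : φ v = 0 := LinearMap.ext fun u => by
      simpa [hΩ, hξ, hξ'] using LinearMap.congr_fun hv u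
    refine hF.eq_zero_of_forall_form_eq_zero hirr hξ hξ' fun η u hu => ?_
    simpa [hφv, F.proj_eq_self hξ hξ'] using apply_add_apply_eq_zero hiso hu (hφ v)
  · let Q := F.proj * X F.w * F.proj
    have hskew : φ (Q v) u + φ u (Q v) = 0 := by
      have h := apply_add_apply_eq_zero hiso (hφ (Q v)) (hφ u)
      rwa [apply_proj (hφ (Q v)), apply_proj (hφ u)] at h
    have hsymm : φ u (Q v) = φ v (Q u) := by
      simpa [Q, apply_proj (hφ _)] using hF.apply_comm hiso hX hXsymm (hφ u) (hφ v)
    have hgoal : φ (Q v) u = -φ v (Q u) := by linear_combination hskew - hsymm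
    simpa [hΩ, Q] using hgoal

theorem trace_eq_zero [FiniteDimensional K V] (hF : F.Sl2Mem g)
    (hirr : ActsIrreducibly (g : Set (Module.End K V)))
    (hiso : ∀ η u, (η, u) ∈ F.weightOnePairs g → η u = 0) (hproj : F.proj ≠ 0)
    (hX : ∀ v, X v ∈ g) (hXsymm : ∀ u v, X u v = X v u) :
    LinearMap.trace K V (X F.w) = 0 := by
  rw [F.trace_eq, hF.trace_proj_mul_mul_proj_eq_zero hirr hiso hX hXsymm, add_zero]
  exact hF.ξ'_apply_add_ξ_apply_eq_zero hirr hiso hproj hX hXsymm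

end Frame.Sl2Mem

end IsotropicFrame

section RankOneMem

attribute [local instance] LieRing.ofAssociativeRing LieAlgebra.ofAssociativeAlgebra

variable {K V : Type*} [Field K] [AddCommGroup V] [Module K V]

/-- The operators of trace zero in `g`. -/
noncomputable def tracelessPart (g : LieSubalgebra K (Module.End K V)) :
    LieSubalgebra K (Module.End K V) where
  __ := g.toSubmodule ⊓ LinearMap.ker (LinearMap.trace K V)
  lie_mem' {A B} hA hB := by
    refine ⟨g.lie_mem hA.1 hB.1, ?_⟩
    change LinearMap.trace K V ⁅A, B⁆ = 0
    rw [LieRing.of_associative_ring_bracket, map_sub,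
      LinearMap.trace_mul_comm, sub_self]

variable {g : LieSubalgebra K (Module.End K V)} {w : V} {ξ : Module.Dual K V}

theorem mem_tracelessPart {A : Module.End K V} :
    A ∈ tracelessPart g ↔ A ∈ g ∧ LinearMap.trace K V A = 0 := Iff.rfl

variable [FiniteDimensional K V] [CharZero K]

theorem isIrreducible_tracelessPart [Nontrivial V]
    (hirr : ActsIrreducibly (g : Set (Module.End K V))) (h1 : (1 : Module.End K V) ∈ g) :
    LieModule.IsIrreducible K (tracelessPart g) V where
  exists_pair_ne := ⟨⊥, ⊤, bot_ne_top⟩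
  eq_bot_or_eq_top W := by
    have hn : (Module.finrank K V : K) ≠ 0 := by exact_mod_cast Module.finrank_pos.ne'
    rw [← LieSubmodule.toSubmodule_eq_bot, ← LieSubmodule.toSubmodule_eq_top]
    refine hirr W.toSubmodule fun A hA u hu => ?_
    let t : K := LinearMap.trace K V A / Module.finrank K V
    have hmem : A - t • 1 ∈ tracelessPart g := by
      refine mem_tracelessPart.2 ⟨g.sub_mem hA (g.smul_mem _ h1), ?_⟩
      rw [map_sub, map_smul, LinearMap.trace_one, smul_eq_mul, div_mul_cancel₀ _ hn, sub_self]
    have hAu : A u = (A - t • 1) u + t • u := by simp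
    rw [hAu]
    exact add_mem (W.lie_mem (x := ⟨_, hmem⟩) hu) (W.toSubmodule.smul_mem t hu)

omit [FiniteDimensional K V] [CharZero K] in
theorem lie_lie_lie_lie_smulRight_eq_zero {h : LieSubalgebra K (Module.End K V)}
    (hξw : ∀ A ∈ h, ξ (A w) = 0) (h0 : ξ w = 0) {B C : Module.End K V} (hB : B ∈ h) (hC : C ∈ h) :
    ⁅ξ.smulRight w, ⁅B, ⁅ξ.smulRight w, ⁅B, C⁆⁆⁆⁆ = 0 := by
  have hD := hξw _ (h.lie_mem hB hC)
  have hBD := hξw _ (h.lie_mem hB (h.lie_mem hB hC))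
  have hB := hξw B hB
  generalize ⁅B, C⁆ = D at hD hBD
  have hcomm : ξ (B (D w)) = ξ (D (B w)) := by
    simpa [LieRing.of_associative_ring_bracket, sub_eq_zero] using hBD
  ext v
  simp [LieRing.of_associative_ring_bracket, h0, hB, hD, hcomm, smul_smul]

/-- Otherwise `w ⊗ ξ` would lie in the kernel of the Killing form of the semisimple Lie algebra
`tracelessPart g`. -/
theorem exists_mem_apply_ne_zero [IsAlgClosed K]
    (hirr : ActsIrreducibly (g : Set (Module.End K V))) (h1 : (1 : Module.End K V) ∈ g)
    (hw : w ≠ 0) (hξ : ξ ≠ 0) (hN : ξ.smulRight w ∈ g) : ∃ A ∈ g, ξ (A w) ≠ 0 := by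
  by_contra! hcon
  have h0 : ξ w = 0 := hcon 1 h1
  have : Nontrivial V := ⟨w, 0, hw⟩
  have := isIrreducible_tracelessPart hirr h1
  have : LieAlgebra.HasTrivialRadical K (tracelessPart g) :=
    LieAlgebra.hasTrivialRadical_of_isIrreducible_of_isFaithful K _ V fun A => A.2.2
  let N : tracelessPart g :=
    ⟨ξ.smulRight w, mem_tracelessPart.2 ⟨hN, by rw [LinearMap.trace_smulRight, h0]⟩⟩
  have hNz : N = 0 := by
    refine (LieAlgebra.IsKilling.killingForm_nondegenerate K (tracelessPart g)).1 N fun B => ?_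
    rw [LieModule.traceForm_apply_apply]
    refine IsNilpotent.eq_zero (LinearMap.isNilpotent_trace_of_isNilpotent ⟨2, ?_⟩)
    exact LinearMap.ext fun C =>
      Subtype.ext (lie_lie_lie_lie_smulRight_eq_zero hcon h0 B.2.1 C.2.1)
  refine hξ (LinearMap.ext fun v => ?_)
  have hv : ξ v • w = 0 := LinearMap.congr_fun (congrArg Subtype.val hNz) v
  exact (smul_eq_zero.1 hv).resolve_right hw

/-- The `sl₂` of the frame is generated by `w ⊗ ξ` and an operator pairing `w` with `ξ`. -/
theorem exists_frame [IsAlgClosed K]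
    (hirr : ActsIrreducibly (g : Set (Module.End K V))) (h1 : (1 : Module.End K V) ∈ g)
    (hw : w ≠ 0) (hξ : ξ ≠ 0) (hN : ξ.smulRight w ∈ g) (h0 : ξ w = 0) :
    ∃ F : Frame K V, F.w = w ∧ F.Sl2Mem g := by
  obtain ⟨A₀, hA₀, hne⟩ := exists_mem_apply_ne_zero hirr h1 hw hξ hN
  let A := (ξ (A₀ w))⁻¹ • A₀
  have hA : A ∈ g := g.smul_mem _ hA₀
  have hAw : ξ (A w) = 1 := by simp [A, hne]
  let s : K := ξ (A (A w)) / 2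
  let F : Frame K V :=
    { w := w
      w' := A w - s • w
      ξ := ξ
      ξ' := ξ ∘ₗ A - s • ξ
      ξ_w := h0
      ξ_w' := by simp [hAw, h0]
      ξ'_w := by simp [hAw, h0]
      ξ'_w' := by simp [hAw, h0, s]; ring }
  have hH : F.semisimple ∈ g := by
    convert g.lie_mem hN hA using 1
    ext v
    simp [LieRing.of_associative_ring_bracket, Frame.semisimple, F]
    module
  refine ⟨F, rfl, hN, ?_⟩
  simpa [Frame.weightComponent, F, hAw] using Frame.weightComponent_mem hH hA 0

/-- `X` is an element of the first prolongation of `g`. -/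
theorem eq_top_of_smulRight_mem [IsAlgClosed K]
    (hirr : ActsIrreducibly (g : Set (Module.End K V))) (h1 : (1 : Module.End K V) ∈ g)
    (hw : w ≠ 0) (hξ : ξ ≠ 0) (hN : ξ.smulRight w ∈ g) {X : V → Module.End K V}
    (hX : ∀ v, X v ∈ g) (hXsymm : ∀ u v, X u v = X v u)
    (htr : LinearMap.trace K V (X w) ≠ 0) : g = ⊤ := by
  by_cases h0 : ξ w = 0
  · obtain ⟨F, rfl, hF⟩ := exists_frame hirr h1 hw hξ hN h0
    by_cases hproj : F.proj = 0
    · exact hF.eq_top_of_split hirr h1 fun v => by rw [hproj]; exact zero_mem _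
    by_cases hiso : ∀ η u, (η, u) ∈ F.weightOnePairs g → η u = 0
    · exact absurd (hF.trace_eq_zero hirr hiso hproj hX hXsymm) htr
    · push Not at hiso
      obtain ⟨η, u, hu, hne⟩ := hiso
      exact hF.eq_top_of_apply_ne_zero hirr h1 hu hne
  · refine eq_top_of_idempotent_mem hirr (w := w) (ξ := (ξ w)⁻¹ • ξ) ?_ (by simp [h0])
    have heq : ((ξ w)⁻¹ • ξ).smulRight w = (ξ w)⁻¹ • ξ.smulRight w := by
      ext v; simp [mul_smul]
    exact heq ▸ g.smul_mem _ hN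

end RankOneMem

/-! ### Primitive subalgebras and invariant forms -/

section Primitive

variable {K : Type*} [Field K] {n : ℕ}

/-- The conditions on a subalgebra of `Vect K n` that characterise maximality over an algebraically
closed field: it contains the constant fields, its linear part acts irreducibly, and it contains a
nonzero quadratic field. -/
structure IsPrimitive (L : LieSubalgebra K (Vect K n)) : Prop where
  constField_mem : ∀ v, constField v ∈ L
  irreducible : ActsIrreducibly (linearPart L : Set (Module.End K (Fin n → K)))
  exists_quadratic : ∃ D ∈ L, D ∈ homogFields K n 2 ∧ D ≠ 0

theorem IsPrimitive.mono {L M : LieSubalgebra K (Vect K n)} (h : IsPrimitive L) (hLM : L ≤ M) :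
    IsPrimitive M where
  constField_mem v := hLM (h.constField_mem v)
  irreducible F hF := h.irreducible F fun A hA => hF A (hLM hA)
  exists_quadratic := let ⟨D, hD, hD'⟩ := h.exists_quadratic; ⟨D, hLM hD, hD'⟩

theorem exists_constField_mem [CharZero K] {I : Submodule K (Vect K n)}
    (hI : ∀ v : Fin n → K, ∀ D ∈ I, ⁅constField v, D⁆ ∈ I) (k : ℕ) :
    ∀ D ∈ I, D ∈ homogFields K n k → D ≠ 0 → ∃ v, v ≠ 0 ∧ constField v ∈ I := by
  induction k with
  | zero =>
    intro D hD hk h0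
    obtain ⟨v, rfl⟩ := mem_homogFields_zero.1 hk
    exact ⟨v, by rintro rfl; exact h0 (map_zero _), hD⟩
  | succ k ih =>
    intro D hD hk h0
    by_contra hcon
    refine h0 (eq_zero_of_lie_constField hk fun v => ?_)
    by_contra hne
    exact hcon (ih _ (hI v D hD) (lie_mem_homogFields (constField_mem v) hk (by omega)) hne)

theorem eq_zero_of_lie_constField_lie_constField [CharZero K] {D : Vect K n}
    (hD : D ∈ homogFields K n 2) (h : ∀ u v : Fin n → K, ⁅constField u, ⁅constField v, D⁆⁆ = 0) :
    D = 0 :=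
  eq_zero_of_lie_constField hD fun v =>
    eq_zero_of_lie_constField (k := 0) (lie_mem_homogFields (constField_mem v) hD (by omega))
      fun u => h u v

theorem hasTrivialRadical_of_submodule {R G : Type*} [CommRing R] [LieRing G] [LieAlgebra R G]
    (M : LieSubalgebra R G) [IsNoetherian R M]
    (h : ∀ I : Submodule R G, I ≤ M.toSubmodule → (∀ a ∈ M, ∀ D ∈ I, ⁅a, D⁆ ∈ I) →
      (∀ a ∈ I, ∀ D ∈ I, ⁅a, D⁆ = 0) → I = ⊥) :
    LieAlgebra.HasTrivialRadical R M := by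
  rw [LieAlgebra.hasTrivialRadical_iff_no_abelian_ideals]
  intro I hI
  have hbot := h ((I : Submodule R M).map M.toSubmodule.subtype)
    (by rintro _ ⟨D, -, rfl⟩; exact D.2)
    (by rintro a ha _ ⟨D, hD, rfl⟩; exact ⟨_, I.lie_mem (x := ⟨a, ha⟩) hD, rfl⟩)
    (by
      rintro _ ⟨a, ha, rfl⟩ _ ⟨D, hD, rfl⟩
      exact congrArg (fun z : I => ((z : M) : G)) (hI.trivial ⟨a, ha⟩ ⟨D, hD⟩))
  rw [LieSubmodule.eq_bot_iff]
  intro z hz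
  have hz' := (Submodule.eq_bot_iff _).1 hbot z ⟨z, hz, rfl⟩
  exact Subtype.ext hz'

theorem IsPrimitive.constField_mem_of_lie_mem [CharZero K] {M : LieSubalgebra K (Vect K n)}
    (h : IsPrimitive M) (he : euler K n ∈ M) {I : Submodule K (Vect K n)}
    (hI : ∀ a ∈ M, ∀ D ∈ I, ⁅a, D⁆ ∈ I) (hI0 : I ≠ ⊥) (u : Fin n → K) : constField u ∈ I := by
  obtain ⟨z, hzI, hz0⟩ := (Submodule.ne_bot_iff _).1 hI0
  obtain ⟨k, hk⟩ : ∃ k, homogComp k z ≠ 0 := by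
    by_contra! hcon
    exact hz0 (eq_zero_of_homogComp_eq_zero hcon)
  obtain ⟨v, hv0, hv⟩ := exists_constField_mem (fun v => hI _ (h.constField_mem v)) k _
    (isGraded_of_euler_lie_mem (hI _ he) hzI k) (homogComp_mem k z) hk
  rcases h.irreducible (I.comap constField) fun A hA w hw => by
    have hmem := hI _ hA _ hw
    rwa [lie_linField_constField, neg_mem_iff] at hmem with hbot | htop
  · exact absurd ((Submodule.eq_bot_iff _).1 hbot v hv) hv0
  · exact (htop ▸ Submodule.mem_top : u ∈ I.comap constField)

/-- A nonzero abelian ideal would contain all constant fields, so these would commute with their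
brackets with a quadratic field, which forces that field to vanish. -/
theorem IsPrimitive.isKilling [CharZero K] {M : LieSubalgebra K (Vect K n)}
    [FiniteDimensional K M] (h : IsPrimitive M) (he : euler K n ∈ M) :
    LieAlgebra.IsKilling K M := by
  have : LieAlgebra.HasTrivialRadical K M := hasTrivialRadical_of_submodule M fun I _ hI hab => by
    by_contra hI0
    have hconst (u) := h.constField_mem_of_lie_mem he hI hI0 u
    obtain ⟨D, hDM, hD2, hD0⟩ := h.exists_quadratic
    refine hD0 (eq_zero_of_lie_constField_lie_constField hD2 fun u v => hab _ (hconst u) _ ?_)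
    rw [← lie_skew]
    exact neg_mem (hI _ hDM _ (hconst v))
  infer_instance

end Primitive

section InvariantForm

variable {K G : Type*} [Field K] [LieRing G] [LieAlgebra K G]

theorem eq_top_of_forall_lie_mem [FiniteDimensional K G] [LieAlgebra.IsKilling K G]
    {N : Submodule K G} (hN : ∀ a b : G, ⁅a, b⁆ ∈ N) : N = ⊤ := by
  by_contra hne
  obtain ⟨v, hv⟩ := SetLike.exists_not_mem_of_ne_top N hne rfl
  obtain ⟨f, hfv, hf⟩ := Submodule.exists_le_ker_of_notMem hv
  have hnd := LieAlgebra.IsKilling.killingForm_nondegenerate K G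
  obtain ⟨z, hz⟩ := ((killingForm K G).toDual hnd).surjective f
  have hzf (b : G) : killingForm K G z b = f b := by
    rw [← hz, LinearMap.BilinForm.toDual_def]
  have hcentral (a : G) : ⁅z, a⁆ = 0 := hnd.1 _ fun b => by
    rw [LieModule.traceForm_apply_lie_apply, hzf]
    exact hf (hN a b)
  have hz0 : z ∈ LieAlgebra.center K G := by
    rw [LieModule.mem_maxTrivSubmodule]
    exact fun a => by rw [← lie_skew, hcentral, neg_zero]
  rw [LieAlgebra.center_eq_bot K G, LieSubmodule.mem_bot] at hz0
  exact hfv (by rw [← hzf, hz0, map_zero, LinearMap.zero_apply])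

theorem le_of_lie_mem (M : LieSubalgebra K G) [FiniteDimensional K M] [LieAlgebra.IsKilling K M]
    {N : Submodule K G} (hN : ∀ a ∈ M, ∀ b ∈ M, ⁅a, b⁆ ∈ N) : M.toSubmodule ≤ N := by
  have htop := eq_top_of_forall_lie_mem (G := M) (N := N.comap M.toSubmodule.subtype)
    fun a b => hN a a.2 b b.2
  intro D hD
  exact (htop ▸ Submodule.mem_top : (⟨D, hD⟩ : M) ∈ N.comap M.toSubmodule.subtype)

/-- `κ` restricts to a nondegenerate invariant symmetric bilinear form on the subalgebra `M`. The
form is defined on the ambient algebra so that it can be applied to homogeneous vector fields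
without coercions. -/
structure IsInvariantForm (M : LieSubalgebra K G) (κ : G →ₗ[K] G →ₗ[K] K) : Prop where
  lie_apply : ∀ a ∈ M, ∀ b ∈ M, ∀ c ∈ M, κ ⁅a, b⁆ c = κ a ⁅b, c⁆
  symm : ∀ a b, κ a b = κ b a
  eq_zero : ∀ a ∈ M, (∀ b ∈ M, κ a b = 0) → a = 0

theorem exists_isInvariantForm (M : LieSubalgebra K G) [FiniteDimensional K M]
    [LieAlgebra.IsKilling K M] : ∃ κ, IsInvariantForm M κ := by
  obtain ⟨π, hπ⟩ : ∃ π : G →ₗ[K] M, ∀ a : M, π a = a := by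
    obtain ⟨π, hπ⟩ := LinearMap.exists_leftInverse_of_injective M.toSubmodule.subtype
      (Submodule.ker_subtype _)
    exact ⟨π, LinearMap.congr_fun hπ⟩
  have happly (a b : M) : (killingForm K M).compl₁₂ π π a b = killingForm K M a b := by
    rw [LinearMap.compl₁₂_apply, hπ, hπ]
  refine ⟨(killingForm K M).compl₁₂ π π, fun a ha b hb c hc => ?_,
    fun a b => LieModule.traceForm_comm K M M _ _, fun a ha h => ?_⟩
  · lift a to M using ha
    lift b to M using hb
    lift c to M using hc
    rw [← LieSubalgebra.coe_bracket, ← LieSubalgebra.coe_bracket, happly, happly]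
    exact LieModule.traceForm_apply_lie_apply K M M a b c
  · lift a to M using ha
    have ha0 : a = 0 := (LieAlgebra.IsKilling.killingForm_nondegenerate K M).1 a fun b => by
      rw [← happly, h b b.2]
    rw [ha0, ZeroMemClass.coe_zero]

end InvariantForm

section KillingGraded

variable {K : Type*} [Field K] {n : ℕ}

theorem IsGraded.euler_lie_mem {M : Submodule K (Vect K n)} (hM : IsGraded M) {D : Vect K n}
    (hD : D ∈ M) : ⁅euler K n, D⁆ ∈ M := by
  obtain ⟨N, hN, -⟩ := exists_eq_sum_homogComp D
  rw [hN, lie_sum (L := Vect K n) (M := Vect K n)]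
  refine M.sum_mem fun k _ => ?_
  rw [euler_lie (homogComp_mem k D)]
  exact M.smul_mem _ (hM hD k)

theorem IsGraded.lie_mem_of_sub_smul_euler_mem {L : LieSubalgebra K (Vect K n)}
    (hgr : IsGraded L.toSubmodule) {a b : Vect K n} {c d : K} (ha : a - c • euler K n ∈ L)
    (hb : b - d • euler K n ∈ L) : ⁅a, b⁆ ∈ L := by
  obtain ⟨a, rfl⟩ : ∃ a', a = a' + c • euler K n := ⟨_, (sub_add_cancel _ _).symm⟩
  obtain ⟨b, rfl⟩ : ∃ b', b = b' + d • euler K n := ⟨_, (sub_add_cancel _ _).symm⟩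
  rw [add_sub_cancel_right] at ha hb
  have hexpand : ⁅a + c • euler K n, b + d • euler K n⁆
      = ⁅a, b⁆ - d • ⁅euler K n, a⁆ + c • ⁅euler K n, b⁆ := by
    rw [vect_add_lie, vect_lie_add, vect_lie_add, vect_smul_lie, vect_smul_lie, vect_lie_smul,
      vect_lie_smul, lie_self, ← lie_skew a (euler K n)]
    module
  rw [hexpand]
  exact L.add_mem (L.sub_mem (L.lie_mem ha hb) (L.smul_mem _ (hgr.euler_lie_mem ha)))
    (L.smul_mem _ (hgr.euler_lie_mem hb))

/-- The subalgebra generated by a graded subalgebra and the Euler field. -/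
noncomputable def adjoinEuler (L : LieSubalgebra K (Vect K n)) (hgr : IsGraded L.toSubmodule) :
    LieSubalgebra K (Vect K n) where
  carrier := {D | ∃ c : K, D - c • euler K n ∈ L}
  add_mem' := by
    rintro a b ⟨c, hc⟩ ⟨d, hd⟩
    refine ⟨c + d, ?_⟩
    convert L.add_mem hc hd using 1
    module
  zero_mem' := ⟨0, by simp⟩
  smul_mem' := by
    rintro r a ⟨c, hc⟩
    refine ⟨r * c, ?_⟩
    convert L.smul_mem r hc using 1
    module
  lie_mem' := by
    rintro a b ⟨c, hc⟩ ⟨d, hd⟩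
    exact ⟨0, by simpa using hgr.lie_mem_of_sub_smul_euler_mem hc hd⟩

/-- `L + K·euler` is semisimple, hence equal to its derived algebra, which lies in `L`. -/
theorem IsPrimitive.euler_mem [CharZero K] {L : LieSubalgebra K (Vect K n)}
    [FiniteDimensional K L] (h : IsPrimitive L) (hgr : IsGraded L.toSubmodule) :
    euler K n ∈ L := by
  let M := adjoinEuler L hgr
  have he : euler K n ∈ M := ⟨1, by simp⟩
  have hLM : L ≤ M := fun D hD => ⟨0, by simpa using hD⟩
  have hle : M.toSubmodule ≤ L.toSubmodule ⊔ Submodule.span K {euler K n} := by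
    rintro D ⟨c, hc⟩
    rw [← sub_add_cancel D (c • euler K n)]
    exact Submodule.add_mem_sup hc
      (Submodule.smul_mem _ c (Submodule.mem_span_singleton_self _))
  have : FiniteDimensional K L.toSubmodule := ‹_›
  have : FiniteDimensional K M := Submodule.finiteDimensional_of_le hle
  have := (h.mono hLM).isKilling he
  exact le_of_lie_mem M (N := L.toSubmodule)
    (fun a ⟨_, ha⟩ b ⟨_, hb⟩ => hgr.lie_mem_of_sub_smul_euler_mem ha hb) he

theorem IsInvariantForm.apply_eq_zero [CharZero K] {M : LieSubalgebra K (Vect K n)}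
    {κ : Vect K n →ₗ[K] Vect K n →ₗ[K] K} (hκ : IsInvariantForm M κ) (he : euler K n ∈ M)
    {a b : Vect K n} {k l : ℕ} (ha : a ∈ M) (hb : b ∈ M) (hk : a ∈ homogFields K n k)
    (hl : b ∈ homogFields K n l) (hkl : k + l ≠ 2) : κ a b = 0 := by
  have hinv := hκ.lie_apply a ha _ he b hb
  rw [← lie_skew, euler_lie hk, euler_lie hl] at hinv
  simp only [map_neg, map_smul, LinearMap.neg_apply, LinearMap.smul_apply, smul_eq_mul] at hinv
  have hmul : ((k : K) + l - 2) * κ a b = 0 := by linear_combination -hinv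
  refine (mul_eq_zero.1 hmul).resolve_left fun hzero => hkl ?_
  have hcast : ((k + l : ℕ) : K) = (2 : ℕ) := by push_cast; linear_combination hzero
  exact_mod_cast hcast

theorem IsInvariantForm.eq_zero_of_homogeneous [CharZero K] {M : LieSubalgebra K (Vect K n)}
    {κ : Vect K n →ₗ[K] Vect K n →ₗ[K] K} (hκ : IsInvariantForm M κ) (he : euler K n ∈ M)
    {a : Vect K n} {k : ℕ} (ha : a ∈ M) (hk : a ∈ homogFields K n k)
    (h : ∀ l, k + l = 2 → ∀ b ∈ M, b ∈ homogFields K n l → κ a b = 0) : a = 0 := by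
  refine hκ.eq_zero a ha fun b hb => ?_
  refine mem_of_homogComp_mem (M := LinearMap.ker (κ a)) fun l => ?_
  have hl := isGraded_of_euler_lie_mem (M := M.toSubmodule) (fun _ => M.lie_mem he) hb l
  rw [LinearMap.mem_ker]
  by_cases hkl : k + l = 2
  · exact h l hkl _ hl (homogComp_mem l b)
  · exact hκ.apply_eq_zero he ha hl hk (homogComp_mem l b) hkl

theorem IsPrimitive.exists_isInvariantForm [CharZero K] {M : LieSubalgebra K (Vect K n)}
    [FiniteDimensional K M] (h : IsPrimitive M) (he : euler K n ∈ M) :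
    ∃ κ : Vect K n →ₗ[K] Vect K n →ₗ[K] K, IsInvariantForm M κ :=
  have := h.isKilling he
  PolyVect.exists_isInvariantForm M

theorem finrank_le_of_pairing {V W : Type*} [AddCommGroup V] [Module K V] [AddCommGroup W]
    [Module K W] [FiniteDimensional K W] (S : Submodule K V) (β : V →ₗ[K] W →ₗ[K] K)
    (h : ∀ v ∈ S, (∀ w, β v w = 0) → v = 0) : Module.finrank K S ≤ Module.finrank K W := by
  have hinj : Function.Injective (β ∘ₗ S.subtype) := by
    rw [← LinearMap.ker_eq_bot, LinearMap.ker_eq_bot']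
    exact fun v hv => Subtype.ext (h v v.2 fun w => LinearMap.congr_fun hv w)
  exact (LinearMap.finrank_le_finrank_of_injective hinj).trans_eq Subspace.dual_finrank_eq

theorem le_finrank_of_pairing {V W : Type*} [AddCommGroup V] [Module K V] [AddCommGroup W]
    [Module K W] (S : Submodule K V) [FiniteDimensional K S] (β : V →ₗ[K] W →ₗ[K] K)
    (h : ∀ w, (∀ v ∈ S, β v w = 0) → w = 0) : Module.finrank K W ≤ Module.finrank K S := by
  have hinj : Function.Injective (β ∘ₗ S.subtype).flip := by
    rw [← LinearMap.ker_eq_bot, LinearMap.ker_eq_bot']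
    exact fun w hw => h w fun v hv => LinearMap.congr_fun hw ⟨v, hv⟩
  exact (LinearMap.finrank_le_finrank_of_injective hinj).trans_eq Subspace.dual_finrank_eq

theorem finrank_inf_homogFields_two [CharZero K] {M : LieSubalgebra K (Vect K n)}
    [FiniteDimensional K M] (h : IsPrimitive M) (he : euler K n ∈ M) :
    Module.finrank K (M.toSubmodule ⊓ homogFields K n 2 : Submodule K (Vect K n)) = n := by
  obtain ⟨κ, hκ⟩ := h.exists_isInvariantForm he
  have : FiniteDimensional K M.toSubmodule := ‹_›
  have : FiniteDimensional K (M.toSubmodule ⊓ homogFields K n 2 : Submodule K (Vect K n)) :=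
    Submodule.finiteDimensional_of_le inf_le_left
  refine Eq.trans ?_ (Module.finrank_fin_fun K)
  refine le_antisymm (finrank_le_of_pairing _ (κ.compl₂ constField) ?_)
    (le_finrank_of_pairing _ (κ.compl₂ constField) fun v hv => constField_injective ?_)
  · rintro D ⟨hDM, hD2⟩ hD
    refine hκ.eq_zero_of_homogeneous he hDM hD2 fun l hl b hb hbl => ?_
    obtain rfl : l = 0 := by omega
    obtain ⟨v, rfl⟩ := mem_homogFields_zero.1 hbl
    exact hD v
  · rw [map_zero]
    refine hκ.eq_zero_of_homogeneous he (h.constField_mem v) (constField_mem v)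
      fun l hl b hb hbl => ?_
    obtain rfl : l = 2 := by omega
    rw [hκ.symm]
    exact hv b ⟨hb, hbl⟩

theorem inf_homogFields_two_le [CharZero K] {L M : LieSubalgebra K (Vect K n)}
    [FiniteDimensional K M] (h : IsPrimitive L) (he : euler K n ∈ L) (hLM : L ≤ M) :
    M.toSubmodule ⊓ homogFields K n 2 ≤ L.toSubmodule := by
  have : FiniteDimensional K M.toSubmodule := ‹_›
  have : FiniteDimensional K L :=
    Submodule.finiteDimensional_of_le (S₂ := M.toSubmodule) hLM
  have : FiniteDimensional K (M.toSubmodule ⊓ homogFields K n 2 : Submodule K (Vect K n)) :=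
    Submodule.finiteDimensional_of_le inf_le_left
  refine (Submodule.eq_of_le_of_finrank_eq (inf_le_inf_right _ hLM) ?_).ge.trans inf_le_left
  rw [finrank_inf_homogFields_two h he, finrank_inf_homogFields_two (h.mono hLM) (hLM he)]

/-- Invariance moves the pairing of `a` with linear fields to one between constant and quadratic
fields, which are all in `L`. -/
theorem inf_homogFields_one_le [CharZero K] {L M : LieSubalgebra K (Vect K n)}
    [FiniteDimensional K M] (h : IsPrimitive L) (he : euler K n ∈ L) (hLM : L ≤ M) :
    M.toSubmodule ⊓ homogFields K n 1 ≤ L.toSubmodule := by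
  obtain ⟨κ, hκ⟩ := (h.mono hLM).exists_isInvariantForm (hLM he)
  let A : Submodule K (Vect K n) := L.toSubmodule ⊓ homogFields K n 1
  have hA : A ≤ M.toSubmodule ⊓ homogFields K n 1 := inf_le_inf_right _ hLM
  have : FiniteDimensional K M.toSubmodule := ‹_›
  have : FiniteDimensional K (M.toSubmodule ⊓ homogFields K n 1 : Submodule K (Vect K n)) :=
    Submodule.finiteDimensional_of_le inf_le_left
  have : FiniteDimensional K A := Submodule.finiteDimensional_of_le hA
  refine (Submodule.eq_of_le_of_finrank_le hA
    (finrank_le_of_pairing (W := A) _ (κ.compl₂ A.subtype) ?_)).ge.trans inf_le_left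
  rintro a ⟨haM, ha1⟩ hκa
  refine eq_zero_of_lie_constField (k := 0) ha1 fun v => ?_
  rw [← lie_skew, neg_eq_zero]
  have hv := h.constField_mem v
  refine hκ.eq_zero_of_homogeneous (hLM he) (M.lie_mem haM (hLM hv))
    (lie_mem_homogFields ha1 (constField_mem v) (c := 0) (by omega)) fun l hl b hb hbl => ?_
  obtain rfl : l = 2 := by omega
  have hbL : b ∈ L := inf_homogFields_two_le h he hLM ⟨hb, hbl⟩
  rw [hκ.lie_apply _ haM _ (hLM hv) _ hb]
  exact hκa ⟨_, L.lie_mem hv hbL, lie_mem_homogFields (constField_mem v) hbl (by omega)⟩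

theorem IsPrimitive.eq_of_finiteDimensional [CharZero K] {L M : LieSubalgebra K (Vect K n)}
    [FiniteDimensional K M] (h : IsPrimitive L) (he : euler K n ∈ L) (hLM : L ≤ M) : M = L := by
  obtain ⟨κ, hκ⟩ := (h.mono hLM).exists_isInvariantForm (hLM he)
  refine le_antisymm (fun D hD => ?_) hLM
  refine mem_of_homogComp_mem (M := L.toSubmodule) fun k => ?_
  have hkM : homogComp k D ∈ M :=
    isGraded_of_euler_lie_mem (M := M.toSubmodule) (fun _ => M.lie_mem (hLM he)) hD k
  have hk := homogComp_mem k D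
  obtain _ | _ | _ | k := k
  · obtain ⟨v, hv⟩ := mem_homogFields_zero.1 hk
    exact hv ▸ h.constField_mem v
  · exact inf_homogFields_one_le h he hLM ⟨hkM, hk⟩
  · exact inf_homogFields_two_le h he hLM ⟨hkM, hk⟩
  · rw [hκ.eq_zero_of_homogeneous (hLM he) hkM hk fun l hl => by omega]
    exact zero_mem _

end KillingGraded

section LinTrace

variable {K : Type*} [Field K] {n : ℕ}

/-- The trace of the linear part of a vector field at the origin. -/
noncomputable def linTrace : Vect K n →ₗ[K] K where
  toFun D := ∑ i, coeff (Finsupp.single i 1) (D (X i))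
  map_add' D D' := by simp [Finset.sum_add_distrib]
  map_smul' a D := by simp [Finset.mul_sum]

theorem linTrace_apply (D : Vect K n) :
    linTrace D = ∑ i, coeff (Finsupp.single i 1) (D (X i)) := rfl

theorem linTrace_of_mem_homogFields {D : Vect K n} {k : ℕ} (hD : D ∈ homogFields K n k)
    (hk : k ≠ 1) : linTrace D = 0 := by
  rw [linTrace_apply]
  refine Finset.sum_eq_zero fun i _ => (hD i).coeff_eq_zero ?_
  rw [Finsupp.degree_single]
  exact hk.symm

theorem linTrace_linField (A : Module.End K (Fin n → K)) :
    linTrace (linField A) = LinearMap.trace K _ A := by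
  rw [linTrace_apply, LinearMap.trace_eq_matrix_trace K (Pi.basisFun K (Fin n)) A, Matrix.trace]
  refine Finset.sum_congr rfl fun i _ => ?_
  rw [linField_X, linForm_apply, coeff_sum]
  simp [coeff_C_mul, coeff_X, Finsupp.single_left_inj]

theorem linTrace_lie_linField_linField (A B : Module.End K (Fin n → K)) :
    linTrace ⁅linField A, linField B⁆ = 0 := by
  rw [lie_linField_linField, linTrace_linField, Ring.lie_def, map_sub, LinearMap.trace_mul_comm,
    sub_self]

theorem linTrace_lie_homogeneous {a b : Vect K n} {k l : ℕ}
    (ha : a ∈ homogFields K n k) (hb : b ∈ homogFields K n l)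
    (h0 : ∀ v : Fin n → K, k = 2 → linTrace ⁅constField v, a⁆ = 0)
    (h2 : ∀ v : Fin n → K, l = 2 → linTrace ⁅constField v, b⁆ = 0) : linTrace ⁅a, b⁆ = 0 := by
  match k, l, ha, hb, h0, h2 with
  | 0, l, ha, hb, _, h2 =>
    obtain ⟨v, rfl⟩ := mem_homogFields_zero.1 ha
    match l, hb, h2 with
    | 0, hb, _ =>
      obtain ⟨w, rfl⟩ := mem_homogFields_zero.1 hb
      rw [lie_constField_constField, map_zero]
    | l + 1, hb, h2 =>
      by_cases hl : l + 1 = 2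
      · exact h2 v hl
      · exact linTrace_of_mem_homogFields (lie_mem_homogFields ha hb (c := l) (by omega)) (by omega)
  | k + 1, 0, ha, hb, h0, _ =>
    obtain ⟨v, rfl⟩ := mem_homogFields_zero.1 hb
    by_cases hk : k + 1 = 2
    · rw [← lie_skew, map_neg, h0 v hk, neg_zero]
    · exact linTrace_of_mem_homogFields (lie_mem_homogFields ha hb (c := k) (by omega)) (by omega)
  | 1, 1, ha, hb, _, _ =>
    obtain ⟨A, rfl⟩ := mem_homogFields_one.1 ha
    obtain ⟨B, rfl⟩ := mem_homogFields_one.1 hb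
    exact linTrace_lie_linField_linField A B
  | k + 2, l + 1, ha, hb, _, _ =>
    exact linTrace_of_mem_homogFields (lie_mem_homogFields ha hb (c := k + l + 2) (by omega))
      (by omega)
  | 1, l + 2, ha, hb, _, _ =>
    exact linTrace_of_mem_homogFields (lie_mem_homogFields ha hb (c := l + 2) (by omega))
      (by omega)

theorem IsGraded.linTrace_lie_eq_zero {M : Submodule K (Vect K n)} (hgr : IsGraded M)
    (h : ∀ v : Fin n → K, ∀ D ∈ M, D ∈ homogFields K n 2 → linTrace ⁅constField v, D⁆ = 0)
    {a b : Vect K n} (ha : a ∈ M) (hb : b ∈ M) : linTrace ⁅a, b⁆ = 0 := by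
  have hcomp (k l : ℕ) : linTrace ⁅homogComp k a, homogComp l b⁆ = 0 :=
    linTrace_lie_homogeneous (homogComp_mem k a) (homogComp_mem l b)
      (fun v hk => h v _ (hgr ha k) (hk ▸ homogComp_mem k a))
      (fun v hl => h v _ (hgr hb l) (hl ▸ homogComp_mem l b))
  let ker (c : Vect K n) : Submodule K (Vect K n) :=
    (LinearMap.ker linTrace).comap (LieAlgebra.ad K (Vect K n) c)
  have hright (k : ℕ) : linTrace ⁅homogComp k a, b⁆ = 0 :=
    mem_of_homogComp_mem (M := ker (homogComp k a)) (hcomp k)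
  have hleft : a ∈ ker b := mem_of_homogComp_mem fun k => by
    change linTrace ⁅b, homogComp k a⁆ = 0
    rw [← lie_skew, map_neg, hright, neg_zero]
  rw [← lie_skew, map_neg, neg_eq_zero]
  exact hleft

/-- The constant directions along which `linTrace` annihilates the brackets with all quadratic
fields of `M`. -/
noncomputable def traceKernel (M : Submodule K (Vect K n)) : Submodule K (Fin n → K) where
  carrier := {v | ∀ D ∈ M, D ∈ homogFields K n 2 → linTrace ⁅constField v, D⁆ = 0}
  add_mem' {a b} ha hb D hD hD2 := by
    rw [map_add, vect_add_lie, map_add, ha D hD hD2, hb D hD hD2, add_zero]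
  zero_mem' D _ _ := by rw [map_zero, vect_zero_lie, map_zero]
  smul_mem' c v hv D hD hD2 := by
    rw [map_smul, vect_smul_lie, map_smul, hv D hD hD2, smul_zero]

theorem apply_mem_traceKernel {L : LieSubalgebra K (Vect K n)} {A : Module.End K (Fin n → K)}
    (hA : A ∈ linearPart L) {u : Fin n → K} (hu : u ∈ traceKernel L.toSubmodule) :
    A u ∈ traceKernel L.toSubmodule := by
  intro D hD hD2
  obtain ⟨B, hB⟩ := mem_homogFields_one.1 (lie_mem_homogFields (constField_mem u) hD2 (c := 1) rfl)
  rw [← lie_constField_linField, vect_lie_lie, map_sub,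
    hu _ (L.lie_mem hA hD) (lie_mem_homogFields (linField_mem A) hD2 (by omega)), hB,
    linTrace_lie_linField_linField, sub_zero]

/-- Otherwise, by irreducibility, `linTrace` vanishes on `⁅L, L⁆ = L`, which contains `euler`. -/
theorem IsPrimitive.exists_linTrace_ne_zero [CharZero K] {L : LieSubalgebra K (Vect K n)}
    [FiniteDimensional K L] (h : IsPrimitive L) (hgr : IsGraded L.toSubmodule)
    {w : Fin n → K} (hw : w ≠ 0) :
    ∃ D ∈ L, D ∈ homogFields K n 2 ∧ linTrace ⁅constField w, D⁆ ≠ 0 := by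
  by_contra! hcon
  have htop : traceKernel L.toSubmodule = ⊤ :=
    (h.irreducible _ fun A hA u hu => apply_mem_traceKernel hA hu).resolve_left fun hbot =>
      hw ((Submodule.eq_bot_iff _).1 hbot w hcon)
  have hzero (v) : v ∈ traceKernel L.toSubmodule := htop ▸ Submodule.mem_top
  have he := h.euler_mem hgr
  have := h.isKilling he
  have heuler : euler K n ∈ LinearMap.ker linTrace := le_of_lie_mem L
    (fun a ha b hb => hgr.linTrace_lie_eq_zero (fun v => hzero v) ha hb) he
  rw [LinearMap.mem_ker, ← linField_one, linTrace_linField, LinearMap.trace_one,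
    Module.finrank_fin_fun, Nat.cast_eq_zero] at heuler
  subst heuler
  exact hw (Subsingleton.elim _ _)

end LinTrace

/-! ### Apolarity and infinite-dimensional spaces of vector fields -/

section Apolarity

variable {K : Type*} [Field K] {n : ℕ}

/-- The multi-index factorial `α! = ∏ i, (α i)!`. -/
def multiFactorial (α : Fin n →₀ ℕ) : ℕ := ∏ i, (α i).factorial

theorem multiFactorial_ne_zero [CharZero K] (α : Fin n →₀ ℕ) : (multiFactorial α : K) ≠ 0 :=
  Nat.cast_ne_zero.2 (Finset.prod_ne_zero_iff.2 fun _ _ => Nat.factorial_ne_zero _)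

theorem multiFactorial_add_single (α : Fin n →₀ ℕ) (j : Fin n) :
    multiFactorial (α + Finsupp.single j 1) = (α j + 1) * multiFactorial α := by
  rw [multiFactorial, multiFactorial, ← Finset.mul_prod_erase _ _ (Finset.mem_univ j),
    ← Finset.mul_prod_erase Finset.univ (fun i => (α i).factorial) (Finset.mem_univ j),
    Finsupp.add_apply, Finsupp.single_eq_same, Nat.factorial_succ, mul_assoc]
  congr 2
  refine Finset.prod_congr rfl fun i hi => ?_
  rw [Finsupp.add_apply, Finsupp.single_eq_of_ne (Finset.ne_of_mem_erase hi), add_zero]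

/-- The apolar pairing `⟨f, g⟩ = ∑ α! f_α g_α`, that is, the value at `0` of `f(∂) g`. -/
noncomputable def apolarPairing :
    MvPolynomial (Fin n) K →ₗ[K] MvPolynomial (Fin n) K →ₗ[K] K :=
  (basisMonomials (Fin n) K).constr K fun α => (multiFactorial α : K) • lcoeff K α

theorem apolarPairing_monomial (α : Fin n →₀ ℕ) (c : K) (g : MvPolynomial (Fin n) K) :
    apolarPairing (monomial α c) g = c * (multiFactorial α * coeff α g) := by
  have hbasis : (monomial α c : MvPolynomial (Fin n) K) = c • basisMonomials (Fin n) K α := by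
    simp [smul_monomial]
  rw [hbasis, map_smul, apolarPairing, Module.Basis.constr_basis]
  simp

theorem apolarPairing_X_mul (j : Fin n) (f g : MvPolynomial (Fin n) K) :
    apolarPairing (X j * f) g = apolarPairing f (pderiv j g) := by
  induction f using MvPolynomial.induction_on' with
  | monomial α c =>
    have hmul : (X j * monomial α c : MvPolynomial (Fin n) K)
        = monomial (α + Finsupp.single j 1) c := by
      rw [monomial_add_single, pow_one, mul_comm]
    rw [hmul, apolarPairing_monomial, apolarPairing_monomial, coeff_pderiv,
      multiFactorial_add_single]
    push_cast
    ring
  | add p q hp hq =>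
    rw [mul_add, map_add, map_add, LinearMap.add_apply, LinearMap.add_apply, hp, hq]

theorem mem_finsuppAntidiag_univ {k : ℕ} {α : Fin n →₀ ℕ} :
    α ∈ Finset.finsuppAntidiag Finset.univ k ↔ α.degree = k := by
  simp [Finset.mem_finsuppAntidiag, Finsupp.degree_eq_sum]

theorem eq_sum_monomial_of_isHomogeneous {f : MvPolynomial (Fin n) K} {k : ℕ}
    (hf : f.IsHomogeneous k) :
    f = ∑ α ∈ Finset.finsuppAntidiag Finset.univ k, monomial α (coeff α f) := by
  conv_lhs => rw [f.as_sum]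
  refine Finset.sum_subset (fun α hα => mem_finsuppAntidiag_univ.2 ?_) fun α _ hα => ?_
  · by_contra h
    exact mem_support_iff.1 hα (hf.coeff_eq_zero h)
  · rw [notMem_support_iff.1 hα, monomial_zero]

theorem apolarPairing_homogeneousComponent {f : MvPolynomial (Fin n) K} {k : ℕ}
    (hf : f.IsHomogeneous k) (g : MvPolynomial (Fin n) K) :
    apolarPairing f (homogeneousComponent k g) = apolarPairing f g := by
  rw [eq_sum_monomial_of_isHomogeneous hf]
  simp only [map_sum, LinearMap.sum_apply, apolarPairing_monomial]
  refine Finset.sum_congr rfl fun α hα => ?_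
  rw [coeff_homogeneousComponent, if_pos (mem_finsuppAntidiag_univ.1 hα)]

theorem exists_eq_add_single_of_degree_eq_succ {α : Fin n →₀ ℕ} {k : ℕ}
    (hα : α.degree = k + 1) :
    ∃ (j : Fin n) (β : Fin n →₀ ℕ), β.degree = k ∧ α = β + Finsupp.single j 1 := by
  have hα0 : α ≠ 0 := by
    rintro rfl
    simp at hα
  obtain ⟨j, hj⟩ := Finsupp.ne_iff.1 hα0
  have hle : Finsupp.single j 1 ≤ α :=
    Finsupp.single_le_iff.2 (Nat.one_le_iff_ne_zero.2 hj)
  have hsub := tsub_add_cancel_of_le hle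
  refine ⟨j, α - Finsupp.single j 1, ?_, hsub.symm⟩
  rw [← hsub, map_add, Finsupp.degree_single] at hα
  exact Nat.succ_injective hα

theorem constField_linForm_pow (v : Fin n → K) (ξ : Module.Dual K (Fin n → K)) (k : ℕ) :
    constField v (linForm ξ ^ k) = C ((k : K) * ξ v) * linForm ξ ^ (k - 1) := by
  rw [Derivation.leibniz_pow, constField_linForm, nsmul_eq_mul, smul_eq_mul, map_mul, map_natCast]
  ring

theorem apolarPairing_monomial_linForm_pow (ξ : Module.Dual K (Fin n → K)) (k : ℕ)
    {α : Fin n →₀ ℕ} (hα : α.degree = k) (c : K) :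
    apolarPairing (monomial α c) (linForm ξ ^ k) =
      k.factorial * eval (fun i => ξ (Pi.single i 1)) (monomial α c) := by
  induction k generalizing α with
  | zero =>
    obtain rfl := (Finsupp.degree_eq_zero_iff α).1 hα
    rw [apolarPairing_monomial]
    simp [multiFactorial]
  | succ k ih =>
    obtain ⟨j, β, hβ, rfl⟩ := exists_eq_add_single_of_degree_eq_succ hα
    have hmul : (monomial (β + Finsupp.single j 1) c : MvPolynomial (Fin n) K)
        = X j * monomial β c := by
      rw [monomial_add_single, pow_one, mul_comm]
    rw [hmul, apolarPairing_X_mul, ← constField_single, constField_linForm_pow,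
      Nat.add_sub_cancel, ← smul_eq_C_mul, map_smul, ih hβ, eval_mul, eval_X, Nat.factorial_succ,
      smul_eq_mul]
    push_cast
    ring

theorem apolarPairing_linForm_pow (ξ : Module.Dual K (Fin n → K)) {k : ℕ}
    {f : MvPolynomial (Fin n) K} (hf : f.IsHomogeneous k) :
    apolarPairing f (linForm ξ ^ k) = k.factorial * eval (fun i => ξ (Pi.single i 1)) f := by
  rw [eq_sum_monomial_of_isHomogeneous hf, map_sum, LinearMap.sum_apply, map_sum, Finset.mul_sum]
  exact Finset.sum_congr rfl fun α hα =>
    apolarPairing_monomial_linForm_pow ξ k (mem_finsuppAntidiag_univ.1 hα) _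

/-- The apolar pairing of vector fields, taken coordinatewise. -/
noncomputable def fieldPairing : Vect K n →ₗ[K] Vect K n →ₗ[K] K :=
  LinearMap.mk₂ K (fun Q D => ∑ i, apolarPairing (Q (X i)) (D (X i)))
    (fun _ _ _ => by
      simp only [Derivation.add_apply, map_add, LinearMap.add_apply, Finset.sum_add_distrib])
    (fun _ _ _ => by
      simp only [Derivation.smul_apply, map_smul, LinearMap.smul_apply, Finset.smul_sum])
    (fun _ _ _ => by simp only [Derivation.add_apply, map_add, Finset.sum_add_distrib])
    (fun _ _ _ => by simp only [Derivation.smul_apply, map_smul, Finset.smul_sum])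

theorem fieldPairing_apply (Q D : Vect K n) :
    fieldPairing Q D = ∑ i, apolarPairing (Q (X i)) (D (X i)) := rfl

theorem fieldPairing_X_smul (j : Fin n) (Q D : Vect K n) :
    fieldPairing ((X j : MvPolynomial (Fin n) K) • Q) D
      = fieldPairing Q ⁅constField (Pi.single j (1 : K)), D⁆ := by
  simp only [fieldPairing_apply, Derivation.smul_apply, smul_eq_mul, apolarPairing_X_mul,
    ← constField_single, lie_constField_X]

theorem fieldPairing_smul_constField_single (f : MvPolynomial (Fin n) K) (i : Fin n)
    (D : Vect K n) :
    fieldPairing (f • constField (Pi.single i 1)) D = apolarPairing f (D (X i)) := by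
  rw [fieldPairing_apply, Finset.sum_eq_single_of_mem i (Finset.mem_univ i) fun j _ hj => ?_]
  · simp
  · simp [hj]

theorem fieldPairing_homogComp {Q : Vect K n} {k : ℕ} (hQ : Q ∈ homogFields K n k)
    (D : Vect K n) : fieldPairing Q (homogComp k D) = fieldPairing Q D := by
  simp only [fieldPairing_apply, homogComp_X]
  exact Finset.sum_congr rfl fun i _ => apolarPairing_homogeneousComponent (hQ i) _

theorem fieldPairing_linForm_pow_smul_constField {Q : Vect K n} {k : ℕ}
    (hQ : Q ∈ homogFields K n k) (ξ : Module.Dual K (Fin n → K)) (w : Fin n → K) :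
    fieldPairing Q (linForm ξ ^ k • constField w)
      = k.factorial * (w ⬝ᵥ valueAt (fun i => ξ (Pi.single i 1)) Q) := by
  rw [fieldPairing_apply, dotProduct, Finset.mul_sum]
  refine Finset.sum_congr rfl fun i _ => ?_
  rw [Derivation.smul_apply, constField_X, smul_eq_mul, mul_comm, ← smul_eq_C_mul, map_smul,
    apolarPairing_linForm_pow ξ (hQ i), smul_eq_mul]
  exact mul_left_comm _ _ _

theorem exists_fieldPairing_eq [CharZero K] (φ : Module.Dual K (Vect K n)) (k : ℕ) :
    ∃ Q ∈ homogFields K n k, ∀ D ∈ homogFields K n k, fieldPairing Q D = φ D := by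
  let c (i : Fin n) (α : Fin n →₀ ℕ) : K :=
    φ (monomial α (1 : K) • constField (Pi.single i (1 : K)))
  let f (i : Fin n) : MvPolynomial (Fin n) K := ∑ α ∈ Finset.finsuppAntidiag Finset.univ k,
    monomial α ((multiFactorial α : K)⁻¹ * c i α)
  refine ⟨∑ i, f i • constField (Pi.single i 1), Submodule.sum_mem _ fun i _ => ?_,
    fun D hD => ?_⟩
  · exact smul_mem_homogFields (IsHomogeneous.sum _ _ _ fun α hα =>
      isHomogeneous_monomial _ (mem_finsuppAntidiag_univ.1 hα)) (constField_mem _)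
  conv_rhs => rw [eq_sum_smul_constField D]
  rw [map_sum, map_sum, LinearMap.sum_apply]
  refine Finset.sum_congr rfl fun i _ => ?_
  conv_rhs => rw [eq_sum_monomial_of_isHomogeneous (hD i), Finset.sum_smul, map_sum]
  rw [fieldPairing_smul_constField_single, map_sum, LinearMap.sum_apply]
  refine Finset.sum_congr rfl fun α _ => ?_
  have hsmul : (monomial α (coeff α (D (X i))) : MvPolynomial (Fin n) K) •
      constField (Pi.single i (1 : K)) = coeff α (D (X i)) •
        ((monomial α (1 : K) : MvPolynomial (Fin n) K) • constField (Pi.single i (1 : K))) := by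
    rw [← smul_assoc, smul_monomial, smul_eq_mul, mul_one]
  rw [apolarPairing_monomial, hsmul, map_smul φ (coeff α (D (X i))), smul_eq_mul]
  field_simp [multiFactorial_ne_zero (K := K) α]
  exact mul_comm _ _

/-- The annihilator, for the apolar pairing, of a space `M` of vector fields stable under constant
fields; it is a module over the polynomials, since multiplication by `X j` is adjoint to `∂ j`. -/
noncomputable def apolarAnnihilator (M : Submodule K (Vect K n))
    (hM : ∀ v : Fin n → K, ∀ D ∈ M, ⁅constField v, D⁆ ∈ M) :
    Submodule (MvPolynomial (Fin n) K) (Vect K n) where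
  carrier := {Q | ∀ D ∈ M, fieldPairing Q D = 0}
  add_mem' {a b} ha hb D hD := by rw [map_add, LinearMap.add_apply, ha D hD, hb D hD, add_zero]
  zero_mem' D _ := by rw [map_zero, LinearMap.zero_apply]
  smul_mem' p := by
    induction p using MvPolynomial.induction_on with
    | C a =>
      intro Q hQ D hD
      rw [C_smul, map_smul, LinearMap.smul_apply, hQ D hD, smul_zero]
    | add f g hf hg =>
      intro Q hQ D hD
      rw [add_smul, map_add, LinearMap.add_apply, hf hQ D hD, hg hQ D hD, add_zero]
    | mul_X f j hf =>
      intro Q hQ D hD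
      rw [mul_comm, mul_smul, fieldPairing_X_smul]
      exact hf hQ _ (hM _ D hD)

variable {M : Submodule K (Vect K n)} {hM : ∀ v : Fin n → K, ∀ D ∈ M, ⁅constField v, D⁆ ∈ M}

/-- Pairing with `ξ ^ k ∂_w` evaluates at `ξ` and projects to `w`, so that a functional separating
this field from `M` would be represented by an element of the annihilator. -/
theorem linForm_pow_smul_constField_mem_of_dotProduct_eq_zero [CharZero K] (hgr : IsGraded M)
    (ξ : Module.Dual K (Fin n → K)) (w : Fin n → K)
    (h : ∀ Q ∈ apolarAnnihilator M hM, w ⬝ᵥ valueAt (fun i => ξ (Pi.single i 1)) Q = 0) (k : ℕ) :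
    linForm ξ ^ k • constField w ∈ M := by
  by_contra hnot
  obtain ⟨φ, hφ, hφM⟩ := Submodule.exists_le_ker_of_notMem hnot
  obtain ⟨Q, hQ, hQφ⟩ := exists_fieldPairing_eq φ k
  have hQM : Q ∈ apolarAnnihilator M hM := fun D hD => by
    rw [← fieldPairing_homogComp hQ, hQφ _ (homogComp_mem k D)]
    exact hφM (hgr hD k)
  have hmem : linForm ξ ^ k • constField w ∈ homogFields K n k := by
    simpa using smul_mem_homogFields ((linForm_isHomogeneous ξ).pow k) (constField_mem w)
  apply hφ
  rw [← hQφ _ hmem, fieldPairing_linForm_pow_smul_constField hQ, h Q hQM, mul_zero]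

/-- Cramer's rule: the determinant of fields in `Q` whose values at `x` form a basis multiplies
every field into `Q`. -/
theorem exists_mem_colon_eval_ne_zero {Q : Submodule (MvPolynomial (Fin n) K) (Vect K n)}
    {x : Fin n → K} (h : ∀ c : Fin n → K, ∃ D ∈ Q, valueAt x D = c) :
    ∃ d ∈ Q.colon Set.univ, eval x d ≠ 0 := by
  choose q hq hqx using fun i : Fin n => h (Pi.single i 1)
  let T : Matrix (Fin n) (Fin n) (MvPolynomial (Fin n) K) := Matrix.of fun i j => q i (X j)
  refine ⟨T.det, Submodule.mem_colon.2 fun D _ => ?_, ?_⟩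
  · let p : Fin n → MvPolynomial (Fin n) K := fun j => D (X j)
    have hcramer : T.det • p = Matrix.vecMul (Matrix.vecMul p T.adjugate) T := by
      rw [Matrix.vecMul_vecMul, Matrix.adjugate_mul, Matrix.vecMul_smul, Matrix.vecMul_one]
    have hsum : T.det • D = ∑ i, Matrix.vecMul p T.adjugate i • q i :=
      derivation_ext fun j => by
        rw [sum_apply]
        exact congrFun hcramer j
    rw [hsum]
    exact Q.sum_mem fun i _ => Q.smul_mem _ (hq i)
  · have hT : (eval x).mapMatrix T = 1 := by
      ext i j
      exact (congrFun (hqx i) j).trans (by simp [Matrix.one_apply, Pi.single_apply, eq_comm])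
    rw [RingHom.map_det, hT, Matrix.det_one]
    exact one_ne_zero

theorem exists_linForm_pow_smul_constField_mem_of_valueAt_ne [CharZero K] (hgr : IsGraded M)
    {x c : Fin n → K} (hx : x ≠ 0) (hc : ∀ Q ∈ apolarAnnihilator M hM, valueAt x Q ≠ c) :
    ∃ (ξ : Module.Dual K (Fin n → K)) (w : Fin n → K), ξ ≠ 0 ∧ w ≠ 0 ∧
      ∀ k, linForm ξ ^ k • constField w ∈ M := by
  have hcmem : c ∉ ((apolarAnnihilator M hM).restrictScalars K).map (valueAt x) := by
    rintro ⟨Q, hQ, hQc⟩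
    exact hc Q hQ hQc
  obtain ⟨f, hfc, hf⟩ := Submodule.exists_le_ker_of_notMem hcmem
  let e := dotProductEquiv K (Fin n)
  have hex : (fun i => e x (Pi.single i 1)) = x := by
    ext i
    simp [e]
  refine ⟨e x, e.symm f, e.map_ne_zero_iff.2 hx, e.symm.map_ne_zero_iff.2 ?_,
    linForm_pow_smul_constField_mem_of_dotProduct_eq_zero (hM := hM) hgr _ _ fun Q hQ => ?_⟩
  · rintro rfl
    exact hfc rfl
  · rw [hex]
    exact (LinearMap.congr_fun (e.apply_symm_apply f) _).trans (hf ⟨Q, hQ, rfl⟩)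

theorem exists_forall_X_pow_mem_of_zeroLocus_subset [IsAlgClosed K]
    {I : Ideal (MvPolynomial (Fin n) K)} (hI : ∀ x ∈ zeroLocus K I, x = 0) :
    ∃ N, ∀ j, (X j : MvPolynomial (Fin n) K) ^ N ∈ I := by
  have hX (j : Fin n) : (X j : MvPolynomial (Fin n) K) ∈ I.radical := by
    rw [← vanishingIdeal_zeroLocus_eq_radical (K := K), mem_vanishingIdeal_iff]
    intro x hx
    simp [hI x hx]
  choose m hm using hX
  exact ⟨∑ j, m j, fun j => I.pow_mem_of_pow_mem (hm j)
    (Finset.single_le_sum (fun _ _ => Nat.zero_le _) (Finset.mem_univ j))⟩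

theorem eq_zero_of_X_pow_mem_colon [CharZero K] {N : ℕ}
    (hN : ∀ j, (X j : MvPolynomial (Fin n) K) ^ N ∈ (apolarAnnihilator M hM).colon Set.univ)
    {D : Vect K n} (hD : D ∈ M) (hDN : D ∈ homogFields K n (n * N + 1)) : D = 0 := by
  refine derivation_ext fun i => MvPolynomial.ext _ _ fun α => ?_
  rw [Derivation.zero_apply, coeff_zero]
  by_cases hα : α.degree = n * N + 1
  swap
  · exact (hDN i).coeff_eq_zero hα
  obtain ⟨j, hj⟩ : ∃ j, N ≤ α j := by
    by_contra! hlt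
    have hsum : ∑ i, α i ≤ ∑ _i : Fin n, N := Finset.sum_le_sum fun i _ => (hlt i).le
    rw [Finset.sum_const, Finset.card_univ, Fintype.card_fin, smul_eq_mul,
      ← Finsupp.degree_eq_sum, hα] at hsum
    omega
  have hmul : X j ^ N * monomial (α - Finsupp.single j N) 1 = monomial α (1 : K) := by
    rw [X_pow_eq_monomial, monomial_mul, one_mul,
      add_tsub_cancel_of_le (Finsupp.single_le_iff.2 hj)]
  have hpair := Submodule.mem_colon.1 (hN j)
    (monomial (α - Finsupp.single j N) (1 : K) • constField (Pi.single i 1)) trivial D hD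
  rw [← mul_smul, hmul, fieldPairing_smul_constField_single, apolarPairing_monomial, one_mul]
    at hpair
  exact (mul_eq_zero.1 hpair).resolve_left (multiFactorial_ne_zero α)

theorem exists_mem_homogFields_ne_zero_of_infinite [CharZero K]
    (hM : ∀ v : Fin n → K, ∀ D ∈ M, ⁅constField v, D⁆ ∈ M) (hgr : IsGraded M)
    (hinf : ¬ FiniteDimensional K M) (k : ℕ) : ∃ D ∈ M, D ∈ homogFields K n k ∧ D ≠ 0 := by
  by_contra! hzero
  have hvan (l : ℕ) (hl : k ≤ l) : ∀ D ∈ M, D ∈ homogFields K n l → D = 0 := by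
    induction l, hl using Nat.le_induction with
    | base => exact hzero
    | succ l _ ih =>
      exact fun D hD hDl => eq_zero_of_lie_constField hDl fun v =>
        ih _ (hM v D hD) (lie_mem_homogFields (constField_mem v) hDl (by omega))
  have hle : M ≤ fieldsDegreeLT K n k := fun D hD =>
    mem_fieldsDegreeLT.2 fun l hl => hvan l hl _ (hgr hD l) (homogComp_mem l D)
  have := finiteDimensional_fieldsDegreeLT (K := K) (n := n) k
  exact hinf (Submodule.finiteDimensional_of_le hle)

/-- Otherwise the values of the annihilator fill `Kⁿ` away from `0`, and by the Nullstellensatz it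
contains all fields of large degree. -/
theorem exists_linForm_pow_smul_constField_mem [CharZero K] [IsAlgClosed K]
    (hM : ∀ v : Fin n → K, ∀ D ∈ M, ⁅constField v, D⁆ ∈ M) (hgr : IsGraded M)
    (hinf : ¬ FiniteDimensional K M) :
    ∃ (ξ : Module.Dual K (Fin n → K)) (w : Fin n → K), ξ ≠ 0 ∧ w ≠ 0 ∧
      ∀ k, linForm ξ ^ k • constField w ∈ M := by
  by_contra hnone
  have hsurj (x : Fin n → K) (hx : x ≠ 0) (c : Fin n → K) :
      ∃ Q ∈ apolarAnnihilator M hM, valueAt x Q = c := by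
    by_contra! hc
    exact hnone (exists_linForm_pow_smul_constField_mem_of_valueAt_ne hgr hx hc)
  obtain ⟨N, hN⟩ := exists_forall_X_pow_mem_of_zeroLocus_subset
    (I := (apolarAnnihilator M hM).colon Set.univ) fun x hx => by
      by_contra hx0
      obtain ⟨d, hd, hdx⟩ := exists_mem_colon_eval_ne_zero (hsurj x hx0)
      exact hdx (by simpa [aeval_eq_eval] using mem_zeroLocus_iff.1 hx d hd)
  obtain ⟨D, hD, hDN, hD0⟩ :=
    exists_mem_homogFields_ne_zero_of_infinite hM hgr hinf (n * N + 1)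
  exact hD0 (eq_zero_of_X_pow_mem_colon hN hD hDN)

end Apolarity

/-! ### Generating all vector fields -/

section Generation

variable {K : Type*} [Field K] {n : ℕ}

theorem linField_smulRight_apply (η : Module.Dual K (Fin n → K)) (v : Fin n → K)
    (f : MvPolynomial (Fin n) K) :
    linField (η.smulRight v) f = linForm η * constField v f := by
  rw [linField_smulRight, Derivation.smul_apply, smul_eq_mul]

theorem constField_linField_apply (A : Module.End K (Fin n → K)) (v : Fin n → K)
    (f : MvPolynomial (Fin n) K) :
    constField v (linField A f) = linField A (constField v f) + constField (A v) f := by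
  rw [← lie_constField_linField, Derivation.commutator_apply]
  ring

theorem linForm_pow_mul_linForm_mul_mem [CharZero K] {F : Submodule K (MvPolynomial (Fin n) K)}
    (hF : ∀ f ∈ F, ∀ (η : Module.Dual K (Fin n → K)) (v : Fin n → K),
      linForm η * constField v f ∈ F)
    {ξ η : Module.Dual K (Fin n → K)} {v : Fin n → K} (hξ : ξ v = 1)
    {p : MvPolynomial (Fin n) K} (hp : constField v p = 0) (hpF : ∀ k, linForm ξ ^ k * p ∈ F)
    (k : ℕ) : linForm ξ ^ k * (linForm η * p) ∈ F := by
  have hmem := hF _ (hpF (k + 1)) η v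
  have hcalc : linForm η * constField v (linForm ξ ^ (k + 1) * p)
      = ((k : K) + 1) • (linForm ξ ^ k * (linForm η * p)) := by
    rw [Derivation.leibniz, hp, constField_linForm_pow, hξ, Nat.add_sub_cancel, smul_eq_C_mul,
      smul_zero, smul_eq_mul, mul_one, Nat.cast_succ]
    ring
  rw [hcalc] at hmem
  exact (F.smul_mem_iff (Nat.cast_add_one_ne_zero k)).1 hmem

/-- Choosing `v` with `ξ v = 1`, the polynomials are generated by `ξ` and the linear forms that
vanish on `v`. -/
theorem eq_top_of_linForm_pow_mem [CharZero K] {F : Submodule K (MvPolynomial (Fin n) K)}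
    {ξ : Module.Dual K (Fin n → K)} (hξ : ξ ≠ 0) (hpow : ∀ k, linForm ξ ^ k ∈ F)
    (hF : ∀ f ∈ F, ∀ (η : Module.Dual K (Fin n → K)) (v : Fin n → K),
      linForm η * constField v f ∈ F) : F = ⊤ := by
  obtain ⟨v, hv⟩ := LinearMap.surjective hξ 1
  let S : Set (MvPolynomial (Fin n) K) := {p | constField v p = 0 ∧ ∀ k, linForm ξ ^ k * p ∈ F}
  let T : Submodule K (MvPolynomial (Fin n) K) :=
    Submodule.span K {f | ∃ k : ℕ, ∃ p ∈ S, f = linForm ξ ^ k * p}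
  have hT1 : 1 ∈ T := Submodule.subset_span ⟨0, 1, ⟨by simp, by simpa using hpow⟩, by simp⟩
  have hTX (j : Fin n) : T ≤ T.comap (LinearMap.mulRight K (X j)) := by
    refine Submodule.span_le.2 ?_
    rintro _ ⟨k, p, hp, rfl⟩
    let η : Module.Dual K (Fin n → K) := LinearMap.proj j - v j • ξ
    have hη : η v = 0 := by simp [η, hv]
    have hηp : linForm η * p ∈ S := by
      refine ⟨?_, linForm_pow_mul_linForm_mul_mem hF hv hp.1 hp.2⟩
      rw [Derivation.leibniz, hp.1, constField_linForm, hη, map_zero, smul_zero, smul_zero,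
        add_zero]
    have hX : (X j : MvPolynomial (Fin n) K) = linForm η + v j • linForm ξ := by
      rw [← linForm_proj j, ← map_smul, ← map_add, sub_add_cancel]
    have hmul : linForm ξ ^ k * p * X j
        = linForm ξ ^ k * (linForm η * p) + v j • (linForm ξ ^ (k + 1) * p) := by
      rw [hX, smul_eq_C_mul, smul_eq_C_mul]
      ring
    change linForm ξ ^ k * p * X j ∈ T
    rw [hmul]
    exact T.add_mem (Submodule.subset_span ⟨k, _, hηp, rfl⟩)
      (T.smul_mem _ (Submodule.subset_span ⟨k + 1, p, hp, rfl⟩))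
  have hTF : T ≤ F := Submodule.span_le.2 fun f ⟨k, p, hp, hf⟩ => hf ▸ hp.2 k
  refine eq_top_iff.2 fun f _ => hTF ?_
  induction f using MvPolynomial.induction_on with
  | C a => simpa [smul_eq_C_mul] using T.smul_mem a hT1
  | add f g hf hg => exact T.add_mem (hf trivial) (hg trivial)
  | mul_X f j hf => exact hTX j (hf trivial)

/-- The divergence of a vector field. -/
noncomputable def divergence : Vect K n →ₗ[K] MvPolynomial (Fin n) K where
  toFun D := ∑ i, pderiv i (D (X i))
  map_add' D D' := by simp only [Derivation.add_apply, map_add, Finset.sum_add_distrib]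
  map_smul' a D := by
    simp only [Derivation.smul_apply, Derivation.map_smul, Finset.smul_sum, RingHom.id_apply]

theorem divergence_apply (D : Vect K n) : divergence D = ∑ i, pderiv i (D (X i)) := rfl

theorem divergence_smul_constField (f : MvPolynomial (Fin n) K) (w : Fin n → K) :
    divergence (f • constField w) = constField w f := by
  rw [divergence_apply, apply_eq_sum (constField w) f]
  refine Finset.sum_congr rfl fun i _ => ?_
  rw [Derivation.smul_apply, constField_X, smul_eq_mul, Derivation.leibniz, derivation_C,
    smul_zero, zero_add, smul_eq_mul]

theorem divergence_constField (w : Fin n → K) : divergence (constField w) = 0 := by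
  simp [divergence_apply]

theorem sum_pderiv_apply (D D' : Vect K n) :
    ∑ i, pderiv i (D (D' (X i))) = D (divergence D') +
      ∑ i, ∑ j, pderiv i (D (X j)) * pderiv j (D' (X i)) := by
  rw [divergence_apply, map_sum, ← Finset.sum_add_distrib]
  refine Finset.sum_congr rfl fun i _ => ?_
  have hcomm : pderiv i (D (D' (X i))) = D (pderiv i (D' (X i))) +
      ⁅constField (Pi.single i (1 : K)), D⁆ (D' (X i)) := by
    rw [Derivation.commutator_apply, constField_single]
    ring
  rw [hcomm, apply_eq_sum ⁅constField (Pi.single i (1 : K)), D⁆]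
  simp only [lie_constField_X, ← constField_single]

theorem divergence_lie (D D' : Vect K n) :
    divergence ⁅D, D'⁆ = D (divergence D') - D' (divergence D) := by
  have hlie : divergence ⁅D, D'⁆ = ∑ i, pderiv i (D (D' (X i))) - ∑ i, pderiv i (D' (D (X i))) := by
    rw [divergence_apply, ← Finset.sum_sub_distrib]
    exact Finset.sum_congr rfl fun i _ => by rw [lie_X, map_sub]
  have hsymm : ∑ i, ∑ j, pderiv i (D (X j)) * pderiv j (D' (X i)) =
      ∑ i, ∑ j, pderiv i (D' (X j)) * pderiv j (D (X i)) := by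
    rw [Finset.sum_comm]
    exact Finset.sum_congr rfl fun i _ => Finset.sum_congr rfl fun j _ => mul_comm _ _
  rw [hlie, sum_pderiv_apply, sum_pderiv_apply, hsymm]
  ring

theorem divergence_of_mem_homogFields_one {D : Vect K n} (hD : D ∈ homogFields K n 1) :
    divergence D = C (linTrace D) := by
  rw [divergence_apply, linTrace_apply, map_sum]
  refine Finset.sum_congr rfl fun i _ => ?_
  have hconst : (pderiv i (D (X i))).IsHomogeneous 0 := (hD i).pderiv
  rw [← totalDegree_zero_iff_isHomogeneous, totalDegree_eq_zero_iff_eq_C] at hconst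
  rw [hconst, coeff_pderiv]
  simp

theorem divergence_lie_linField (A : Module.End K (Fin n → K)) (D : Vect K n) :
    divergence ⁅linField A, D⁆ = linField A (divergence D) := by
  rw [divergence_lie, divergence_of_mem_homogFields_one (linField_mem A), derivation_C, sub_zero]

/-- The divergence-free field `∂_v f ∂_u - ∂_u f ∂_v`: the image of the bivector field
`f ∂_u ∧ ∂_v` under the Koszul differential. -/
noncomputable def koszulField (u v : Fin n → K) : MvPolynomial (Fin n) K →ₗ[K] Vect K n where
  toFun f := constField v f • constField u - constField u f • constField v
  map_add' f g := by
    rw [map_add, map_add, add_smul (constField v f) _ (constField u),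
      add_smul (constField u f) _ (constField v)]
    abel
  map_smul' a f := by
    rw [Derivation.map_smul, Derivation.map_smul, smul_assoc, smul_assoc, RingHom.id_apply,
      smul_sub a]

theorem koszulField_apply (u v : Fin n → K) (f : MvPolynomial (Fin n) K) :
    koszulField u v f = constField v f • constField u - constField u f • constField v := rfl

theorem koszulField_linForm_pow (u v : Fin n → K) (ξ : Module.Dual K (Fin n → K)) (k : ℕ) :
    koszulField u v (linForm ξ ^ k) =
      (k : K) • (linForm ξ ^ (k - 1) • constField (ξ v • u - ξ u • v)) := by
  refine derivation_ext fun i => ?_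
  simp only [koszulField_apply, constField_linForm_pow, map_sub, map_smul, Derivation.smul_apply,
    Derivation.sub_apply, smul_eq_mul, smul_eq_C_mul, map_mul]
  ring

theorem koszulField_linField_apply (A : Module.End K (Fin n → K)) (u v : Fin n → K)
    (f : MvPolynomial (Fin n) K) :
    koszulField u v (linField A f) =
      ⁅linField A, koszulField u v f⁆ + koszulField u (A v) f + koszulField (A u) v f := by
  simp only [koszulField_apply]
  rw [vect_lie_sub, lie_smul_right, lie_smul_right, lie_linField_constField,
    lie_linField_constField, constField_linField_apply, constField_linField_apply]
  refine derivation_ext fun i => ?_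
  simp only [Derivation.smul_apply, Derivation.add_apply, Derivation.sub_apply,
    Derivation.neg_apply, smul_eq_mul]
  ring

/-- The Koszul homotopy formula: the contraction with the Euler field inverts the Koszul
differential on divergence-free fields, up to the degree. -/
theorem sum_koszulField (D : Vect K n) :
    ∑ i, ∑ j, koszulField (Pi.single i (1 : K)) (Pi.single j (1 : K)) (X j * D (X i)) =
      (n : K) • D + ⁅euler K n, D⁆ - divergence D • euler K n := by
  have hfirst (i : Fin n) : ∑ j, pderiv j (X j * D (X i))
      = ((n : K) • D + ⁅euler K n, D⁆ + D) (X i) := by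
    have hE : euler K n (D (X i)) = ∑ j, X j * pderiv j (D (X i)) :=
      (apply_eq_sum _ _).trans (Finset.sum_congr rfl fun j _ => by rw [euler_X])
    have hlie : ((n : K) • D + ⁅euler K n, D⁆ + D) (X i)
        = (n : K) • D (X i) + euler K n (D (X i)) := by
      simp only [Derivation.add_apply, Derivation.smul_apply, lie_X, euler_X]
      ring
    rw [hlie, hE]
    simp [Derivation.leibniz, Finset.sum_add_distrib, smul_eq_C_mul, add_comm]
  have hsecond (i : Fin n) :
      ∑ j, pderiv i (X j * D (X i)) • constField (Pi.single j (1 : K))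
        = D (X i) • constField (Pi.single i 1) + pderiv i (D (X i)) • euler K n := by
    refine derivation_ext fun l => ?_
    simp [sum_apply, Derivation.leibniz, pderiv_X, Pi.single_apply, add_comm, mul_comm]
  have hdiv : ∑ i, pderiv i (D (X i)) • euler K n = divergence D • euler K n :=
    (Finset.sum_smul (R := MvPolynomial (Fin n) K)).symm
  have hkoszul (i j : Fin n) : koszulField (Pi.single i (1 : K)) (Pi.single j (1 : K))
      (X j * D (X i)) = pderiv j (X j * D (X i)) • constField (Pi.single i 1) -
        pderiv i (X j * D (X i)) • constField (Pi.single j 1) := by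
    rw [koszulField_apply, constField_single, constField_single]
  simp only [hkoszul, Finset.sum_sub_distrib, hsecond, Finset.sum_add_distrib, hdiv,
    ← Finset.sum_smul, hfirst]
  rw [← eq_sum_smul_constField, ← eq_sum_smul_constField D]
  abel

theorem homogComp_euler_lie (k : ℕ) (D : Vect K n) :
    homogComp k ⁅euler K n, D⁆ = ((k : K) - 1) • homogComp k D := by
  refine derivation_ext fun i => MvPolynomial.ext _ _ fun m => ?_
  rw [homogComp_X, Derivation.smul_apply, homogComp_X, lie_X, euler_X, map_sub, coeff_sub,
    coeff_smul, coeff_homogeneousComponent, coeff_homogeneousComponent]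
  split_ifs with hm
  · rw [coeff_euler, hm, smul_eq_mul]
    ring
  · simp

theorem mem_of_smul_add_euler_lie_mem [CharZero K] {M : Submodule K (Vect K n)}
    (hgr : IsGraded M) (hc : ∀ v, constField v ∈ M) {c : ℕ} (hc0 : c ≠ 0) {D : Vect K n}
    (hD : (c : K) • D + ⁅euler K n, D⁆ ∈ M) : D ∈ M := by
  refine mem_of_homogComp_mem fun k => ?_
  obtain _ | k := k
  · obtain ⟨v, hv⟩ := mem_homogFields_zero.1 (homogComp_mem 0 D)
    exact hv ▸ hc v
  · have hk := hgr hD (k + 1)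
    have hcalc : (c : K) • homogComp (k + 1) D + (((k + 1 : ℕ) : K) - 1) • homogComp (k + 1) D
        = ((c + k : ℕ) : K) • homogComp (k + 1) D := by
      push_cast
      module
    rw [map_add, map_smul, homogComp_euler_lie, hcalc] at hk
    exact (M.smul_mem_iff (Nat.cast_ne_zero.2 (by omega))).1 hk

section Subalgebra

variable {M : LieSubalgebra K (Vect K n)} {ξ : Module.Dual K (Fin n → K)} {w : Fin n → K}

theorem linForm_pow_smul_constField_mem_of_apply_eq_zero (hlin : ∀ A, linField A ∈ M)
    (hw : w ≠ 0) (hpow : ∀ k, linForm ξ ^ k • constField w ∈ M) {u : Fin n → K} (hu : ξ u = 0)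
    (k : ℕ) : linForm ξ ^ k • constField u ∈ M := by
  have hlie (η : Module.Dual K (Fin n → K)) :
      ⁅linField (η.smulRight u), linForm ξ ^ k • constField w⁆
        = -(η w • (linForm ξ ^ k • constField u)) := by
    rw [lie_smul_right, linField_smulRight_apply, constField_linForm_pow, hu,
      lie_linField_constField, LinearMap.smulRight_apply, map_smul, mul_zero, map_zero, zero_mul,
      mul_zero, zero_smul (MvPolynomial (Fin n) K) (constField w), zero_add, smul_neg,
      smul_comm (η w)]
  obtain ⟨η, hη⟩ := Module.Projective.exists_dual_eq_one K hw
  have hmem := M.lie_mem (hlin (η.smulRight u)) (hpow k)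
  rw [hlie, hη, one_smul] at hmem
  exact neg_mem_iff.1 hmem

theorem koszulField_mem [CharZero K] (hlin : ∀ A, linField A ∈ M) (hξ : ξ ≠ 0) (hw : w ≠ 0)
    (hpow : ∀ k, linForm ξ ^ k • constField w ∈ M) (u v : Fin n → K)
    (f : MvPolynomial (Fin n) K) : koszulField u v f ∈ M := by
  let F : Submodule K (MvPolynomial (Fin n) K) :=
    ⨅ u : Fin n → K, ⨅ v : Fin n → K, M.toSubmodule.comap (koszulField u v)
  have hF (f) : f ∈ F ↔ ∀ u v, koszulField u v f ∈ M := by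
    simp [F, Submodule.mem_iInf]
  suffices h : F = ⊤ from (hF f).1 (h ▸ Submodule.mem_top) u v
  refine eq_top_of_linForm_pow_mem hξ (fun k => (hF _).2 fun u v => ?_) fun f hf η v₀ => ?_
  · rw [koszulField_linForm_pow]
    exact M.smul_mem _ (linForm_pow_smul_constField_mem_of_apply_eq_zero hlin hw hpow
      (by simp [mul_comm]) _)
  · rw [hF] at hf ⊢
    intro u v
    rw [← linField_smulRight_apply, koszulField_linField_apply]
    exact M.add_mem (M.add_mem (M.lie_mem (hlin _) (hf u v)) (hf _ _)) (hf _ _)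

theorem linForm_pow_mem_map_divergence [CharZero K]
    (hpow : ∀ k, linForm ξ ^ k • constField w ∈ M) {D : Vect K n} (hD : D ∈ M)
    (hD2 : D ∈ homogFields K n 2) (htr : linTrace ⁅constField w, D⁆ ≠ 0) (k : ℕ) :
    linForm ξ ^ k ∈ M.toSubmodule.map divergence := by
  by_cases hξw : ξ w = 0
  · have hdiv : constField w (divergence D) = C (linTrace ⁅constField w, D⁆) := by
      rw [← divergence_of_mem_homogFields_one
        (lie_mem_homogFields (constField_mem w) hD2 (by omega)), divergence_lie,
        divergence_constField, map_zero, sub_zero]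
    have hlie : divergence ⁅linForm ξ ^ k • constField w, D⁆
        = linTrace ⁅constField w, D⁆ • linForm ξ ^ k := by
      rw [divergence_lie, divergence_smul_constField, constField_linForm_pow, hξw, mul_zero,
        map_zero, zero_mul, map_zero, sub_zero, Derivation.smul_apply, hdiv, smul_eq_C_mul,
        smul_eq_mul, mul_comm]
    exact (Submodule.smul_mem_iff _ htr).1 (hlie ▸ ⟨_, M.lie_mem (hpow k) hD, rfl⟩)
  · have hdiv : divergence (linForm ξ ^ (k + 1) • constField w)
        = (((k : K) + 1) * ξ w) • linForm ξ ^ k := by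
      rw [divergence_smul_constField, constField_linForm_pow, Nat.add_sub_cancel, smul_eq_C_mul,
        Nat.cast_succ]
    exact (Submodule.smul_mem_iff _ (mul_ne_zero (Nat.cast_add_one_ne_zero k) hξw)).1
      (hdiv ▸ ⟨_, hpow (k + 1), rfl⟩)

theorem map_divergence_eq_top [CharZero K] (hlin : ∀ A, linField A ∈ M) (hξ : ξ ≠ 0)
    (hpow : ∀ k, linForm ξ ^ k • constField w ∈ M) {D : Vect K n} (hD : D ∈ M)
    (hD2 : D ∈ homogFields K n 2) (htr : linTrace ⁅constField w, D⁆ ≠ 0) :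
    M.toSubmodule.map divergence = ⊤ := by
  refine eq_top_of_linForm_pow_mem hξ (linForm_pow_mem_map_divergence hpow hD hD2 htr) ?_
  rintro _ ⟨Z, hZ, rfl⟩ η v
  rw [← linField_smulRight_apply, ← divergence_lie_linField]
  exact ⟨_, M.lie_mem (hlin _) hZ, rfl⟩

theorem eq_top_of_linForm_pow_smul_constField_mem [CharZero K] (hc : ∀ v, constField v ∈ M)
    (hlin : ∀ A, linField A ∈ M) (hξ : ξ ≠ 0) (hw : w ≠ 0)
    (hpow : ∀ k, linForm ξ ^ k • constField w ∈ M) {D : Vect K n} (hD : D ∈ M)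
    (hD2 : D ∈ homogFields K n 2) (htr : linTrace ⁅constField w, D⁆ ≠ 0) : M = ⊤ := by
  have hn : n ≠ 0 := by
    rintro rfl
    exact hw (Subsingleton.elim w 0)
  have hgr : IsGraded M.toSubmodule := isGraded_of_euler_lie_mem fun Z hZ =>
    M.lie_mem (linField_one (K := K) (n := n) ▸ hlin 1) hZ
  refine eq_top_iff.2 fun Y _ => ?_
  obtain ⟨Z, hZ, hZY⟩ : divergence Y ∈ M.toSubmodule.map divergence :=
    map_divergence_eq_top hlin hξ hpow hD hD2 htr ▸ Submodule.mem_top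
  suffices h : Y - Z ∈ M.toSubmodule from sub_add_cancel Y Z ▸ M.add_mem h hZ
  refine mem_of_smul_add_euler_lie_mem hgr hc hn ?_
  have hsum := sum_koszulField (Y - Z)
  rw [map_sub, hZY, sub_self, zero_smul, sub_zero] at hsum
  rw [← hsum]
  exact M.toSubmodule.sum_mem fun i _ => M.toSubmodule.sum_mem fun j _ =>
    koszulField_mem hlin hξ hw hpow _ _ _

end Subalgebra

end Generation

/-! ### Maximality over an algebraically closed field -/

section Closed

attribute [local instance] LieRing.ofAssociativeRing LieAlgebra.ofAssociativeAlgebra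

variable {K : Type*} [Field K] {n : ℕ}

theorem IsPrimitive.linearPart_eq_top [CharZero K] [IsAlgClosed K] {M : LieSubalgebra K (Vect K n)}
    (h : IsPrimitive M) (he : euler K n ∈ M) {ξ : Module.Dual K (Fin n → K)} {w : Fin n → K}
    (hξ : ξ ≠ 0) (hw : w ≠ 0) (hξw : linForm ξ • constField w ∈ M) {D : Vect K n} (hD : D ∈ M)
    (hD2 : D ∈ homogFields K n 2) (htr : linTrace ⁅constField w, D⁆ ≠ 0) : linearPart M = ⊤ := by
  choose X hX using fun v : Fin n → K =>
    mem_homogFields_one.1 (lie_mem_homogFields (PolyVect.constField_mem v) hD2 (c := 1) (by omega))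
  refine eq_top_of_smulRight_mem h.irreducible ?_ hw hξ ?_ (X := X) (fun v => ?_)
    (fun u v => constField_injective ?_) ?_
  · rwa [mem_linearPart, linField_one]
  · rwa [mem_linearPart, linField_smulRight]
  · rw [mem_linearPart, ← hX]
    exact M.lie_mem (h.constField_mem v) hD
  · rw [← lie_constField_linField, ← lie_constField_linField, ← hX, ← hX,
      vect_leibniz_lie (constField v), lie_constField_constField, vect_zero_lie, zero_add]
  · rwa [← linTrace_linField, ← hX]

theorem IsPrimitive.eq_or_eq_top [CharZero K] [IsAlgClosed K] {L M : LieSubalgebra K (Vect K n)}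
    [FiniteDimensional K L] (h : IsPrimitive L) (hgr : IsGraded L.toSubmodule) (hLM : L ≤ M) :
    M = L ∨ M = ⊤ := by
  have heL : euler K n ∈ L := h.euler_mem hgr
  by_cases hfd : FiniteDimensional K M
  · exact Or.inl (h.eq_of_finiteDimensional heL hLM)
  have hM : IsPrimitive M := h.mono hLM
  have hgrM : IsGraded M.toSubmodule :=
    isGraded_of_euler_lie_mem fun D hD => M.lie_mem (hLM heL) hD
  obtain ⟨ξ, w, hξ, hw, hpow⟩ := exists_linForm_pow_smul_constField_mem
    (fun v D hD => M.lie_mem (hM.constField_mem v) hD) hgrM hfd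
  obtain ⟨D, hDL, hD2, htr⟩ := h.exists_linTrace_ne_zero hgr hw
  have hlin : linearPart M = ⊤ := hM.linearPart_eq_top (hLM heL) hξ hw
    (pow_one (linForm ξ) ▸ hpow 1) (hLM hDL) hD2 htr
  exact Or.inr (eq_top_of_linForm_pow_smul_constField_mem hM.constField_mem
    (fun A => mem_linearPart.1 (hlin ▸ LieSubalgebra.mem_top A)) hξ hw hpow (hLM hDL) hD2 htr)

end Closed

/-! ### Extension of scalars -/

section Density

variable {K V : Type*} [Field K] [AddCommGroup V] [Module K V] [FiniteDimensional K V]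

/- A `K`-linear map is linear over the bicommutant of `S`, because the commutant consists of
scalars; so Jacobson's density theorem applies to it. -/
theorem ActsIrreducibly.adjoin_eq_top {S : Set (Module.End K V)} (hS : ActsIrreducibly S)
    (hcomm : HasScalarCommutant S) : Algebra.adjoin K S = ⊤ := by
  rcases subsingleton_or_nontrivial V with _ | _
  · exact Subsingleton.elim _ _
  have hsub {A : Module.End K V} (hA : A ∈ S) : A ∈ Algebra.adjoin K S :=
    Algebra.subset_adjoin hA
  have : IsSimpleModule (Algebra.adjoin K S) V :=
    { eq_bot_or_eq_top := fun W => by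
        refine (hS (W.restrictScalars K) fun A hA u hu =>
          W.smul_mem (⟨A, hsub hA⟩ : Algebra.adjoin K S) hu).imp (fun h => ?_) fun h => ?_
        · exact (Submodule.restrictScalars_eq_bot_iff _ _ _).1 h
        · exact (Submodule.restrictScalars_eq_top_iff _ _ _).1 h }
  refine eq_top_iff.2 fun A _ => ?_
  let A' : Module.End (Module.End (Algebra.adjoin K S) V) V :=
    { A with
      map_smul' := fun T u => by
        obtain ⟨c, hc⟩ := hcomm (T.restrictScalars K) fun B hB =>
          LinearMap.ext fun v => T.map_smul (⟨B, hsub hB⟩ : Algebra.adjoin K S) v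
        have hT (v : V) : T v = c • v := LinearMap.congr_fun hc v
        change A (T u) = T (A u)
        rw [hT, hT, map_smul] }
  let b := Module.finBasis K V
  obtain ⟨B, hB⟩ := jacobson_density A' (Finset.univ.map ⟨b, b.injective⟩)
  have hAB : A = B := b.ext fun i => hB (b i) (Finset.mem_map_of_mem _ (Finset.mem_univ i))
  exact hAB ▸ B.2

end Density

section ExtendScalars

attribute [local instance] LieRing.ofAssociativeRing LieAlgebra.ofAssociativeAlgebra

variable {K : Type*} [Field K] {n : ℕ} (F : Type*) [Field F] [Algebra K F]

/-- The extension of scalars `Aᶠ` of an endomorphism `A` of `Kⁿ` to `Fⁿ`: the same matrix. -/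
noncomputable def extendEnd : Module.End K (Fin n → K) →ₐ[K] Module.End F (Fin n → F) :=
  ((Matrix.toLinAlgEquiv' (R := F) (n := Fin n)).toAlgHom.restrictScalars K).comp
    ((Algebra.ofId K F).mapMatrix.comp LinearMap.toMatrixAlgEquiv'.toAlgHom)

theorem extendEnd_single_apply (A : Module.End K (Fin n → K)) (i k : Fin n) :
    extendEnd F A (Pi.single i 1) k = algebraMap K F (A (Pi.single i 1) k) := by
  simp [extendEnd, LinearMap.toMatrixAlgEquiv'_apply, Algebra.ofId_apply]

theorem extendEnd_smulRight_proj (u : Fin n → F) (i k : Fin n) :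
    extendEnd F ((LinearMap.proj i : Module.Dual K (Fin n → K)).smulRight (Pi.single k 1)) u
      = u i • Pi.single k 1 := by
  have hsingle (l : Fin n) : extendEnd F ((LinearMap.proj i : Module.Dual K (Fin n → K)).smulRight
      (Pi.single k 1)) (Pi.single l 1) = (Pi.single l 1 : Fin n → F) i • Pi.single k 1 :=
    funext fun m => by
      rw [extendEnd_single_apply]
      simp [Pi.single_apply, apply_ite (algebraMap K F)]
  conv_lhs => rw [pi_eq_sum_univ' u]
  rw [map_sum]
  simp only [map_smul, hsingle]
  simp [Pi.single_apply]

theorem ActsIrreducibly.image_extendEnd {S : Set (Module.End K (Fin n → K))}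
    (hS : ActsIrreducibly S) (hcomm : HasScalarCommutant S) :
    ActsIrreducibly (extendEnd F '' S) := by
  intro W hW
  have hall (A : Module.End K (Fin n → K)) : ∀ u ∈ W, extendEnd F A u ∈ W := by
    have hA : A ∈ Algebra.adjoin K S := hS.adjoin_eq_top hcomm ▸ Algebra.mem_top
    induction hA using Algebra.adjoin_induction with
    | mem A hA => exact hW _ ⟨A, hA, rfl⟩
    | algebraMap c =>
      intro u hu
      rw [AlgHom.commutes, Module.algebraMap_end_apply, ← algebraMap_smul F]
      exact W.smul_mem _ hu
    | add A B _ _ hA hB =>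
      intro u hu
      rw [map_add]
      exact W.add_mem (hA u hu) (hB u hu)
    | mul A B _ _ hA hB =>
      intro u hu
      rw [map_mul]
      exact hA _ (hB u hu)
  refine or_iff_not_imp_left.2 fun hne => ?_
  obtain ⟨u, hu, hu0⟩ := W.ne_bot_iff.1 hne
  obtain ⟨i, hi⟩ := Function.ne_iff.1 hu0
  have hsingle (k : Fin n) : Pi.single k (1 : F) ∈ W :=
    (W.smul_mem_iff hi).1 (extendEnd_smulRight_proj (K := K) F u i k ▸ hall _ u hu)
  refine eq_top_iff.2 fun w _ => ?_
  rw [pi_eq_sum_univ' w]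
  exact W.sum_mem fun k _ => W.smul_mem _ (hsingle k)

/-- The extension of scalars of a vector field: its coefficients are regarded as polynomials
over `F`. -/
noncomputable def extendScalars : Vect K n →ₛₗ[algebraMap K F] Vect F n where
  toFun D := mkDerivation F fun i => map (algebraMap K F) (D (X i))
  map_add' D D' := derivation_ext fun i => by simp
  map_smul' a D := derivation_ext fun i => by
    simp only [Derivation.smul_apply, mkDerivation_X, smul_eq_C_mul, map_mul, map_C]

@[simp] theorem extendScalars_X (D : Vect K n) (i : Fin n) :
    extendScalars F D (X i) = map (algebraMap K F) (D (X i)) :=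
  mkDerivation_X _ _ _

theorem extendScalars_map (D : Vect K n) (f : MvPolynomial (Fin n) K) :
    extendScalars F D (map (algebraMap K F) f) = map (algebraMap K F) (D f) := by
  induction f using MvPolynomial.induction_on with
  | C a => rw [map_C, derivation_C, derivation_C, map_zero]
  | add f g hf hg => simp only [map_add, hf, hg]
  | mul_X f i hf =>
    simp only [map_mul, map_X, Derivation.leibniz, smul_eq_mul, map_add, hf, extendScalars_X]

theorem extendScalars_injective :
    Function.Injective (extendScalars F : Vect K n →ₛₗ[algebraMap K F] Vect F n) := fun D D' h =>
  derivation_ext fun i => map_injective _ (algebraMap K F).injective <| by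
    rw [← extendScalars_X, h, extendScalars_X]

theorem extendScalars_lie (D D' : Vect K n) :
    extendScalars F ⁅D, D'⁆ = ⁅extendScalars F D, extendScalars F D'⁆ :=
  derivation_ext fun i => by
    simp only [extendScalars_X, lie_X, extendScalars_map, map_sub]

theorem extendScalars_constField_single (i : Fin n) :
    extendScalars F (constField (Pi.single i (1 : K))) = constField (Pi.single i (1 : F)) :=
  derivation_ext fun k => by
    simp [Pi.single_apply]

theorem extendScalars_linField (A : Module.End K (Fin n → K)) :
    extendScalars F (linField A) = linField (extendEnd F A) :=
  derivation_ext fun i => by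
    simp [linForm_apply, extendEnd_single_apply]

theorem extendScalars_mem_homogFields {D : Vect K n} {k : ℕ} (hD : D ∈ homogFields K n k) :
    extendScalars F D ∈ homogFields F n k := fun i => by
  rw [extendScalars_X]
  exact (hD i).map _

theorem homogComp_extendScalars (k : ℕ) (D : Vect K n) :
    homogComp k (extendScalars F D) = extendScalars F (homogComp k D) :=
  derivation_ext fun i => by
    ext m
    simp only [homogComp_X, extendScalars_X, coeff_homogeneousComponent, coeff_map]
    split_ifs <;> simp

/-- The subalgebra of vector fields over `F` spanned by the extensions of the elements of `L`. -/
noncomputable def extendSubalgebra (L : LieSubalgebra K (Vect K n)) :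
    LieSubalgebra F (Vect F n) where
  __ := Submodule.span F (extendScalars F '' (L : Set (Vect K n)))
  lie_mem' {D D'} hD hD' := by
    induction hD, hD' using Submodule.span_induction₂ with
    | mem_mem D D' hD hD' =>
      obtain ⟨A, hA, rfl⟩ := hD
      obtain ⟨B, hB, rfl⟩ := hD'
      exact Submodule.subset_span ⟨⁅A, B⁆, L.lie_mem hA hB, extendScalars_lie F A B⟩
    | zero_left D _ => exact (vect_zero_lie D).symm ▸ Submodule.zero_mem _
    | zero_right D _ => exact (vect_lie_zero D).symm ▸ Submodule.zero_mem _
    | add_left D E D' _ _ _ h h' => exact (vect_add_lie D E D').symm ▸ Submodule.add_mem _ h h'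
    | add_right D E D' _ _ _ h h' => exact (vect_lie_add D E D').symm ▸ Submodule.add_mem _ h h'
    | smul_left c D D' _ _ h => exact (vect_smul_lie c D D').symm ▸ Submodule.smul_mem _ c h
    | smul_right c D D' _ _ h => exact (vect_lie_smul c D D').symm ▸ Submodule.smul_mem _ c h

variable {F}

theorem extendSubalgebra_le_iff {L : LieSubalgebra K (Vect K n)} {N : Submodule F (Vect F n)} :
    (extendSubalgebra F L).toSubmodule ≤ N ↔ ∀ D ∈ L, extendScalars F D ∈ N :=
  Submodule.span_le.trans Set.forall_mem_image

theorem extendScalars_mem_extendSubalgebra {L : LieSubalgebra K (Vect K n)} {D : Vect K n}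
    (hD : D ∈ L) : extendScalars F D ∈ extendSubalgebra F L :=
  extendSubalgebra_le_iff.1 le_rfl D hD

theorem extendSubalgebra_mono {L M : LieSubalgebra K (Vect K n)} (hLM : L ≤ M) :
    extendSubalgebra F L ≤ extendSubalgebra F M :=
  extendSubalgebra_le_iff.2 fun _ hD => extendScalars_mem_extendSubalgebra (hLM hD)

/-- The vector field over `K` whose coefficients are obtained from those of a vector field over `F`
by applying `r` to each scalar. -/
noncomputable def retract (r : F →ₗ[K] K) : Vect F n →+ Vect K n where
  toFun D := mkDerivation K fun i =>
    AddMonoidAlgebra.ofCoeff (Finsupp.mapRange.linearMap r (AddMonoidAlgebra.coeff (D (X i))))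
  map_zero' := derivation_ext fun i => by simp [mkDerivation_X]
  map_add' D E := derivation_ext fun i => by
    simp only [mkDerivation_X, Derivation.add_apply, AddMonoidAlgebra.coeff_add, map_add,
      AddMonoidAlgebra.ofCoeff_add]

theorem coeff_retract_X (r : F →ₗ[K] K) (D : Vect F n) (i : Fin n) (m : Fin n →₀ ℕ) :
    coeff m (retract r D (X i)) = r (coeff m (D (X i))) :=
  congrArg (coeff m) (mkDerivation_X K _ i)

theorem retract_smul_extendScalars (r : F →ₗ[K] K) (c : F) (D : Vect K n) :
    retract r (c • extendScalars F D) = r c • D :=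
  derivation_ext fun i => by
    ext m
    rw [coeff_retract_X, Derivation.smul_apply, coeff_smul, extendScalars_X, coeff_map,
      Derivation.smul_apply, coeff_smul, smul_eq_mul, mul_comm, ← Algebra.smul_def, map_smul,
      smul_eq_mul, smul_eq_mul, mul_comm]

theorem extendScalars_mem_extendSubalgebra_iff {L : LieSubalgebra K (Vect K n)} {D : Vect K n} :
    extendScalars F D ∈ extendSubalgebra F L ↔ D ∈ L := by
  refine ⟨fun hD => ?_, extendScalars_mem_extendSubalgebra⟩
  obtain ⟨r, hr⟩ := (Algebra.linearMap K F).exists_leftInverse_of_injective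
    (LinearMap.ker_eq_bot.2 (algebraMap K F).injective)
  have hr1 : r 1 = 1 := by simpa using LinearMap.congr_fun hr 1
  have hmem : ∀ E ∈ extendSubalgebra F L, ∀ c : F, retract r (c • E) ∈ L := by
    intro E hE
    induction hE using Submodule.span_induction with
    | mem E hE =>
      obtain ⟨A, hA, rfl⟩ := hE
      exact fun c => (retract_smul_extendScalars r c A).symm ▸ L.smul_mem _ hA
    | zero =>
      intro c
      rw [smul_zero, map_zero]
      exact L.zero_mem
    | add E E' _ _ hE hE' =>
      intro c
      rw [smul_add, map_add]
      exact L.add_mem (hE c) (hE' c)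
    | smul a E _ hE =>
      intro c
      rw [smul_smul]
      exact hE _
  have h1 := hmem _ hD 1
  rwa [retract_smul_extendScalars, hr1, one_smul] at h1

theorem isGraded_extendSubalgebra {L : LieSubalgebra K (Vect K n)} (hgr : IsGraded L.toSubmodule) :
    IsGraded (extendSubalgebra F L).toSubmodule := fun D hD k => by
  have hle : (extendSubalgebra F L).toSubmodule
      ≤ (extendSubalgebra F L).toSubmodule.comap (homogComp k) :=
    extendSubalgebra_le_iff.2 fun D hD => by
      rw [Submodule.mem_comap, homogComp_extendScalars]
      exact extendScalars_mem_extendSubalgebra (hgr hD k)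
  exact hle hD

theorem finiteDimensional_extendSubalgebra (L : LieSubalgebra K (Vect K n))
    [FiniteDimensional K L] : FiniteDimensional F (extendSubalgebra F L) := by
  have : FiniteDimensional K L.toSubmodule := ‹_›
  obtain ⟨N, hN⟩ := exists_le_fieldsDegreeLT L.toSubmodule
  have := finiteDimensional_fieldsDegreeLT (K := F) (n := n) N
  have hle : (extendSubalgebra F L).toSubmodule ≤ fieldsDegreeLT F n N :=
    extendSubalgebra_le_iff.2 fun D hD => mem_fieldsDegreeLT.2 fun k hk => by
      rw [homogComp_extendScalars, mem_fieldsDegreeLT.1 (hN hD) k hk, map_zero]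
  exact Submodule.finiteDimensional_of_le hle

theorem isPrimitive_extendSubalgebra {L : LieSubalgebra K (Vect K n)} (h : IsPrimitive L)
    (hcomm : HasScalarCommutant (linearPart L : Set (Module.End K (Fin n → K)))) :
    IsPrimitive (extendSubalgebra F L) where
  constField_mem v := by
    rw [pi_eq_sum_univ' v]
    simp only [map_sum, map_smul, ← extendScalars_constField_single (K := K) F]
    exact Submodule.sum_mem _ fun i _ => Submodule.smul_mem _ _
      (extendScalars_mem_extendSubalgebra (h.constField_mem _))
  irreducible W hW := by
    refine h.irreducible.image_extendEnd F hcomm W ?_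
    rintro _ ⟨A, hA, rfl⟩
    refine hW _ ?_
    rw [SetLike.mem_coe, mem_linearPart, ← extendScalars_linField]
    exact extendScalars_mem_extendSubalgebra hA
  exists_quadratic := by
    obtain ⟨D, hD, hD2, hne⟩ := h.exists_quadratic
    refine ⟨extendScalars F D, extendScalars_mem_extendSubalgebra hD,
      extendScalars_mem_homogFields F hD2, ?_⟩
    exact (map_ne_zero_iff _ (extendScalars_injective F)).2 hne

theorem IsPrimitive.eq_or_eq_top_of_hasScalarCommutant [CharZero K]
    {L M : LieSubalgebra K (Vect K n)} [FiniteDimensional K L] (h : IsPrimitive L)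
    (hgr : IsGraded L.toSubmodule)
    (hcomm : HasScalarCommutant (linearPart L : Set (Module.End K (Fin n → K)))) (hLM : L ≤ M) :
    M = L ∨ M = ⊤ := by
  let F := AlgebraicClosure K
  have hfd : FiniteDimensional F (extendSubalgebra F L) := finiteDimensional_extendSubalgebra L
  have hF : IsPrimitive (extendSubalgebra F L) := isPrimitive_extendSubalgebra h hcomm
  refine (hF.eq_or_eq_top (isGraded_extendSubalgebra hgr) (extendSubalgebra_mono hLM)).imp
    (fun hM => hLM.antisymm' fun D hD => ?_) fun hM => eq_top_iff.2 fun D _ => ?_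
  · exact extendScalars_mem_extendSubalgebra_iff.1
      (hM ▸ extendScalars_mem_extendSubalgebra (F := F) hD)
  · exact (extendScalars_mem_extendSubalgebra_iff (F := F)).1
      (hM.symm ▸ LieSubalgebra.mem_top _)

end ExtendScalars

/-! ### The isotropy representation on constant fields -/

section Representation

attribute [local instance] LieRing.ofAssociativeRing LieAlgebra.ofAssociativeAlgebra

variable {K : Type*} [Field K] {n : ℕ}

/-- The endomorphism `J` of `Vect_pol(E)` restricts to an endomorphism of the representation
`(L₋₁, ad|_{L₀})`. -/
def IsIntertwinerRep (L : LieSubalgebra K (Vect K n)) (J : Vect K n →ₗ[K] Vect K n) : Prop :=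
  (∀ y ∈ L.toSubmodule ⊓ VectP K n (-1), J y ∈ L.toSubmodule ⊓ VectP K n (-1)) ∧
    ∀ x ∈ L.toSubmodule ⊓ VectP K n 0, ∀ y ∈ L.toSubmodule ⊓ VectP K n (-1), J ⁅x, y⁆ = ⁅x, J y⁆

/-- Every endomorphism of the representation `(L₋₁, ad|_{L₀})` is a homothety. -/
def HasScalarCommutantRep (L : LieSubalgebra K (Vect K n)) : Prop :=
  ∀ J, IsIntertwinerRep L J → ∃ c : K, ∀ y ∈ L.toSubmodule ⊓ VectP K n (-1), J y = c • y

theorem range_constField : LinearMap.range (constField (K := K) (n := n)) = homogFields K n 0 := by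
  ext D
  exact (mem_homogFields_zero.trans (exists_congr fun _ => eq_comm)).symm

theorem constField_mem_map_iff {F : Submodule K (Fin n → K)} {v : Fin n → K} :
    constField v ∈ F.map constField ↔ v ∈ F :=
  show constField v ∈ constField '' (F : Set (Fin n → K)) ↔ v ∈ F from
    constField_injective.mem_set_image

theorem forall_lie_mem_map_constField_iff {L : LieSubalgebra K (Vect K n)}
    {F : Submodule K (Fin n → K)} :
    (∀ x ∈ L.toSubmodule ⊓ homogFields K n 1, ∀ y ∈ F.map constField, ⁅x, y⁆ ∈ F.map constField) ↔
      ∀ A ∈ linearPart L, ∀ u ∈ F, A u ∈ F := by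
  have hlie (A : Module.End K (Fin n → K)) (u : Fin n → K) :
      ⁅linField A, constField u⁆ ∈ F.map constField ↔ A u ∈ F := by
    rw [lie_linField_constField, ← map_neg, constField_mem_map_iff, neg_mem_iff]
  constructor
  · exact fun h A hA u hu => (hlie A u).1
      (h _ ⟨hA, linField_mem A⟩ _ (Submodule.mem_map_of_mem hu))
  · rintro h x ⟨hxL, hx⟩ _ ⟨u, hu, rfl⟩
    obtain ⟨A, rfl⟩ := mem_homogFields_one.1 hx
    exact (hlie A u).2 (h A hxL u hu)

variable [CharZero K] {L : LieSubalgebra K (Vect K n)}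

theorem vectP_neg_one : VectP K n (-1) = homogFields K n 0 :=
  vectP_eq_homogFields 0 _ (by norm_num)

theorem vectP_zero : VectP K n 0 = homogFields K n 1 :=
  vectP_eq_homogFields 1 _ (by norm_num)

theorem vectP_one : VectP K n 1 = homogFields K n 2 :=
  vectP_eq_homogFields 2 _ (by norm_num)

theorem inf_vectP_neg_one_eq_iff :
    L.toSubmodule ⊓ VectP K n (-1) = VectP K n (-1) ↔ ∀ v, constField v ∈ L := by
  rw [inf_eq_right, vectP_neg_one, ← range_constField, LinearMap.range_le_iff_comap,
    Submodule.eq_top_iff']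
  rfl

theorem inf_vectP_one_ne_bot_iff :
    L.toSubmodule ⊓ VectP K n 1 ≠ ⊥ ↔ ∃ D ∈ L, D ∈ homogFields K n 2 ∧ D ≠ 0 := by
  simp only [vectP_one, Submodule.ne_bot_iff, Submodule.mem_inf, LieSubalgebra.mem_toSubmodule,
    and_assoc]

theorem inf_vectP_neg_one_eq_range (hc : ∀ v, constField v ∈ L) :
    L.toSubmodule ⊓ VectP K n (-1) = LinearMap.range (constField (K := K)) := by
  rw [inf_vectP_neg_one_eq_iff.2 hc, vectP_neg_one, range_constField]

theorem isIrreducibleRep_iff (hn : 0 < n) (hc : ∀ v, constField v ∈ L) :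
    IsIrreducibleRep K n L ↔
      ActsIrreducibly (linearPart L : Set (Module.End K (Fin n → K))) := by
  have : Nonempty (Fin n) := ⟨⟨0, hn⟩⟩
  have hinj : Function.Injective (Submodule.map (constField (K := K) (n := n))) :=
    Submodule.map_injective_of_injective constField_injective
  rw [IsIrreducibleRep, inf_vectP_neg_one_eq_range hc, vectP_zero, ← Submodule.map_top]
  constructor
  · rintro ⟨-, h⟩ F hF
    refine (h _ (Submodule.map_mono le_top) (forall_lie_mem_map_constField_iff.2 hF)).imp
      (fun hbot => hinj ?_) fun htop => hinj htop
    rw [hbot, Submodule.map_bot]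
  · refine fun h => ⟨fun hbot => top_ne_bot (hinj (hbot.trans (Submodule.map_bot _).symm)),
      fun F' hF' hst => ?_⟩
    obtain ⟨F, rfl⟩ : ∃ F : Submodule K (Fin n → K), F.map constField = F' :=
      ⟨_, Submodule.map_comap_eq_of_le (hF'.trans_eq (Submodule.map_top _))⟩
    refine (h F (forall_lie_mem_map_constField_iff.1 hst)).imp ?_ ?_ <;> rintro rfl
    exacts [Submodule.map_bot _, rfl]

theorem IsIntertwinerRep.exists_commute (hc : ∀ v, constField v ∈ L)
    {J : Vect K n →ₗ[K] Vect K n} (hJ : IsIntertwinerRep L J) :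
    ∃ T : Module.End K (Fin n → K), (∀ A ∈ linearPart L, Commute T A) ∧
      ∀ v, J (constField v) = constField (T v) := by
  rw [IsIntertwinerRep, inf_vectP_neg_one_eq_range hc, vectP_zero] at hJ
  obtain ⟨hrange, hlie⟩ := hJ
  have hT (v : Fin n → K) : J (constField v) = constField (valueAt 0 (J (constField v))) := by
    obtain ⟨w, hw⟩ := hrange _ ⟨v, rfl⟩
    rw [← hw, valueAt_constField]
  refine ⟨valueAt 0 ∘ₗ J ∘ₗ constField, fun A hA => LinearMap.ext fun u => ?_, hT⟩
  have h := hlie (linField A) ⟨hA, linField_mem A⟩ (constField u) ⟨u, rfl⟩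
  rw [lie_linField_constField, map_neg, hT u, lie_linField_constField, neg_inj, hT] at h
  exact constField_injective h

theorem isIntertwinerRep_of_commute (hc : ∀ v, constField v ∈ L) {T : Module.End K (Fin n → K)}
    (hT : ∀ A ∈ linearPart L, Commute T A) :
    IsIntertwinerRep L (constField ∘ₗ T ∘ₗ valueAt 0) := by
  rw [IsIntertwinerRep, inf_vectP_neg_one_eq_range hc, vectP_zero]
  refine ⟨fun y _ => ⟨T (valueAt 0 y), rfl⟩, ?_⟩
  rintro x ⟨hxL, hx⟩ _ ⟨u, rfl⟩
  obtain ⟨A, rfl⟩ := mem_homogFields_one.1 hx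
  have hTA : T (A u) = A (T u) := LinearMap.congr_fun (hT A hxL) u
  simp only [LinearMap.comp_apply, lie_linField_constField, map_neg, valueAt_constField, hTA]

theorem hasScalarCommutantRep_iff (hc : ∀ v, constField v ∈ L) :
    HasScalarCommutantRep L ↔
      HasScalarCommutant (linearPart L : Set (Module.End K (Fin n → K))) := by
  rw [HasScalarCommutantRep, inf_vectP_neg_one_eq_range hc]
  constructor
  · refine fun h T hT => (h _ (isIntertwinerRep_of_commute hc hT)).imp fun c hTc =>
      LinearMap.ext fun v => constField_injective ?_
    simpa using hTc _ ⟨v, rfl⟩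
  · intro h J hJ
    obtain ⟨T, hT, hJT⟩ := hJ.exists_commute hc
    obtain ⟨c, rfl⟩ := h T hT
    refine ⟨c, ?_⟩
    rintro _ ⟨v, rfl⟩
    simp [hJT]

theorem hasComplexStructureRep_iff (hc : ∀ v, constField v ∈ L) :
    HasComplexStructureRep K n L ↔
      ∃ J : Module.End K (Fin n → K), J * J = -1 ∧ ∀ A ∈ linearPart L, Commute J A := by
  constructor
  · rintro ⟨J, hrange, hsq, hlie⟩
    obtain ⟨T, hT, hJT⟩ := IsIntertwinerRep.exists_commute hc ⟨hrange, hlie⟩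
    refine ⟨T, LinearMap.ext fun v => constField_injective ?_, hT⟩
    have h := hsq (constField v) (inf_vectP_neg_one_eq_range hc ▸ ⟨v, rfl⟩)
    simpa [hJT] using h
  · rintro ⟨T, hsq, hT⟩
    obtain ⟨hrange, hlie⟩ := isIntertwinerRep_of_commute hc hT
    refine ⟨_, hrange, ?_, hlie⟩
    rw [inf_vectP_neg_one_eq_range hc]
    rintro _ ⟨v, rfl⟩
    have hv : T (T v) = -v := LinearMap.congr_fun hsq v
    simp [hv]

end Representation

/-! ### Commutants over the real and complex numbers -/

section Scalars

theorem ActsIrreducibly.hasScalarCommutant {K V : Type*} [Field K] [IsAlgClosed K]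
    [AddCommGroup V] [Module K V] [FiniteDimensional K V] {S : Set (Module.End K V)}
    (hS : ActsIrreducibly S) : HasScalarCommutant S := by
  intro T hT
  rcases subsingleton_or_nontrivial V with _ | _
  · exact ⟨0, Subsingleton.elim _ _⟩
  obtain ⟨c, hc⟩ := Module.End.exists_eigenvalue T
  obtain ⟨u, hu⟩ := hc.exists_hasEigenvector
  refine ⟨c, sub_eq_zero.1 (hS.eq_zero_of_commute (fun A hA => ?_) hu.2 ?_)⟩
  · exact (hT A hA).sub_left ((Commute.one_left A).smul_left c)
  · simp [hu.apply_eq_smul]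

variable {𝕜 : Type} [RCLike 𝕜]

theorem isAlgClosed_of_I_ne_zero (h : (RCLike.I : 𝕜) ≠ 0) : IsAlgClosed 𝕜 :=
  IsAlgClosed.of_ringEquiv ℂ 𝕜
    (RCLike.complexRingEquiv (RCLike.I_eq_zero_or_im_I_eq_one.resolve_left h)).symm

theorem mul_self_ne_neg_one_of_I_eq_zero (h : (RCLike.I : 𝕜) = 0) (c : 𝕜) : c * c ≠ -1 := by
  intro hc
  have hre := congrArg (RCLike.realRingEquiv h) hc
  rw [map_mul, map_neg, map_one] at hre
  nlinarith [mul_self_nonneg (RCLike.realRingEquiv h c)]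

theorem surjective_algebraMap_or_exists_mul_self_eq_neg_one {R : Type*} [Field R] [Algebra 𝕜 R]
    [Algebra.IsAlgebraic 𝕜 R] :
    Function.Surjective (algebraMap 𝕜 R) ∨ ∃ y : R, y * y = -1 := by
  let : Algebra ℝ R := Algebra.compHom R (algebraMap ℝ 𝕜)
  have : IsScalarTower ℝ 𝕜 R := IsScalarTower.of_algebraMap_eq fun _ => rfl
  have : Algebra.IsAlgebraic ℝ R := Algebra.IsAlgebraic.trans ℝ 𝕜 R
  rcases Real.nonempty_algEquiv_or R with ⟨⟨e⟩⟩ | ⟨⟨e⟩⟩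
  · refine Or.inl fun x => ⟨algebraMap ℝ 𝕜 (e x), e.injective ?_⟩
    rw [← IsScalarTower.algebraMap_apply, e.commutes]
    rfl
  · refine Or.inr ⟨e.symm Complex.I, e.injective ?_⟩
    simp

theorem ActsIrreducibly.eq_smul_one_or_exists_mul_self_eq_neg_one {V : Type*} [AddCommGroup V]
    [Module 𝕜 V] [FiniteDimensional 𝕜 V] {S : Set (Module.End 𝕜 V)} (hS : ActsIrreducibly S)
    {T : Module.End 𝕜 V} (hT : ∀ A ∈ S, Commute T A) :
    (∃ c : 𝕜, T = c • 1) ∨ ∃ J : Module.End 𝕜 V, J * J = -1 ∧ ∀ A ∈ S, Commute J A := by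
  rcases subsingleton_or_nontrivial V with _ | _
  · exact Or.inl ⟨0, Subsingleton.elim _ _⟩
  let R := Algebra.adjoin 𝕜 {T}
  have : IsDomain R := hS.isDomain_adjoin hT
  have : IsMulCommutative R := Algebra.isMulCommutative_adjoin 𝕜 (by simp)
  let : Field R := fieldOfFiniteDimensional 𝕜 R
  refine (surjective_algebraMap_or_exists_mul_self_eq_neg_one (𝕜 := 𝕜) (R := R)).imp
    (fun h => ?_) fun ⟨J, hJ⟩ => ⟨J, congrArg Subtype.val hJ, commute_of_mem_adjoin hT J.2⟩
  obtain ⟨c, hc⟩ := h ⟨T, Algebra.self_mem_adjoin_singleton 𝕜 T⟩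
  exact ⟨c, by rw [← Algebra.algebraMap_eq_smul_one]; exact (congrArg Subtype.val hc).symm⟩

theorem ActsIrreducibly.hasScalarCommutant_iff {V : Type*} [AddCommGroup V] [Module 𝕜 V]
    [FiniteDimensional 𝕜 V] [Nontrivial V] {S : Set (Module.End 𝕜 V)} (hS : ActsIrreducibly S) :
    HasScalarCommutant S ↔ ((RCLike.I : 𝕜) = 0 →
      ¬ ∃ J : Module.End 𝕜 V, J * J = -1 ∧ ∀ A ∈ S, Commute J A) := by
  constructor
  · rintro hcomm hI ⟨J, hJ, hJS⟩
    obtain ⟨c, rfl⟩ := hcomm J hJS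
    refine mul_self_ne_neg_one_of_I_eq_zero hI c (FaithfulSMul.algebraMap_injective 𝕜
      (Module.End 𝕜 V) ?_)
    simpa [Algebra.algebraMap_eq_smul_one, mul_smul] using hJ
  · intro h
    by_cases hI : (RCLike.I : 𝕜) = 0
    · exact fun T hT =>
        (hS.eq_smul_one_or_exists_mul_self_eq_neg_one hT).resolve_right (h hI)
    · have := isAlgClosed_of_I_ne_zero hI
      exact hS.hasScalarCommutant

end Scalars

theorem hasScalarCommutantRep_iff_of_rclike {𝕜 : Type} [RCLike 𝕜] {n : ℕ} (hn : 0 < n)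
    {L : LieSubalgebra 𝕜 (Vect 𝕜 n)}
    (hc : L.toSubmodule ⊓ VectP 𝕜 n (-1) = VectP 𝕜 n (-1)) (hirr : IsIrreducibleRep 𝕜 n L) :
    HasScalarCommutantRep L ↔ ((RCLike.I : 𝕜) = 0 → ¬ HasComplexStructureRep 𝕜 n L) := by
  have : Nonempty (Fin n) := ⟨⟨0, hn⟩⟩
  have hc' := inf_vectP_neg_one_eq_iff.1 hc
  rw [hasScalarCommutantRep_iff hc', hasComplexStructureRep_iff hc']
  exact ((isIrreducibleRep_iff hn hc').1 hirr).hasScalarCommutant_iff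

end PolyVect

open PolyVect

theorem statement0_general {K : Type*} [Field K] [CharZero K] {n : ℕ} (hn : 0 < n)
    (L : LieSubalgebra K (Vect K n)) (hgraded : IsGradedSubalg K n L)
    (hfd : FiniteDimensional K L) :
    IsMaxSubalg K n L ↔
      (L.toSubmodule ⊓ VectP K n (-1) = VectP K n (-1) ∧
       IsIrreducibleRep K n L ∧
       L.toSubmodule ⊓ VectP K n 1 ≠ ⊥ ∧
       HasScalarCommutantRep L) := by
  have hgr := hgraded.isGraded
  constructor
  · intro hmax
    have hc := constField_mem_of_isMaxSubalg hgr hmax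
    have hirr := actsIrreducibly_of_isMaxSubalg hgr hmax hc
    exact ⟨inf_vectP_neg_one_eq_iff.2 hc, (isIrreducibleRep_iff hn hc).2 hirr,
      inf_vectP_one_ne_bot_iff.2 (exists_quadratic_of_isMaxSubalg hn hgr hmax hc),
      (hasScalarCommutantRep_iff hc).2 (hasScalarCommutant_of_isMaxSubalg hgr hmax hc hirr)⟩
  · rintro ⟨h, hirr, hquad, hcomm⟩ M hLM
    have hc := inf_vectP_neg_one_eq_iff.1 h
    have hL : IsPrimitive L :=
      ⟨hc, (isIrreducibleRep_iff hn hc).1 hirr, inf_vectP_one_ne_bot_iff.1 hquad⟩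
    exact hL.eq_or_eq_top_of_hasScalarCommutant hgr ((hasScalarCommutantRep_iff hc).1 hcomm) hLM

/-- **Main theorem.** A finite-dimensional graded Lie subalgebra
`L = L₋₁ ⊕ L₀ ⊕ ⋯ ⊕ L_k` of `Vect_pol(E)` (`𝕜 = ℝ` or `ℂ`, i.e. `RCLike 𝕜`) is maximal iff
(1) `L₋₁ = Vect₋₁(E)`, (2) `L` is irreducible, (3) `L₁ ≠ 0`, and (4) in the real case
(characterized among `RCLike` fields by `RCLike.I = 0`), the representation `(L₋₁, ad|_{L₀})`
admits no complex structure. -/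
theorem statement0 (𝕜 : Type) [RCLike 𝕜] (n : ℕ) (hn : 0 < n)
    (L : LieSubalgebra 𝕜 (Vect 𝕜 n))
    (hgraded : IsGradedSubalg 𝕜 n L)
    (hfd : FiniteDimensional 𝕜 L) :
    IsMaxSubalg 𝕜 n L ↔
      (L.toSubmodule ⊓ VectP 𝕜 n (-1) = VectP 𝕜 n (-1) ∧
       IsIrreducibleRep 𝕜 n L ∧
       L.toSubmodule ⊓ VectP 𝕜 n 1 ≠ ⊥ ∧
       ((RCLike.I : 𝕜) = 0 → ¬ HasComplexStructureRep 𝕜 n L)) := by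
  refine (statement0_general hn L hgraded hfd).trans ?_
  exact and_congr_right fun hc => and_congr_right fun hirr => and_congr_right fun _ =>
    hasScalarCommutantRep_iff_of_rclike hn hc hirr
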